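/- arXiv:2210.09093 — 4 statements merged into one kernel-verified Lean document; each statement's English description precedes it below -/
import Mathlib

section
/- Let k ≥ 2 be an integer and A > 0. There exists a constant B > 0, depending only on A and k, with the following property. Let [a,b] be a compact interval, let f : [a,b] → ℝ be k times continuously differentiable (hence at least C²) with sup_{x∈[a,b]} |f^{(k)}(x)| < A · inf_{x∈[a,b]} |f^{(k)}(x)| (in particular f^{(k)} is nonvanishing on [a,b]), and let φ : [a,b] → ℂ be C¹. Then |∫_a^b e^{i f(x)} φ(x) dx| ≤ B (‖φ‖_{L^∞} + ‖φ'‖_{L^1}) ( ∫_a^b min(1, |f''(x)| / (f'(x))²) dx + min( b − a, 1 / sup_{x∈[a,b]} |f'(x)| ) ). -/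
open Set MeasureTheory

/-!
Write `g = f'`, `h = f''`, `w = min(1, |h| / g²)`, `n = k - 2` and `m = n + 1`.

*Rigidity of `h`.* Since `h⁽ⁿ⁾ = f⁽ᵏ⁾` is pinched between two comparable values, the mean value
theorem for iterated differences gives `|Δₛⁿ h (x)| ≤ A |Δₛⁿ h (x + s)|`; expanding both sides,
`|h x| ≤ C ∑_{j=1}^{m} |h (x + j s)|` for all `x, s` (the property `Spread`). It survives truncation
`|h| ↦ min(1, |h|/Λ)`, and averaging over `s` yields: one value of `min(1, |h|/Λ)` on an interval
is at most a constant times its mean over that interval with a short initial piece removed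
(`Spread.le_integral`). To have this without boundary effects, `f` and `φ` are first extended to
`ℝ`, the top derivative of the extension taking only values taken on `[a, b]`.

*One-sided estimate.* If `g x ≠ 0` then `|∫_x^b e^{if}| ≤ K ∫_x^b w + 3 / |g x|` (`one_sided`).
From `x`, move right to the first point `y` with `g² ≤ |h|`. On `[x, y]` one has `w = |h|/g²`, and
integration by parts costs `2/|g x| + 2 ∫_x^y w`, while `1/|g y| ≤ 1/|g x| + ∫_x^y w` (`good_run`).
From `y`, let `r` be the first length with `r |g (y + r)| = 1`. Then `|h| ≥ 1/(4r²)` somewhere in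
`[y, y + r]`: at `y` itself, or else `|g y| < 1/(2r)` and `g` grows to `1/r`. As `|g (y + t)| ≤ 1/t`
on this interval, the rigidity of `h` shows `r ≤ D ∫_y^{y+r} w` (`bad_step`), which pays both for
the trivial bound on `[y, y + r]` and for the term `3 / |g (y + r)| = 3 r` with which one restarts
at `y + r`. Each `r` is at least `1 / max |g|`, so the process ends at `b`.

*Conclusion.* The one-sided bound is monotone in `b`, so one integration by parts brings in `φ`.
Apply it to the right of a maximum point of `|g|`, and after reflection to the left. If
`b - a ≤ 1 / max |g|`, or if `g` vanishes identically, the trivial bound suffices.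
-/

/-! ### Extension to the real line -/

/-- A `Cⁿ` function on `[a, b]` extends to a `Cⁿ` function on `ℝ` whose `n`-th derivative takes
only values of the original `n`-th derivative: extend the latter by constants and integrate back. -/
theorem exists_contDiff_extension {E : Type*} [NormedAddCommGroup E] [NormedSpace ℝ E]
    [CompleteSpace E] {a b : ℝ} (hab : a < b) (n : ℕ) :
    ∀ u : ℝ → E, ContDiffOn ℝ n u (Icc a b) →
      ∃ F : ℝ → E, ContDiff ℝ n F ∧ EqOn F u (Icc a b) ∧
        ∀ x, iteratedDeriv n F x ∈ iteratedDerivWithin n u (Icc a b) '' Icc a b := by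
  induction n with
  | zero =>
    intro u hu
    have hc : ContinuousOn u (Icc a b) := hu.continuousOn
    refine ⟨IccExtend hab.le ((Icc a b).domRestrict u), ?_, ?_, ?_⟩
    · rw [Nat.cast_zero, contDiff_zero]
      exact hc.domRestrict.Icc_extend'
    · intro x hx
      simp [IccExtend_of_mem hab.le _ hx]
    · intro x
      simp only [iteratedDeriv_zero, iteratedDerivWithin_zero]
      exact ⟨_, (projIcc a b hab.le x).2, rfl⟩
  | succ n ih =>
    intro u hu
    have hU := uniqueDiffOn_Icc hab
    have hu' : ContDiffOn ℝ ((n : WithTop ℕ∞) + 1) u (Icc a b) := by simpa using hu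
    rw [contDiffOn_succ_iff_derivWithin hU] at hu'
    obtain ⟨hd, -, hd'⟩ := hu'
    obtain ⟨G, hG, hGe, hGi⟩ := ih _ hd'
    have hGc : Continuous G := hG.continuous
    have hder : ∀ x, HasDerivAt (fun x => u a + ∫ t in a..x, G t) (G x) x := fun x =>
      (hGc.integral_hasStrictDerivAt a x).hasDerivAt.const_add _
    have hde : deriv (fun x => u a + ∫ t in a..x, G t) = G := funext fun x => (hder x).deriv
    refine ⟨fun x => u a + ∫ t in a..x, G t, ?_, ?_, ?_⟩
    · have : ContDiff ℝ ((n : WithTop ℕ∞) + 1) (fun x => u a + ∫ t in a..x, G t) := by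
        rw [contDiff_succ_iff_deriv]
        refine ⟨fun x => (hder x).differentiableAt, by simp, by rwa [hde]⟩
      simpa using this
    · intro x hx
      have hsub : Icc a x ⊆ Icc a b := Icc_subset_Icc_right hx.2
      have h1 : ∫ t in a..x, G t = u x - u a := by
        apply intervalIntegral.integral_eq_sub_of_hasDeriv_right_of_le hx.1
          (hd.continuousOn.mono hsub)
        · intro t ht
          have htb : t ∈ Icc a b := hsub (Ioo_subset_Icc_self ht)
          rw [hGe htb]
          refine ((hd t htb).hasDerivWithinAt.hasDerivAt ?_).hasDerivWithinAt
          exact Icc_mem_nhds ht.1 (ht.2.trans_le hx.2)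
        · exact hGc.intervalIntegrable _ _
      simp [h1]
    · intro x
      rw [iteratedDeriv_succ', hde, iteratedDerivWithin_succ']
      exact hGi x

/-! ### Rigidity of functions with pinched `n`-th derivative -/

theorem exists_sub_eq_mul_deriv {u : ℝ → ℝ} (hu : Differentiable ℝ u) (x s : ℝ) :
    ∃ ξ, u (x + s) - u x = s * deriv u ξ := by
  rcases lt_trichotomy s 0 with hs | hs | hs
  · obtain ⟨c, -, hc⟩ := exists_deriv_eq_slope u (show x + s < x by linarith)
      hu.continuous.continuousOn hu.differentiableOn
    refine ⟨c, ?_⟩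
    rw [hc, sub_add_cancel_left, div_neg, mul_neg, mul_div_cancel₀ _ hs.ne]
    ring
  · exact ⟨x, by simp [hs]⟩
  · obtain ⟨c, -, hc⟩ := exists_deriv_eq_slope u (show x < x + s by linarith)
      hu.continuous.continuousOn hu.differentiableOn
    refine ⟨c, ?_⟩
    rw [hc, add_sub_cancel_left]
    field_simp

/-- Mean value theorem for iterated forward differences; the step `s` may have either sign. -/
theorem exists_fwdDiff_eq (n : ℕ) : ∀ u : ℝ → ℝ, ContDiff ℝ n u → ∀ x s : ℝ,
    ∃ ξ, (fwdDiff s)^[n] u x = s ^ n * iteratedDeriv n u ξ := by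
  induction n with
  | zero => intro u _ x s; exact ⟨x, by simp⟩
  | succ n ih =>
    intro u hu x s
    have hun : ContDiff ℝ n u := hu.of_le (by exact_mod_cast n.le_succ)
    have hsh : ContDiff ℝ n (fun z => u (z + s)) := hun.comp (contDiff_id.add contDiff_const)
    obtain ⟨ξ, hξ⟩ := ih (fwdDiff s u) (hsh.sub hun) x s
    have h1 : iteratedDeriv n (fwdDiff s u) ξ = iteratedDeriv n u (ξ + s) - iteratedDeriv n u ξ := by
      have : fwdDiff s u = (fun z => u (z + s)) - u := rfl
      rw [this, iteratedDeriv_sub hsh.contDiffAt hun.contDiffAt, iteratedDeriv_comp_add_const]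
    obtain ⟨ζ, hζ⟩ := exists_sub_eq_mul_deriv
      (hu.differentiable_iteratedDeriv n (by exact_mod_cast n.lt_succ_self)) ξ s
    refine ⟨ζ, ?_⟩
    rw [Function.iterate_succ_apply, hξ, h1, hζ, iteratedDeriv_succ]
    ring

/-- Each value of `u` is controlled by the next `m` values along any arithmetic progression starting
there, with constant `C`. The step `s` may be negative, which makes the notion reflection
invariant. -/
def Spread (C : ℝ) (m : ℕ) (u : ℝ → ℝ) : Prop :=
  ∀ x s : ℝ, |u x| ≤ C * ∑ j ∈ Finset.range m, |u (x + (j + 1 : ℕ) * s)|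

/-- Pinching of the `n`-th derivative gives `|Δₛⁿ u (x)| ≤ A |Δₛⁿ u (x + s)|`. The left side contains
`u x` with coefficient `±1`; every other value of `u` in this inequality is at some `x + j s`
with `1 ≤ j ≤ n + 1` and has a coefficient of size at most `2ⁿ`. -/
theorem spread_of_iteratedDeriv {n : ℕ} {A : ℝ} (hA : 0 ≤ A) {u : ℝ → ℝ} (hu : ContDiff ℝ n u)
    (hd : ∀ x y, |iteratedDeriv n u x| ≤ A * |iteratedDeriv n u y|) :
    Spread ((1 + A) * 2 ^ n) (n + 1) u := by
  intro x s
  have hcoef : ∀ k ∈ Finset.range (n + 1), ∀ v : ℝ,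
      |((-1 : ℤ) ^ (n - k) * n.choose k) • v| ≤ 2 ^ n * |v| := by
    intro k _ v
    rw [zsmul_eq_mul, abs_mul]
    gcongr
    push_cast
    rw [abs_mul, abs_pow, abs_neg, abs_one, one_pow, one_mul, Nat.abs_cast]
    exact_mod_cast Nat.choose_le_two_pow n k
  have hdiff : |(fwdDiff s)^[n] u x| ≤ A * |(fwdDiff s)^[n] u (x + s)| := by
    obtain ⟨ξ, hξ⟩ := exists_fwdDiff_eq n u hu x s
    obtain ⟨ζ, hζ⟩ := exists_fwdDiff_eq n u hu (x + s) s
    rw [hξ, hζ, abs_mul, abs_mul]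
    nlinarith [mul_le_mul_of_nonneg_left (hd ξ ζ) (abs_nonneg (s ^ n))]
  have hright : |(fwdDiff s)^[n] u (x + s)| ≤
      2 ^ n * ∑ j ∈ Finset.range (n + 1), |u (x + (j + 1 : ℕ) * s)| := by
    rw [fwdDiff_iter_eq_sum_shift, Finset.mul_sum]
    refine (Finset.abs_sum_le_sum_abs _ _).trans (Finset.sum_le_sum fun k hk => ?_)
    refine (hcoef k hk _).trans (le_of_eq ?_)
    congr 3
    push_cast
    rw [nsmul_eq_mul]
    ring
  have hleft : |u x| ≤ |(fwdDiff s)^[n] u x| +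
      2 ^ n * ∑ j ∈ Finset.range n, |u (x + (j + 1 : ℕ) * s)| := by
    have h := fwdDiff_iter_eq_sum_shift s u n x
    rw [Finset.sum_range_succ'] at h
    set R := ∑ k ∈ Finset.range n,
      ((-1 : ℤ) ^ (n - (k + 1)) * n.choose (k + 1)) • u (x + (k + 1) • s) with hR
    have hRb : |R| ≤ 2 ^ n * ∑ j ∈ Finset.range n, |u (x + (j + 1 : ℕ) * s)| := by
      rw [Finset.mul_sum]
      refine (Finset.abs_sum_le_sum_abs _ _).trans (Finset.sum_le_sum fun k hk => ?_)
      refine (hcoef (k + 1) (by simpa using hk) _).trans (le_of_eq ?_)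
      rw [nsmul_eq_mul]
    have h0 : |((-1 : ℤ) ^ (n - 0) * n.choose 0) • u (x + 0 • s)| = |u x| := by
      simp [abs_mul]
    rw [← h0, show ((-1 : ℤ) ^ (n - 0) * n.choose 0) • u (x + 0 • s) = (fwdDiff s)^[n] u x - R by
      rw [h]; ring]
    exact (abs_sub _ _).trans (by gcongr)
  have hmono : ∑ j ∈ Finset.range n, |u (x + (j + 1 : ℕ) * s)| ≤
      ∑ j ∈ Finset.range (n + 1), |u (x + (j + 1 : ℕ) * s)| :=
    Finset.sum_le_sum_of_subset_of_nonneg (Finset.range_mono n.le_succ) fun _ _ _ => abs_nonneg _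
  have h2 : (0 : ℝ) < 2 ^ n := by positivity
  nlinarith [mul_le_mul_of_nonneg_left hright hA, mul_le_mul_of_nonneg_left hmono h2.le]

theorem Spread.comp_neg {C : ℝ} {m : ℕ} {u : ℝ → ℝ} (h : Spread C m u) :
    Spread C m (fun x => u (-x)) := by
  intro x s
  refine (h (-x) (-s)).trans (le_of_eq ?_)
  congr 1
  refine Finset.sum_congr rfl fun j _ => ?_
  congr 2
  ring

theorem Spread.truncate {C : ℝ} (hC : 1 ≤ C) {m : ℕ} {u : ℝ → ℝ} (h : Spread C m u) {Λ : ℝ}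
    (hΛ : 0 < Λ) : Spread C m (fun x => min 1 (|u x| / Λ)) := by
  intro x s
  have hnn : ∀ t, 0 ≤ min 1 (|u t| / Λ) := fun t => by positivity
  simp only [abs_of_nonneg (hnn _)]
  by_cases hex : ∃ j ∈ Finset.range m, 1 ≤ |u (x + (j + 1 : ℕ) * s)| / Λ
  · obtain ⟨j, hj, hj1⟩ := hex
    have h1 := Finset.single_le_sum (f := fun j : ℕ => min 1 (|u (x + (j + 1 : ℕ) * s)| / Λ))
      (fun i _ => hnn _) hj
    simp only [min_eq_left hj1] at h1
    calc min 1 (|u x| / Λ) ≤ 1 := min_le_left _ _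
      _ ≤ C * 1 := by linarith
      _ ≤ _ := by gcongr
  · push Not at hex
    rw [Finset.sum_congr rfl fun j hj => min_eq_right (hex j hj).le, ← Finset.sum_div,
      ← mul_div_assoc]
    exact (min_le_right _ _).trans (by gcongr; exact h x s)

/-- Substituting `t = ξ + c s` with `|c| ≥ 1` does not increase the integral of a nonnegative function. -/
theorem integral_comp_affine_le {ψ : ℝ → ℝ} (hψ : Continuous ψ) (h0 : ∀ x, 0 ≤ ψ x)
    {ξ c s₀ p q : ℝ} (hc : 1 ≤ |c|)
    (h1 : ξ + c * s₀ ∈ Icc p q) (h2 : ξ + c * (2 * s₀) ∈ Icc p q) :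
    ∫ s in s₀..2 * s₀, ψ (ξ + c * s) ≤ ∫ t in p..q, ψ t := by
  have hpq : p ≤ q := h1.1.trans h1.2
  have hc0 : c ≠ 0 := by rintro rfl; norm_num at hc
  have key : ∀ v w, v ∈ Icc p q → w ∈ Icc p q → |∫ t in v..w, ψ t| ≤ ∫ t in p..q, ψ t := by
    intro v w hv hw
    rw [← abs_of_nonneg (intervalIntegral.integral_nonneg hpq fun t _ => h0 t)]
    apply intervalIntegral.abs_integral_mono_interval
    · rw [uIoc_of_le hpq]
      exact Ioc_subset_Ioc (le_min hv.1 hw.1) (max_le hv.2 hw.2)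
    · exact Filter.Eventually.of_forall h0
    · exact hψ.intervalIntegrable _ _
  rw [intervalIntegral.integral_comp_add_mul _ hc0, smul_eq_mul]
  refine (le_abs_self _).trans ?_
  rw [abs_mul, abs_inv]
  calc _ ≤ 1 * |∫ t in (ξ + c * s₀)..(ξ + c * (2 * s₀)), ψ t| := by
        gcongr; exact inv_le_one_of_one_le₀ hc
    _ ≤ _ := by rw [one_mul]; exact key _ _ h1 h2

/-- Integrate the spreading inequality at `ξ` over steps of modulus in `[s₀, 2 s₀]`, `s₀ = r / (8 m)`,
directed towards the farther end of `[y, y + r]`. The points reached lie in `[y + s₀, y + r]`; that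
they stay away from `y` is what `bad_step` needs. -/
theorem Spread.le_integral {C : ℝ} (hC : 0 ≤ C) {m : ℕ} (hm : 0 < m) {ψ : ℝ → ℝ}
    (h : Spread C m ψ) (hψ : Continuous ψ) (h0 : ∀ x, 0 ≤ ψ x) {y r ξ : ℝ} (hr : 0 ≤ r)
    (hξ : ξ ∈ Icc y (y + r)) :
    r * ψ ξ ≤ 8 * m ^ 2 * C * ∫ t in (y + r / (8 * m))..(y + r), ψ t := by
  have hm1 : (1 : ℝ) ≤ m := by exact_mod_cast hm
  set s₀ := r / (8 * m) with hs₀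
  have hs : 0 ≤ s₀ := by positivity
  have hrs : r = 8 * m * s₀ := by rw [hs₀]; field_simp
  obtain ⟨σ, hσ, hmem⟩ : ∃ σ : ℝ, |σ| = 1 ∧ ∀ j : ℕ, j + 1 ≤ m → ∀ s ∈ Icc s₀ (2 * s₀),
      ξ + ((j + 1 : ℕ) * σ) * s ∈ Icc (y + s₀) (y + r) := by
    have hb : ∀ j : ℕ, j + 1 ≤ m → ∀ s ∈ Icc s₀ (2 * s₀),
        s₀ ≤ (j + 1 : ℕ) * s ∧ (j + 1 : ℕ) * s ≤ r / 4 := by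
      intro j hj s hs'
      have hj1 : (1 : ℝ) ≤ (j + 1 : ℕ) := by exact_mod_cast Nat.le_add_left 1 j
      have hjm : ((j + 1 : ℕ) : ℝ) ≤ m := by exact_mod_cast hj
      constructor
      · nlinarith [hs'.1]
      · calc ((j + 1 : ℕ) : ℝ) * s ≤ m * (2 * s₀) := by gcongr; exact hs.trans hs'.1; exact hs'.2
          _ = r / 4 := by rw [hrs]; ring
    have hs4 : s₀ ≤ r / 4 := by rw [hrs]; nlinarith
    rcases le_total ξ (y + r / 2) with hx | hx
    · refine ⟨1, by simp, fun j hj s hs' => ?_⟩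
      obtain ⟨h1, h2⟩ := hb j hj s hs'
      rw [mul_one]
      exact ⟨by linarith [hξ.1], by linarith⟩
    · refine ⟨-1, by simp, fun j hj s hs' => ?_⟩
      obtain ⟨h1, h2⟩ := hb j hj s hs'
      rw [mul_neg_one, neg_mul]
      exact ⟨by linarith, by linarith [hξ.2]⟩
  have hI : ∫ _s in s₀..2 * s₀, ψ ξ ≤
      ∫ s in s₀..2 * s₀, C * ∑ j ∈ Finset.range m, ψ (ξ + ((j + 1 : ℕ) * σ) * s) := by
    apply intervalIntegral.integral_mono_on (by linarith)
    · simp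
    · exact (by fun_prop : Continuous _).intervalIntegrable _ _
    · intro s _
      have := h ξ (σ * s)
      simp only [abs_of_nonneg (h0 _), ← mul_assoc] at this
      exact this
  rw [intervalIntegral.integral_const, intervalIntegral.integral_const_mul,
    intervalIntegral.integral_finsetSum
      (fun j _ => (by fun_prop : Continuous _).intervalIntegrable _ _), smul_eq_mul] at hI
  have hS : ∑ j ∈ Finset.range m, ∫ s in s₀..2 * s₀, ψ (ξ + ((j + 1 : ℕ) * σ) * s) ≤
      m * ∫ t in (y + s₀)..(y + r), ψ t := by
    refine (Finset.sum_le_card_nsmul _ _ (∫ t in (y + s₀)..(y + r), ψ t) fun j hj => ?_).trans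
      (le_of_eq (by simp))
    have hj' : j + 1 ≤ m := by simpa using hj
    refine integral_comp_affine_le hψ h0 ?_ (hmem j hj' _ ⟨le_rfl, by linarith⟩)
      (hmem j hj' _ ⟨by linarith, le_rfl⟩)
    rw [abs_mul, hσ, mul_one, Nat.abs_cast]
    exact_mod_cast Nat.le_add_left 1 j
  have := mul_le_mul_of_nonneg_left hS hC
  have h3 : s₀ * ψ ξ ≤ C * (m * ∫ t in (y + s₀)..(y + r), ψ t) := by linarith
  calc r * ψ ξ = 8 * m * (s₀ * ψ ξ) := by rw [hrs]; ring
    _ ≤ 8 * m * (C * (m * ∫ t in (y + s₀)..(y + r), ψ t)) := by gcongr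
    _ = _ := by ring

/-! ### The weight and the two kinds of steps -/

/-- The weight `min(1, |h| / g²)`, equal to `1` at the zeros of `g`. -/
noncomputable def oscWeight (g h : ℝ → ℝ) (x : ℝ) : ℝ :=
  if g x = 0 then 1 else min 1 (|h x| / g x ^ 2)

theorem oscWeight_nonneg (g h : ℝ → ℝ) (x : ℝ) : 0 ≤ oscWeight g h x := by
  unfold oscWeight; split_ifs <;> positivity

theorem oscWeight_le_one (g h : ℝ → ℝ) (x : ℝ) : oscWeight g h x ≤ 1 := by
  unfold oscWeight; split_ifs <;> simp

theorem intervalIntegrable_oscWeight {g h : ℝ → ℝ} (hg : Continuous g) (hh : Continuous h)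
    (a b : ℝ) : IntervalIntegrable (oscWeight g h) volume a b := by
  have hm : Measurable (oscWeight g h) := by
    unfold oscWeight
    exact Measurable.ite (measurableSet_eq_fun hg.measurable measurable_const) measurable_const
      (measurable_const.min (hh.measurable.abs.div (hg.measurable.pow_const 2)))
  refine (intervalIntegrable_const (c := (1 : ℝ))).mono_fun hm.aestronglyMeasurable ?_
  refine Filter.Eventually.of_forall fun x => ?_
  simp only [norm_one, Real.norm_eq_abs, abs_of_nonneg (oscWeight_nonneg g h x)]
  exact oscWeight_le_one g h x

theorem integral_oscWeight_nonneg {g h : ℝ → ℝ} {a b : ℝ} (hab : a ≤ b) :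
    0 ≤ ∫ t in a..b, oscWeight g h t :=
  intervalIntegral.integral_nonneg hab fun t _ => oscWeight_nonneg g h t

theorem norm_integral_exp_le_length (f : ℝ → ℝ) {a b : ℝ} (hab : a ≤ b) :
    ‖∫ t in a..b, Complex.exp (Complex.I * (f t : ℂ))‖ ≤ b - a := by
  have := intervalIntegral.norm_integral_le_of_norm_le_const (a := a) (b := b) (C := 1)
    (f := fun t => Complex.exp (Complex.I * (f t : ℂ)))
    (fun t _ => (Complex.norm_exp_I_mul_ofReal _).le)
  rwa [one_mul, abs_of_nonneg (by linarith)] at this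

/-- As long as `|h| < g²`, the function `1/g` is `1`-Lipschitz, so `g` cannot reach zero. -/
theorem ne_zero_of_slow {g h : ℝ → ℝ} (hg : ∀ x, HasDerivAt g (h x) x) {x y : ℝ} (hxy : x ≤ y)
    (hx : g x ≠ 0) (hslow : ∀ t ∈ Ico x y, |h t| < g t ^ 2) : g y ≠ 0 := by
  rcases hxy.eq_or_lt with rfl | hlt
  · exact hx
  have hne : ∀ t ∈ Ico x y, g t ≠ 0 := fun t ht h0 => by
    have := hslow t ht
    rw [h0] at this
    exact absurd this (by simp)
  have hb : ∀ t ∈ Ico x y, 1 ≤ |g t| * (|(g x)⁻¹| + (y - x)) := by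
    intro t ht
    have hsub : Icc x t ⊆ Ico x y := fun s hs => ⟨hs.1, hs.2.trans_lt ht.2⟩
    have h1 := (convex_Icc x t).norm_image_sub_le_of_norm_hasDerivWithin_le
      (f := fun s => (g s)⁻¹) (f' := fun s => -h s / g s ^ 2) (C := 1)
      (fun s hs => ((hg s).inv (hne s (hsub hs))).hasDerivWithinAt)
      (fun s hs => by
        rw [Real.norm_eq_abs, abs_div, abs_neg, abs_pow, sq_abs]
        exact div_le_one_of_le₀ (hslow s (hsub hs)).le (sq_nonneg _))
      (left_mem_Icc.2 ht.1) (right_mem_Icc.2 ht.1)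
    simp only [Real.norm_eq_abs] at h1
    rw [abs_of_nonneg (sub_nonneg.2 ht.1), one_mul] at h1
    have h2 : |(g t)⁻¹| ≤ |(g x)⁻¹| + (y - x) := by
      have := abs_sub_abs_le_abs_sub (g t)⁻¹ (g x)⁻¹
      linarith [ht.2]
    calc (1 : ℝ) = |g t| * |(g t)⁻¹| := by rw [← abs_mul, mul_inv_cancel₀ (hne t ht), abs_one]
      _ ≤ _ := by gcongr
  have hcont : Continuous g := continuous_iff_continuousAt.2 fun t => (hg t).continuousAt
  have hlim : 1 ≤ |g y| * (|(g x)⁻¹| + (y - x)) := by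
    have hcl : IsClosed {t | 1 ≤ |g t| * (|(g x)⁻¹| + (y - x))} :=
      isClosed_le continuous_const (by fun_prop)
    have : closure (Ico x y) ⊆ {t | 1 ≤ |g t| * (|(g x)⁻¹| + (y - x))} :=
      closure_minimal hb hcl
    rw [closure_Ico hlt.ne] at this
    exact this (right_mem_Icc.2 hxy)
  intro h0
  rw [h0] at hlim
  norm_num at hlim

/-- Integration by parts where `|h| ≤ g²`, together with the resulting control of `1/|g|` at the right
end by its value at the left end. -/
theorem good_run {f g h : ℝ → ℝ} (hf : ∀ x, HasDerivAt f (g x) x)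
    (hg : ∀ x, HasDerivAt g (h x) x) (hh : Continuous h) {x y : ℝ} (hxy : x ≤ y)
    (hne : ∀ t ∈ Icc x y, g t ≠ 0) (hslow : ∀ t ∈ Ioo x y, |h t| ≤ g t ^ 2) :
    ‖∫ t in x..y, Complex.exp (Complex.I * (f t : ℂ))‖ ≤
        2 / |g x| + 2 * ∫ t in x..y, oscWeight g h t ∧
      1 / |g y| ≤ 1 / |g x| + ∫ t in x..y, oscWeight g h t := by
  have hgc : Continuous g := continuous_iff_continuousAt.2 fun t => (hg t).continuousAt
  have hfc : Continuous f := continuous_iff_continuousAt.2 fun t => (hf t).continuousAt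
  have hu : uIcc x y = Icc x y := uIcc_of_le hxy
  have hqc : ContinuousOn (fun t => |h t| / g t ^ 2) (Icc x y) :=
    ContinuousOn.div (by fun_prop) (by fun_prop) fun t ht => pow_ne_zero 2 (hne t ht)
  have hW : ∫ t in x..y, |h t| / g t ^ 2 ≤ ∫ t in x..y, oscWeight g h t := by
    apply intervalIntegral.integral_mono_on_of_le_Ioo hxy
    · exact (hqc.mono hu.le).intervalIntegrable
    · exact intervalIntegrable_oscWeight hgc hh _ _
    · intro t ht
      rw [oscWeight, if_neg (hne t (Ioo_subset_Icc_self ht)), min_eq_right]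
      exact div_le_one_of_le₀ (hslow t ht) (sq_nonneg _)
  have hend : 1 / |g y| ≤ 1 / |g x| + ∫ t in x..y, oscWeight g h t := by
    have hcd : ContinuousOn (fun t => -h t / g t ^ 2) (uIcc x y) := by
      rw [hu]
      exact ContinuousOn.div (by fun_prop) (by fun_prop) fun t ht => pow_ne_zero 2 (hne t ht)
    have h1 := intervalIntegral.integral_eq_sub_of_hasDerivAt (a := x) (b := y)
      (f := fun s => (g s)⁻¹) (f' := fun s => -h s / g s ^ 2)
      (fun s hs => (hg s).inv (hne s (hu ▸ hs))) hcd.intervalIntegrable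
    have h2 := intervalIntegral.abs_integral_le_integral_abs (f := fun t => -h t / g t ^ 2)
      (μ := volume) hxy
    simp only [abs_div, abs_neg, abs_pow, sq_abs] at h2
    rw [h1] at h2
    have h3 := abs_sub_abs_le_abs_sub (g y)⁻¹ (g x)⁻¹
    rw [one_div, one_div, ← abs_inv, ← abs_inv]
    linarith
  refine ⟨?_, hend⟩
  set e : ℝ → ℂ := fun t => Complex.exp (Complex.I * (f t : ℂ)) with he
  have hen : ∀ t, ‖e t‖ = 1 := fun t => Complex.norm_exp_I_mul_ofReal _
  have hec : Continuous e := by rw [he]; fun_prop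
  have hed : ∀ t, HasDerivAt e (e t * (Complex.I * (g t : ℂ))) t := fun t =>
    (((hf t).ofReal_comp).const_mul Complex.I).cexp
  have hneC : ∀ t ∈ Icc x y, Complex.I * (g t : ℂ) ≠ 0 := fun t ht =>
    mul_ne_zero Complex.I_ne_zero (by exact_mod_cast hne t ht)
  set q : ℝ → ℂ := fun t => e t * (Complex.I * (h t : ℂ)) / (Complex.I * (g t : ℂ)) ^ 2 with hq
  have hqcont : ContinuousOn q (uIcc x y) := by
    rw [hu]
    exact ContinuousOn.div (by fun_prop) (by fun_prop) fun t ht => pow_ne_zero 2 (hneC t ht)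
  have hder : ∀ t ∈ uIcc x y,
      HasDerivAt (fun t => e t / (Complex.I * (g t : ℂ))) (e t - q t) t := by
    intro t ht
    have hn := hneC t (hu ▸ ht)
    have heq : e t - q t = (e t * (Complex.I * (g t : ℂ)) * (Complex.I * (g t : ℂ)) -
        e t * (Complex.I * (h t : ℂ))) / (Complex.I * (g t : ℂ)) ^ 2 := by
      have h2 := pow_ne_zero 2 hn
      rw [eq_div_iff h2, sub_mul, hq, div_mul_cancel₀ _ h2]
      ring
    rw [heq]
    exact (hed t).div (((hg t).ofReal_comp).const_mul Complex.I) hn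
  have hparts := intervalIntegral.integral_eq_sub_of_hasDerivAt hder
    ((hec.continuousOn.sub hqcont).intervalIntegrable)
  rw [intervalIntegral.integral_sub (hec.intervalIntegrable _ _) hqcont.intervalIntegrable] at hparts
  have hqn : ‖∫ t in x..y, q t‖ ≤ ∫ t in x..y, |h t| / g t ^ 2 := by
    refine (intervalIntegral.norm_integral_le_integral_norm hxy).trans (le_of_eq ?_)
    congr 1
    funext t
    simp [hq, hen]
  have hU : ∀ t, ‖e t / (Complex.I * (g t : ℂ))‖ = 1 / |g t| := by
    intro t; simp [hen]
  calc ‖∫ t in x..y, e t‖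
      = ‖e y / (Complex.I * (g y : ℂ)) - e x / (Complex.I * (g x : ℂ)) + ∫ t in x..y, q t‖ := by
        rw [← hparts]; congr 1; ring
    _ ≤ 1 / |g y| + 1 / |g x| + ∫ t in x..y, |h t| / g t ^ 2 := by
        refine (norm_add_le _ _).trans (add_le_add ((norm_sub_le _ _).trans ?_) hqn)
        rw [hU, hU]
    _ ≤ 2 / |g x| + 2 * ∫ t in x..y, oscWeight g h t := by
        have : 2 / |g x| = 1 / |g x| + 1 / |g x| := by ring
        linarith

/-- If `|g (y + t)| < 1/t` for `0 < t < r` and `|h| ≥ 1/(4r²)` at some point of `[y, y + r]`, then the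
length `r` is controlled by the integral of the weight: past `y + r/(8m)` the weight dominates
`min(1, |h|/Λ)` with `Λ = (8m/r)²`. -/
theorem bad_step {g h : ℝ → ℝ} (hgc : Continuous g) (hh : Continuous h) {C : ℝ} (hC : 1 ≤ C)
    {m : ℕ} (hm : 0 < m) (hS : Spread C m h) {y r ξ : ℝ} (hr : 0 < r)
    (hsmall : ∀ t ∈ Ioo 0 r, t * |g (y + t)| < 1) (hξ : ξ ∈ Icc y (y + r))
    (hlarge : 1 / (4 * r ^ 2) ≤ |h ξ|) :
    r ≤ 2048 * m ^ 4 * C * ∫ t in y..y + r, oscWeight g h t := by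
  have hm1 : (1 : ℝ) ≤ m := by exact_mod_cast hm
  set Λ : ℝ := (8 * m / r) ^ 2 with hΛ
  have hΛ0 : 0 < Λ := by positivity
  set ψ : ℝ → ℝ := fun t => min 1 (|h t| / Λ) with hψ
  have hψc : Continuous ψ := by rw [hψ]; fun_prop
  have hmain := (hS.truncate hC hΛ0).le_integral (by linarith) hm hψc
    (fun t => by positivity) hr.le hξ
  have hr8 : r / (8 * m) ≤ r := div_le_self hr.le (by linarith)
  have hr80 : 0 < r / (8 * m) := by positivity
  have hlow : 1 / (256 * m ^ 2) ≤ ψ ξ := by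
    refine le_min ?_ ?_
    · rw [div_le_one (by positivity)]; nlinarith
    · rw [le_div_iff₀ hΛ0]
      refine le_trans (le_of_eq ?_) hlarge
      rw [hΛ]; field_simp; norm_num
  have hmono : ∫ t in (y + r / (8 * m))..(y + r), ψ t ≤ ∫ t in y..y + r, oscWeight g h t := by
    calc _ ≤ ∫ t in (y + r / (8 * m))..(y + r), oscWeight g h t := by
          apply intervalIntegral.integral_mono_on_of_le_Ioo (by linarith)
            (hψc.intervalIntegrable _ _) (intervalIntegrable_oscWeight hgc hh _ _)
          intro t ht
          unfold oscWeight
          split_ifs with h0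
          · exact min_le_left _ _
          · have h1 := hsmall (t - y) ⟨by linarith [ht.1], by linarith [ht.2]⟩
            rw [add_sub_cancel] at h1
            have h2 : |g t| ≤ 8 * m / r := by
              rw [le_div_iff₀ hr]
              have h3 : r ≤ 8 * m * (t - y) := by
                have := ht.1
                have h4 : r / (8 * m) ≤ t - y := by linarith
                rwa [div_le_iff₀' (by positivity)] at h4
              nlinarith [abs_nonneg (g t)]
            have h5 : 0 < g t ^ 2 := by positivity
            have h6 : g t ^ 2 ≤ Λ := by rw [hΛ, ← sq_abs (g t)]; gcongr
            show min 1 (|h t| / Λ) ≤ _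
            gcongr
      _ ≤ _ := by
          apply intervalIntegral.integral_mono_interval (by linarith) (by linarith) le_rfl
          · exact Filter.Eventually.of_forall fun t => oscWeight_nonneg g h t
          · exact intervalIntegrable_oscWeight hgc hh _ _
  calc r = 256 * m ^ 2 * (r * (1 / (256 * m ^ 2))) := by field_simp
    _ ≤ 256 * m ^ 2 * (r * ψ ξ) := by gcongr
    _ ≤ 256 * m ^ 2 * (8 * m ^ 2 * C * ∫ t in y..y + r, oscWeight g h t) := by
        refine mul_le_mul_of_nonneg_left (hmain.trans ?_) (by positivity)
        exact mul_le_mul_of_nonneg_left hmono (by positivity)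
    _ = _ := by ring

/-! ### The one-sided estimate -/

/-- The one-sided estimate for amplitude `1`, by induction on a bound `N` for the number of bad steps. -/
theorem one_sided {f g h : ℝ → ℝ} (hf : ∀ x, HasDerivAt f (g x) x)
    (hg : ∀ x, HasDerivAt g (h x) x) (hh : Continuous h) {C : ℝ} (hC : 1 ≤ C)
    {m : ℕ} (hm : 0 < m) (hS : Spread C m h) {M b : ℝ} (hM : 0 < M) (N : ℕ) :
    ∀ x ≤ b, b - x ≤ N / M → g x ≠ 0 → (∀ t ∈ Icc x b, |g t| ≤ M) →
      ‖∫ t in x..b, Complex.exp (Complex.I * (f t : ℂ))‖ ≤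
        (8192 * m ^ 4 * C + 3) * (∫ t in x..b, oscWeight g h t) + 3 / |g x| := by
  have hgc : Continuous g := continuous_iff_continuousAt.2 fun t => (hg t).continuousAt
  have hfc : Continuous f := continuous_iff_continuousAt.2 fun t => (hf t).continuousAt
  have hec : Continuous fun t => Complex.exp (Complex.I * (f t : ℂ)) := by fun_prop
  have hei := fun u v => hec.intervalIntegrable (μ := volume) u v
  have hwi := intervalIntegrable_oscWeight hgc hh
  set D : ℝ := 2048 * m ^ 4 * C with hD
  have hD0 : 0 ≤ D := by positivity
  rw [show (8192 * m ^ 4 * C + 3 : ℝ) = 4 * D + 3 by rw [hD]; ring]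
  induction N with
  | zero =>
    intro x hx hxb hgx _
    obtain rfl : x = b := le_antisymm hx (by simpa using hxb)
    simp only [intervalIntegral.integral_same, norm_zero]
    positivity
  | succ N ih =>
    intro x hx hxb hgx hgM
    have hgx0 : 0 < |g x| := abs_pos.2 hgx
    -- Either the good run reaches `b`, or it stops at the first point `y` where `g² ≤ |h|`.
    rcases (Icc x b ∩ {t | g t ^ 2 ≤ |h t|}).eq_empty_or_nonempty with hZ | hZ
    · have hgood : ∀ t ∈ Icc x b, |h t| < g t ^ 2 := fun t ht => by
        by_contra hcon
        exact (hZ.le ⟨ht, not_lt.1 hcon⟩ : t ∈ (∅ : Set ℝ))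
      have hrun := (good_run hf hg hh hx (fun t ht h0 => by
        have := hgood t ht
        rw [h0] at this
        exact absurd this (by simp)) fun t ht => (hgood t (Ioo_subset_Icc_self ht)).le).1
      have hW := integral_oscWeight_nonneg (g := g) (h := h) hx
      have : 2 / |g x| ≤ 3 / |g x| := by gcongr; norm_num
      nlinarith
    obtain ⟨y, ⟨hy, hybad⟩, hyl⟩ := (isCompact_Icc.inter_right
      (isClosed_le (by fun_prop) (by fun_prop) : IsClosed {t | g t ^ 2 ≤ |h t|})).exists_isLeast hZ
    have hybad : g y ^ 2 ≤ |h y| := hybad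
    have hgood : ∀ t ∈ Ico x y, |h t| < g t ^ 2 := fun t ht => by
      by_contra hcon
      exact absurd (hyl ⟨⟨ht.1, ht.2.le.trans hy.2⟩, not_lt.1 hcon⟩) (not_le.2 ht.2)
    have hgy : g y ≠ 0 := ne_zero_of_slow hg hy.1 hgx hgood
    have hgy0 : 0 < |g y| := abs_pos.2 hgy
    obtain ⟨hrun, hgyx⟩ := good_run hf hg hh hy.1 (fun t ht h0 => by
      rcases ht.2.eq_or_lt with rfl | hlt
      · exact hgy h0
      · have := hgood t ⟨ht.1, hlt⟩
        rw [h0] at this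
        exact absurd this (by simp)) fun t ht => (hgood t (Ioo_subset_Ico_self ht)).le
    have hWxy := integral_oscWeight_nonneg (g := g) (h := h) hy.1
    have hWyb := integral_oscWeight_nonneg (g := g) (h := h) hy.2
    have hsplit := intervalIntegral.integral_add_adjacent_intervals (hei x y) (hei y b)
    have hWsplit := intervalIntegral.integral_add_adjacent_intervals (hwi x y) (hwi y b)
    have h3 : 3 / |g x| = 2 / |g x| + 1 / |g x| := by ring
    rw [← hsplit, ← hWsplit, h3]
    refine (norm_add_le _ _).trans ?_
    have hgsmall : ∀ r : ℝ, 0 < r → |h y| < 1 / (4 * r ^ 2) → r * |g y| < 1 / 2 := by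
      intro r hr hlt
      have h1 : g y ^ 2 < 1 / (4 * r ^ 2) := hybad.trans_lt hlt
      rw [lt_div_iff₀ (by positivity)] at h1
      refine lt_of_pow_lt_pow_left₀ 2 (by norm_num) ?_
      rw [mul_pow, sq_abs]
      linarith
    -- The bad step ends at the first `r` with `1 ≤ r |g (y + r)|`, or is cut off at `b`.
    rcases (Icc 0 (b - y) ∩ {r | 1 ≤ r * |g (y + r)|}).eq_empty_or_nonempty with hR | hR
    · have hsm : ∀ t ∈ Icc 0 (b - y), t * |g (y + t)| < 1 := fun t ht => by
        by_contra hcon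
        exact (hR.le ⟨ht, not_lt.1 hcon⟩ : t ∈ (∅ : Set ℝ))
      have htriv := norm_integral_exp_le_length f hy.2
      rcases hy.2.eq_or_lt with hyb | hyb
      · have : 0 ≤ 1 / |g x| := by positivity
        nlinarith
      have hr : 0 < b - y := sub_pos.2 hyb
      by_cases hl : 1 / (4 * (b - y) ^ 2) ≤ |h y|
      · have hstep := bad_step hgc hh hC hm hS (y := y) hr
          (fun t ht => hsm t (Ioo_subset_Icc_self ht)) ⟨le_rfl, by linarith⟩ hl
        rw [add_sub_cancel, ← hD] at hstep
        have : 0 ≤ 1 / |g x| := by positivity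
        nlinarith
      -- A truncated step with `h y` small is paid for by `1/|g y|`, hence by `1/|g x|`.
      · have h5 := hgsmall _ hr (not_le.1 hl)
        have h6 : b - y ≤ 1 / |g y| := by
          rw [le_div_iff₀ hgy0]; linarith
        nlinarith
    · obtain ⟨r, ⟨hr, hr1⟩, hrl⟩ := (isCompact_Icc.inter_right
        (isClosed_le (by fun_prop) (by fun_prop) :
          IsClosed {r | 1 ≤ r * |g (y + r)|})).exists_isLeast hR
      have hr1 : 1 ≤ r * |g (y + r)| := hr1
      have hr0 : 0 < r := by
        refine hr.1.lt_of_ne fun h0 => ?_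
        rw [← h0] at hr1
        norm_num at hr1
      have hsm : ∀ t ∈ Ioo 0 r, t * |g (y + t)| < 1 := fun t ht => by
        by_contra hcon
        exact absurd (hrl ⟨⟨ht.1.le, ht.2.le.trans hr.2⟩, not_lt.1 hcon⟩) (not_le.2 ht.2)
      have hzb : y + r ≤ b := by linarith [hr.2]
      have hgz0 : 0 < |g (y + r)| := by
        by_contra hcon
        nlinarith
      have hrM : 1 / M ≤ r := by
        rw [div_le_iff₀ hM]
        have := hgM (y + r) ⟨by linarith [hy.1], hzb⟩
        nlinarith
      have hih := ih (y + r) hzb (by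
          push_cast at hxb
          rw [add_div] at hxb
          linarith [hy.1]) (abs_pos.1 hgz0)
        (fun t ht => hgM t ⟨by linarith [hy.1, ht.1], ht.2⟩)
      have hinv : 3 / |g (y + r)| ≤ 3 * r := by
        rw [div_le_iff₀ hgz0]; linarith
      have hstep : r ≤ D * ∫ t in y..y + r, oscWeight g h t := by
        by_cases hl : 1 / (4 * r ^ 2) ≤ |h y|
        · exact bad_step hgc hh hC hm hS hr0 hsm ⟨le_rfl, by linarith⟩ hl
        · have h5 := hgsmall _ hr0 (not_le.1 hl)
          obtain ⟨ξ, hξ, hξe⟩ := exists_hasDerivAt_eq_slope g h (show y < y + r by linarith)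
            hgc.continuousOn fun t _ => hg t
          refine bad_step hgc hh hC hm hS hr0 hsm (Ioo_subset_Icc_self hξ) ?_
          rw [hξe, add_sub_cancel_left, abs_div, abs_of_pos hr0,
            div_le_div_iff₀ (by positivity) hr0]
          have h6 := abs_sub_abs_le_abs_sub (g (y + r)) (g y)
          nlinarith
      have hsplit2 := intervalIntegral.integral_add_adjacent_intervals (hei y (y + r)) (hei (y + r) b)
      have hWsplit2 := intervalIntegral.integral_add_adjacent_intervals
        (hwi y (y + r)) (hwi (y + r) b)
      have htriv := norm_integral_exp_le_length f (show y ≤ y + r by linarith)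
      have hW1 := integral_oscWeight_nonneg (g := g) (h := h) (show y ≤ y + r by linarith)
      rw [← hsplit2, ← hWsplit2]
      have htri := norm_add_le (∫ t in y..y + r, Complex.exp (Complex.I * (f t : ℂ)))
        (∫ t in (y + r)..b, Complex.exp (Complex.I * (f t : ℂ)))
      have : 0 ≤ 1 / |g x| := by positivity
      nlinarith

/-- The bound of `one_sided` for `∫_y^c e^{if}` holds uniformly in `c ≤ b`, so the amplitude is brought
in by one integration by parts. -/
theorem one_sided_amplitude {f g h : ℝ → ℝ} (hf : ∀ x, HasDerivAt f (g x) x)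
    (hg : ∀ x, HasDerivAt g (h x) x) (hh : Continuous h) {C : ℝ} (hC : 1 ≤ C)
    {m : ℕ} (hm : 0 < m) (hS : Spread C m h) {φ φ' : ℝ → ℂ} (hφ : ∀ x, HasDerivAt φ (φ' x) x)
    (hφ' : Continuous φ') {y b P : ℝ} (hyb : y ≤ b) (hgy : g y ≠ 0)
    (hP : ∀ t ∈ Icc y b, ‖φ t‖ ≤ P) :
    ‖∫ t in y..b, Complex.exp (Complex.I * (f t : ℂ)) * φ t‖ ≤
      (P + ∫ t in y..b, ‖φ' t‖) *
        ((8192 * m ^ 4 * C + 3) * (∫ t in y..b, oscWeight g h t) + 3 / |g y|) := by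
  have hgc : Continuous g := continuous_iff_continuousAt.2 fun t => (hg t).continuousAt
  have hfc : Continuous f := continuous_iff_continuousAt.2 fun t => (hf t).continuousAt
  set e : ℝ → ℂ := fun t => Complex.exp (Complex.I * (f t : ℂ)) with he
  have hec : Continuous e := by rw [he]; fun_prop
  set K : ℝ := 8192 * m ^ 4 * C + 3 with hK
  have hK0 : 0 ≤ K := by positivity
  set Q : ℝ := K * (∫ t in y..b, oscWeight g h t) + 3 / |g y| with hQ
  obtain ⟨M, hM⟩ := isCompact_Icc.exists_bound_of_continuousOn (s := Icc y b) hgc.continuousOn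
  have hMy : |g y| ≤ M := hM y ⟨le_rfl, hyb⟩
  have hM0 : 0 < M := (abs_pos.2 hgy).trans_le hMy
  have hF : ∀ c ∈ Icc y b, ‖∫ t in y..c, e t‖ ≤ Q := by
    intro c hc
    obtain ⟨N, hN⟩ := exists_nat_ge ((c - y) * M)
    refine (one_sided hf hg hh hC hm hS hM0 N y hc.1 (by rwa [le_div_iff₀ hM0]) hgy
      fun t ht => hM t ⟨ht.1, ht.2.trans hc.2⟩).trans ?_
    rw [hQ]
    gcongr
    exact intervalIntegral.integral_mono_interval le_rfl hc.1 hc.2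
      (Filter.Eventually.of_forall fun t => oscWeight_nonneg g h t)
      (intervalIntegrable_oscWeight hgc hh _ _)
  have hFd : ∀ c, HasDerivAt (fun c => ∫ t in y..c, e t) (e c) c := fun c =>
    (hec.integral_hasStrictDerivAt y c).hasDerivAt
  have hFc : Continuous fun c => ∫ t in y..c, e t :=
    continuous_iff_continuousAt.2 fun t => (hFd t).continuousAt
  have hparts := intervalIntegral.integral_mul_deriv_eq_deriv_mul (a := y) (b := b)
    (u := φ) (v := fun c => ∫ t in y..c, e t) (u' := φ') (v' := e)
    (fun t _ => hφ t) (fun t _ => hFd t) (hφ'.intervalIntegrable _ _) (hec.intervalIntegrable _ _)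
  simp only [intervalIntegral.integral_same, mul_zero, sub_zero] at hparts
  have hcomm : ∫ t in y..b, e t * φ t = ∫ t in y..b, φ t * e t := by simp only [mul_comm]
  rw [hcomm, hparts, add_mul]
  have hb := right_mem_Icc.2 hyb
  have hP0 : 0 ≤ P := (norm_nonneg _).trans (hP b hb)
  refine (norm_sub_le _ _).trans (add_le_add ?_ ?_)
  · rw [norm_mul]
    exact mul_le_mul (hP b hb) (hF b hb) (norm_nonneg _) hP0
  · rw [← intervalIntegral.integral_mul_const]
    refine (intervalIntegral.norm_integral_le_integral_norm hyb).trans ?_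
    apply intervalIntegral.integral_mono_on hyb
    · exact (hφ'.mul hFc).norm.intervalIntegrable _ _
    · exact (hφ'.norm.mul continuous_const).intervalIntegrable _ _
    · intro c hc
      rw [norm_mul]
      exact mul_le_mul_of_nonneg_left (hF c hc) (norm_nonneg _)

/-- Both sides of a point `y` with `g y ≠ 0`; the left side is the right side after `x ↦ -x`. -/
theorem two_sided {f g h : ℝ → ℝ} (hf : ∀ x, HasDerivAt f (g x) x)
    (hg : ∀ x, HasDerivAt g (h x) x) (hh : Continuous h) {C : ℝ} (hC : 1 ≤ C)
    {m : ℕ} (hm : 0 < m) (hS : Spread C m h) {φ φ' : ℝ → ℂ} (hφ : ∀ x, HasDerivAt φ (φ' x) x)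
    (hφ' : Continuous φ') {a y b P : ℝ} (hy : y ∈ Icc a b) (hgy : g y ≠ 0)
    (hP : ∀ t ∈ Icc a b, ‖φ t‖ ≤ P) :
    ‖∫ t in a..b, Complex.exp (Complex.I * (f t : ℂ)) * φ t‖ ≤
      (P + ∫ t in a..b, ‖φ' t‖) *
        ((8192 * m ^ 4 * C + 3) * (∫ t in a..b, oscWeight g h t) + 6 / |g y|) := by
  have hgc : Continuous g := continuous_iff_continuousAt.2 fun t => (hg t).continuousAt
  have hfc : Continuous f := continuous_iff_continuousAt.2 fun t => (hf t).continuousAt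
  have hφc : Continuous φ := continuous_iff_continuousAt.2 fun t => (hφ t).continuousAt
  have hright := one_sided_amplitude hf hg hh hC hm hS hφ hφ' hy.2 hgy
    fun t ht => hP t ⟨hy.1.trans ht.1, ht.2⟩
  have hleft := one_sided_amplitude (f := fun x => f (-x)) (g := fun x => -g (-x))
    (h := fun x => h (-x)) (φ := fun x => φ (-x)) (φ' := fun x => -φ' (-x)) (y := -y) (b := -a)
    (P := P)
    (fun x => by simpa [Function.comp_def] using (hf (-x)).scomp x (hasDerivAt_neg x))
    (fun x => by
      simpa [Function.comp_def] using ((hg (-x)).scomp x (hasDerivAt_neg x)).fun_neg)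
    (by fun_prop) hC hm hS.comp_neg
    (fun x => by simpa [Function.comp_def] using (hφ (-x)).scomp x (hasDerivAt_neg x))
    (by fun_prop) (by linarith [hy.1]) (by simpa using hgy)
    (fun t ht => hP (-t) ⟨by linarith [ht.2], by linarith [ht.1, hy.2]⟩)
  have hw : ∀ t, oscWeight (fun x => -g (-x)) (fun x => h (-x)) t = oscWeight g h (-t) := by
    intro t; simp [oscWeight]
  simp only [hw, norm_neg, abs_neg, neg_neg] at hleft
  rw [intervalIntegral.integral_comp_neg (fun t => Complex.exp (Complex.I * (f t : ℂ)) * φ t),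
    intervalIntegral.integral_comp_neg (fun t => ‖φ' t‖),
    intervalIntegral.integral_comp_neg (oscWeight g h), neg_neg, neg_neg] at hleft
  have hi : ∀ u v, IntervalIntegrable (fun t => Complex.exp (Complex.I * (f t : ℂ)) * φ t)
      volume u v := fun u v => (by fun_prop : Continuous _).intervalIntegrable _ _
  have hni : ∀ u v, IntervalIntegrable (fun t => ‖φ' t‖) volume u v := fun u v =>
    hφ'.norm.intervalIntegrable _ _
  have hwi := intervalIntegrable_oscWeight hgc hh
  rw [← intervalIntegral.integral_add_adjacent_intervals (hi a y) (hi y b),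
    ← intervalIntegral.integral_add_adjacent_intervals (hni a y) (hni y b),
    ← intervalIntegral.integral_add_adjacent_intervals (hwi a y) (hwi y b)]
  have n1 : 0 ≤ ∫ t in a..y, ‖φ' t‖ := intervalIntegral.integral_nonneg hy.1 fun _ _ => norm_nonneg _
  have n2 : 0 ≤ ∫ t in y..b, ‖φ' t‖ := intervalIntegral.integral_nonneg hy.2 fun _ _ => norm_nonneg _
  have w1 := integral_oscWeight_nonneg (g := g) (h := h) hy.1
  have w2 := integral_oscWeight_nonneg (g := g) (h := h) hy.2
  have hP0 : 0 ≤ P := (norm_nonneg _).trans (hP y hy)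
  set K : ℝ := 8192 * m ^ 4 * C + 3
  have hK : 0 ≤ K := by positivity
  have h3 : 0 ≤ 3 / |g y| := by positivity
  refine (norm_add_le _ _).trans ((add_le_add hleft hright).trans ?_)
  set I1 := ∫ t in a..y, ‖φ' t‖
  set I2 := ∫ t in y..b, ‖φ' t‖
  set W1 := ∫ t in a..y, oscWeight g h t
  set W2 := ∫ t in y..b, oscWeight g h t
  have e1 : (P + I1) * (K * W1 + 3 / |g y|) ≤ (P + (I1 + I2)) * (K * W1 + 3 / |g y|) := by
    gcongr; linarith
  have e2 : (P + I2) * (K * W2 + 3 / |g y|) ≤ (P + (I1 + I2)) * (K * W2 + 3 / |g y|) := by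
    gcongr; linarith
  have e3 : 6 / |g y| = 3 / |g y| + 3 / |g y| := by ring
  rw [e3]
  linarith

/-! ### The theorem -/

/-- **Theorem 1.1 (case k ≥ 2).** For each integer `k ≥ 2` and `A > 0` there is a constant
`B > 0`, depending only on `A` and `k`, such that for every compact interval `[a,b]`, every
`k` times continuously differentiable `f : [a,b] → ℝ` with
`sup_{[a,b]} |f⁽ᵏ⁾| < A · inf_{[a,b]} |f⁽ᵏ⁾|`, and every `C¹` function `φ : [a,b] → ℂ`,
`|∫_a^b e^{i f} φ| ≤ B (‖φ‖_∞ + ‖φ'‖_{L¹}) (∫_a^b min(1, |f''|/(f')²) + min(b-a, 1/sup|f'|))`.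
Here `|f''(x)|/(f'(x))²` is interpreted as `+∞` (so the min is `1`) where `f'(x) = 0`, and
`1/sup|f'|` as `+∞` (so the min is `b - a`) if `f'` vanishes identically. -/
theorem stmt0 (k : ℕ) (hk : 2 ≤ k) (A : ℝ) (hA : 0 < A) :
    ∃ B : ℝ, 0 < B ∧
      ∀ (a b : ℝ), a ≤ b →
      ∀ f : ℝ → ℝ, ContDiffOn ℝ k f (Icc a b) →
      sSup ((fun x => |iteratedDerivWithin k f (Icc a b) x|) '' Icc a b) <
        A * sInf ((fun x => |iteratedDerivWithin k f (Icc a b) x|) '' Icc a b) →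
      ∀ φ : ℝ → ℂ, ContDiffOn ℝ 1 φ (Icc a b) →
      ‖∫ x in a..b, Complex.exp (Complex.I * (f x : ℂ)) * φ x‖ ≤
        B * (sSup ((fun x => ‖φ x‖) '' Icc a b) + ∫ x in a..b, ‖derivWithin φ (Icc a b) x‖) *
        ((∫ x in a..b,
            if iteratedDerivWithin 1 f (Icc a b) x = 0 then (1 : ℝ)
            else min 1 (|iteratedDerivWithin 2 f (Icc a b) x| /
              (iteratedDerivWithin 1 f (Icc a b) x) ^ 2)) +
          (if sSup ((fun x => |iteratedDerivWithin 1 f (Icc a b) x|) '' Icc a b) = 0 then b - a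
           else min (b - a)
             (1 / sSup ((fun x => |iteratedDerivWithin 1 f (Icc a b) x|) '' Icc a b)))) := by
  obtain ⟨n, rfl⟩ := Nat.exists_eq_add_of_le' hk
  set C : ℝ := (1 + A) * 2 ^ n with hCdef
  have hC : 1 ≤ C := by
    have : (1 : ℝ) ≤ 2 ^ n := one_le_pow₀ (by norm_num)
    nlinarith
  set m : ℕ := n + 1 with hmdef
  have hm : 0 < m := n.succ_pos
  set K : ℝ := 8192 * m ^ 4 * C + 3 with hKdef
  have hK0 : 0 ≤ K := by positivity
  refine ⟨K + 6, by positivity, ?_⟩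
  intro a b hab f hf hsup φ hφ
  rcases hab.eq_or_lt with rfl | hlt
  · have h0 : (0 : ℝ) ≤ min 0 (1 / sSup ((fun x => |iteratedDerivWithin 1 f (Icc a a) x|) ''
        Icc a a)) := by
      refine le_min le_rfl (one_div_nonneg.2 (Real.sSup_nonneg ?_))
      rintro _ ⟨x, -, rfl⟩
      exact abs_nonneg _
    have h1 : 0 ≤ sSup ((fun x => ‖φ x‖) '' Icc a a) := by
      refine Real.sSup_nonneg ?_
      rintro _ ⟨x, -, rfl⟩
      exact norm_nonneg _
    simp only [intervalIntegral.integral_same, norm_zero, sub_self, add_zero, zero_add]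
    split_ifs
    · simp
    · positivity
  have hU := uniqueDiffOn_Icc hlt
  obtain ⟨F, hF, hFe, hFi⟩ := exists_contDiff_extension hlt (n + 2) f hf
  obtain ⟨Φ, hΦ, hΦe, -⟩ := exists_contDiff_extension hlt 1 φ (by exact_mod_cast hφ)
  -- The pinching of the `k`-th derivative holds on the whole line for the extension.
  have hpinch : ∀ x y, |iteratedDeriv (n + 2) F x| ≤ A * |iteratedDeriv (n + 2) F y| := by
    intro x y
    obtain ⟨x', hx', hx⟩ := hFi x
    obtain ⟨y', hy', hy⟩ := hFi y
    rw [← hx, ← hy]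
    have hcont : ContinuousOn (fun x => |iteratedDerivWithin (n + 2) f (Icc a b) x|) (Icc a b) :=
      (hf.continuousOn_iteratedDerivWithin le_rfl hU).abs
    have h1 := le_csSup (isCompact_Icc.bddAbove_image hcont) (mem_image_of_mem _ hx')
    have h2 := csInf_le (isCompact_Icc.bddBelow_image hcont) (mem_image_of_mem _ hy')
    have h3 := mul_le_mul_of_nonneg_left h2 hA.le
    exact h1.trans (hsup.le.trans h3)
  set g : ℝ → ℝ := deriv F with hgdef
  set h : ℝ → ℝ := deriv g with hhdef
  have hF' : ContDiff ℝ ((n + 1 : ℕ) + 1) F := by exact_mod_cast hF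
  have hgC : ContDiff ℝ ((n : ℕ) + 1) g := by
    have := (contDiff_succ_iff_deriv.1 hF').2.2
    exact_mod_cast this
  have hhC : ContDiff ℝ n h := (contDiff_succ_iff_deriv.1 hgC).2.2
  have hFd : ∀ x, HasDerivAt F (g x) x := fun x =>
    ((contDiff_succ_iff_deriv.1 hF').1 x).hasDerivAt
  have hgd : ∀ x, HasDerivAt g (h x) x := fun x =>
    ((contDiff_succ_iff_deriv.1 hgC).1 x).hasDerivAt
  have hhc : Continuous h := hhC.continuous
  have hgc : Continuous g := hgC.continuous
  have hFc : Continuous F := hF.continuous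
  have hS : Spread C m h := by
    refine spread_of_iteratedDeriv hA.le hhC fun x y => ?_
    have := hpinch x y
    rwa [iteratedDeriv_succ', iteratedDeriv_succ'] at this
  have hΦ1 : ContDiff ℝ 1 Φ := by exact_mod_cast hΦ
  obtain ⟨hΦd, hΦc⟩ := contDiff_one_iff_deriv.1 hΦ1
  -- On `[a, b]` all quantities in the statement are those of the extensions.
  have hd1 : ∀ x ∈ Icc a b, iteratedDerivWithin 1 f (Icc a b) x = g x := by
    intro x hx
    rw [← iteratedDerivWithin_congr hFe hx, iteratedDerivWithin_eq_iteratedDeriv hU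
      (hF.contDiffAt.of_le (by exact_mod_cast (by omega : 1 ≤ n + 2))) hx, iteratedDeriv_one]
  have hd2 : ∀ x ∈ Icc a b, iteratedDerivWithin 2 f (Icc a b) x = h x := by
    intro x hx
    rw [← iteratedDerivWithin_congr hFe hx, iteratedDerivWithin_eq_iteratedDeriv hU
      (hF.contDiffAt.of_le (by exact_mod_cast (by omega : 2 ≤ n + 2))) hx, iteratedDeriv_succ,
      iteratedDeriv_one]
  have hφd : ∀ x ∈ Icc a b, derivWithin φ (Icc a b) x = deriv Φ x := by
    intro x hx
    rw [← derivWithin_congr hΦe (hΦe hx), (hΦd x).derivWithin (hU x hx)]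
  have hg_image : (fun x => |iteratedDerivWithin 1 f (Icc a b) x|) '' Icc a b =
      (fun x => |g x|) '' Icc a b := image_congr fun x hx => by rw [hd1 x hx]
  have hφ_image : (fun x => ‖φ x‖) '' Icc a b = (fun x => ‖Φ x‖) '' Icc a b :=
    image_congr fun x hx => by rw [hΦe hx]
  have huIcc : uIcc a b = Icc a b := uIcc_of_le hab
  have hI1 : ∫ x in a..b, Complex.exp (Complex.I * (f x : ℂ)) * φ x =
      ∫ x in a..b, Complex.exp (Complex.I * (F x : ℂ)) * Φ x :=
    intervalIntegral.integral_congr fun x hx => by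
      rw [huIcc] at hx
      simp only [hFe hx, hΦe hx]
  have hI2 : ∫ x in a..b, ‖derivWithin φ (Icc a b) x‖ = ∫ x in a..b, ‖deriv Φ x‖ :=
    intervalIntegral.integral_congr fun x hx => by
      rw [huIcc] at hx
      simp only [hφd x hx]
  have hI3 : (∫ x in a..b, if iteratedDerivWithin 1 f (Icc a b) x = 0 then (1 : ℝ)
      else min 1 (|iteratedDerivWithin 2 f (Icc a b) x| /
        (iteratedDerivWithin 1 f (Icc a b) x) ^ 2)) = ∫ x in a..b, oscWeight g h x :=
    intervalIntegral.integral_congr fun x hx => by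
      rw [huIcc] at hx
      simp only [hd1 x hx, hd2 x hx, oscWeight]
  rw [hg_image, hφ_image, hI1, hI2, hI3]
  obtain ⟨y, hy, hymax⟩ := isCompact_Icc.exists_isMaxOn (nonempty_Icc.2 hab)
    (hgc.abs.continuousOn (s := Icc a b))
  have hsSup : sSup ((fun x => |g x|) '' Icc a b) = |g y| :=
    IsGreatest.csSup_eq ⟨mem_image_of_mem _ hy, by rintro _ ⟨x, hx, rfl⟩; exact hymax hx⟩
  rw [hsSup]
  set P := sSup ((fun x => ‖Φ x‖) '' Icc a b) with hPdef
  have hP : ∀ t ∈ Icc a b, ‖Φ t‖ ≤ P := fun t ht =>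
    le_csSup (isCompact_Icc.bddAbove_image hΦ.continuous.norm.continuousOn)
      (mem_image_of_mem (fun x => ‖Φ x‖) ht)
  have hP0 : 0 ≤ P := (norm_nonneg _).trans (hP y hy)
  have hJ : 0 ≤ ∫ x in a..b, ‖deriv Φ x‖ :=
    intervalIntegral.integral_nonneg hab fun _ _ => norm_nonneg _
  have hW := integral_oscWeight_nonneg (g := g) (h := h) hab
  have htriv : ‖∫ x in a..b, Complex.exp (Complex.I * (F x : ℂ)) * Φ x‖ ≤
      (K + 6) * (P + ∫ x in a..b, ‖deriv Φ x‖) *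
        ((∫ x in a..b, oscWeight g h x) + (b - a)) := by
    have h1 := intervalIntegral.norm_integral_le_of_norm_le_const (a := a) (b := b) (C := P)
      (f := fun x => Complex.exp (Complex.I * (F x : ℂ)) * Φ x) fun t ht => by
        rw [norm_mul, Complex.norm_exp_I_mul_ofReal, one_mul]
        rw [uIoc_of_le hab] at ht
        exact hP t (Ioc_subset_Icc_self ht)
    rw [abs_of_pos (sub_pos.2 hlt)] at h1
    refine h1.trans (mul_le_mul ?_ (by linarith) (by linarith) (by positivity))
    nlinarith
  split_ifs with hzero
  · exact htriv
  · rcases le_total (b - a) (1 / |g y|) with hle | hle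
    · rwa [min_eq_left hle]
    · rw [min_eq_right hle]
      refine (two_sided hFd hgd hhc hC hm hS (fun x => (hΦd x).hasDerivAt) hΦc hy
        (abs_ne_zero.1 hzero) hP).trans ?_
      rw [mul_comm (K + 6), mul_assoc (P + _) (K + 6)]
      refine mul_le_mul_of_nonneg_left ?_ (add_nonneg hP0 hJ)
      have h1 : 0 ≤ 1 / |g y| := by positivity
      have h6 : 6 / |g y| = 6 * (1 / |g y|) := by ring
      rw [h6, ← hKdef]
      nlinarith [mul_nonneg hK0 h1]
end

section
/- Let A > 0. There exists a constant B > 0, depending only on A, with the following property. Let [a,b] be a compact interval, let f : [a,b] → ℝ be C² with sup_{x∈[a,b]} |f'(x)| < A · inf_{x∈[a,b]} |f'(x)| (in particular f' is nonvanishing on [a,b]), suppose [a,b] can be written as the union of j subintervals on each of which f' is monotonic, and let φ : [a,b] → ℂ be C¹. Then |∫_a^b e^{i f(x)} φ(x) dx| ≤ j·B (‖φ‖_{L^∞} + ‖φ'‖_{L^1}) ( ∫_a^b min(1, |f''(x)| / (f'(x))²) dx + min( b − a, 1 / sup_{x∈[a,b]} |f'(x)| ) ). -/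
open Set MeasureTheory

/-!
Write `m = inf |f'|` and `M = sup |f'|`, so that `1 / m < A / M`. There are two bounds for the
integral. The trivial one is `(b - a) ‖φ‖_∞`. The other comes from one integration by parts of
`e^{if} φ = (i f' e^{if}) · φ / (i f')` (`norm_integral_le_of_parts`): the boundary terms
contribute `2 ‖φ‖_∞ / m`, the term with `φ'` contributes `‖φ'‖_{L¹} / m`, and the last one
`‖φ‖_∞ ∫ |f''| / f'²`. On an interval where `f'` is monotone `f''` has constant sign, so
`∫ |f''| / f'²` telescopes to a difference of values of `1 / f'` and is at most `2 / m`
(`integral_abs_div_sq_le_of_monotoneOn`); the `j` pieces together give at most `2 j / m`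
(`integral_abs_div_sq_le`).

The smaller of the two bounds is at most
`j (4 A + 1) (‖φ‖_∞ + ‖φ'‖_{L¹}) min (b - a, 1 / M)`, so the theorem holds with `B = 4 A + 1`; the
integral of `min (1, |f''| / f'²)` enters only through its nonnegativity.
-/

/-- If `g` is monotone then `|g'| / g²` is, up to sign, the derivative of `1 / g`. The bound `2 / m`
does not use that `g` has constant sign. -/
lemma integral_abs_div_sq_le_of_monotoneOn {g h : ℝ → ℝ} {p q m : ℝ} (hpq : p ≤ q) (hm : 0 < m)
    (hg : ∀ x ∈ Icc p q, HasDerivWithinAt g (h x) (Icc p q) x)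
    (hh : ContinuousOn h (Icc p q)) (hgm : ∀ x ∈ Icc p q, m ≤ |g x|)
    (hmono : MonotoneOn g (Icc p q) ∨ AntitoneOn g (Icc p q)) :
    ∫ x in p..q, |h x| / g x ^ 2 ≤ 2 / m := by
  have hgc : ContinuousOn g (Icc p q) := fun x hx => (hg x hx).continuousWithinAt
  have hg0 : ∀ x ∈ Icc p q, g x ≠ 0 := fun x hx h0 => by
    have := hgm x hx
    rw [h0, abs_zero] at this
    linarith
  rcases hpq.eq_or_lt with rfl | hlt
  · simp only [intervalIntegral.integral_same]
    positivity
  have hinv : ∀ x ∈ Icc p q, |(g x)⁻¹| ≤ 1 / m := fun x hx => by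
    rw [abs_inv, ← one_div]
    exact one_div_le_one_div_of_le hm (hgm x hx)
  have hdw : ∀ x ∈ Icc p q, derivWithin g (Icc p q) x = h x := fun x hx =>
    (hg x hx).derivWithin (uniqueDiffOn_Icc hlt x hx)
  have hftc : ∫ x in p..q, -h x / g x ^ 2 = (g q)⁻¹ - (g p)⁻¹ := by
    refine intervalIntegral.integral_eq_sub_of_hasDerivAt_of_le (f := fun x => (g x)⁻¹) hpq
      (hgc.inv₀ hg0) (fun x hx => ?_) ?_
    · have hx' := Ioo_subset_Icc_self hx
      exact ((hg x hx').hasDerivAt (Icc_mem_nhds hx.1 hx.2)).inv (hg0 x hx')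
    · exact (hh.neg.div (hgc.pow 2) fun x hx => pow_ne_zero 2 (hg0 x hx)).intervalIntegrable_of_Icc
        hpq
  have hP := abs_le.1 (hinv p (left_mem_Icc.2 hpq))
  have hQ := abs_le.1 (hinv q (right_mem_Icc.2 hpq))
  have h2 : 2 / m = 1 / m + 1 / m := by ring
  rcases hmono with hmo | han
  · have : ∫ x in p..q, |h x| / g x ^ 2 = ∫ x in p..q, -(-h x / g x ^ 2) := by
      refine intervalIntegral.integral_congr fun x hx => ?_
      rw [uIcc_of_le hpq] at hx
      have h0 : 0 ≤ h x := hdw x hx ▸ hmo.derivWithin_nonneg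
      simp only [abs_of_nonneg h0, neg_div, neg_neg]
    rw [this, intervalIntegral.integral_neg, hftc, h2]
    linarith [hP.2, hQ.1]
  · have : ∫ x in p..q, |h x| / g x ^ 2 = ∫ x in p..q, -h x / g x ^ 2 := by
      refine intervalIntegral.integral_congr fun x hx => ?_
      rw [uIcc_of_le hpq] at hx
      have h0 : h x ≤ 0 := hdw x hx ▸ han.derivWithin_nonpos
      simp only [abs_of_nonpos h0]
    rw [this, hftc, h2]
    linarith [hP.1, hQ.2]

lemma integral_abs_div_sq_le {g h : ℝ → ℝ} {a b m : ℝ} (hm : 0 < m)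
    (hg : ∀ x ∈ Icc a b, HasDerivWithinAt g (h x) (Icc a b) x)
    (hh : ContinuousOn h (Icc a b)) (hgm : ∀ x ∈ Icc a b, m ≤ |g x|)
    (j : ℕ) (c : ℕ → ℝ) (hc0 : c 0 = a) (hcj : c j = b) (hc : ∀ i < j, c i ≤ c (i + 1))
    (hmono : ∀ i < j, MonotoneOn g (Icc (c i) (c (i + 1))) ∨
      AntitoneOn g (Icc (c i) (c (i + 1)))) :
    ∫ x in a..b, |h x| / g x ^ 2 ≤ j * (2 / m) := by
  have hle : ∀ k l, k ≤ l → l ≤ j → c k ≤ c l := by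
    intro k l hkl
    induction l, hkl using Nat.le_induction with
    | base => exact fun _ => le_rfl
    | succ l _ ih => exact fun hl => (ih (by omega)).trans (hc l (by omega))
  have hsub : ∀ i < j, Icc (c i) (c (i + 1)) ⊆ Icc a b := fun i hi =>
    Icc_subset_Icc (hc0 ▸ hle 0 i (Nat.zero_le _) hi.le) (hcj ▸ hle (i + 1) j hi le_rfl)
  have hcont : ContinuousOn (fun x => |h x| / g x ^ 2) (Icc a b) := by
    refine hh.abs.div (ContinuousOn.pow (fun x hx => (hg x hx).continuousWithinAt) 2)
      fun x hx h0 => ?_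
    have := hgm x hx
    rw [pow_eq_zero_iff two_ne_zero] at h0
    rw [h0, abs_zero] at this
    linarith
  rw [← hc0, ← hcj, ← intervalIntegral.sum_integral_adjacent_intervals fun k hk =>
    (hcont.mono (hsub k hk)).intervalIntegrable_of_Icc (hc k hk)]
  calc _ ≤ ∑ _k ∈ Finset.range j, 2 / m := by
        refine Finset.sum_le_sum fun k hk => ?_
        have hk := Finset.mem_range.1 hk
        exact integral_abs_div_sq_le_of_monotoneOn (hc k hk) hm
          (fun x hx => (hg x (hsub k hk hx)).mono (hsub k hk)) (hh.mono (hsub k hk))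
          (fun x hx => hgm x (hsub k hk hx)) (hmono k hk)
    _ = _ := by simp

lemma norm_integral_le_of_parts {f g h : ℝ → ℝ} {φ ψ : ℝ → ℂ} {a b m P : ℝ} (hab : a ≤ b)
    (hm : 0 < m)
    (hf : ∀ x ∈ Icc a b, HasDerivWithinAt f (g x) (Icc a b) x)
    (hg : ∀ x ∈ Icc a b, HasDerivWithinAt g (h x) (Icc a b) x)
    (hφ : ∀ x ∈ Icc a b, HasDerivWithinAt φ (ψ x) (Icc a b) x)
    (hh : ContinuousOn h (Icc a b)) (hψ : ContinuousOn ψ (Icc a b))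
    (hgm : ∀ x ∈ Icc a b, m ≤ |g x|) (hP : ∀ x ∈ Icc a b, ‖φ x‖ ≤ P) :
    ‖∫ x in a..b, Complex.exp (Complex.I * (f x : ℂ)) * φ x‖ ≤
      2 * (P / m) + (∫ x in a..b, ‖ψ x‖) / m + P * ∫ x in a..b, |h x| / g x ^ 2 := by
  have hP0 : 0 ≤ P := (norm_nonneg _).trans (hP a (left_mem_Icc.2 hab))
  have hg0 : ∀ x ∈ Icc a b, g x ≠ 0 := fun x hx h0 => by
    have := hgm x hx
    rw [h0, abs_zero] at this
    linarith
  have hd0 : ∀ x ∈ Icc a b, Complex.I * (g x : ℂ) ≠ 0 := fun x hx =>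
    mul_ne_zero Complex.I_ne_zero (Complex.ofReal_ne_zero.2 (hg0 x hx))
  have hgc : ContinuousOn g (Icc a b) := fun x hx => (hg x hx).continuousWithinAt
  have hfc : ContinuousOn f (Icc a b) := fun x hx => (hf x hx).continuousWithinAt
  have hφc : ContinuousOn φ (Icc a b) := fun x hx => (hφ x hx).continuousWithinAt
  have hof : ∀ {k : ℝ → ℝ}, ContinuousOn k (Icc a b) →
      ContinuousOn (fun x => (k x : ℂ)) (Icc a b) := fun hk =>
    Complex.continuous_ofReal.comp_continuousOn hk
  have hdc : ContinuousOn (fun x => Complex.I * (g x : ℂ)) (Icc a b) :=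
    continuousOn_const.mul (hof hgc)
  set E : ℝ → ℂ := fun x => Complex.exp (Complex.I * (f x : ℂ)) with hE
  have hEn : ∀ x, ‖E x‖ = 1 := fun x => by
    rw [hE]
    simp only [mul_comm Complex.I, Complex.norm_exp_ofReal_mul_I]
  have hEc : ContinuousOn E (Icc a b) :=
    Complex.continuous_exp.comp_continuousOn (continuousOn_const.mul (hof hfc))
  set u : ℝ → ℂ := fun x => φ x / (Complex.I * (g x : ℂ)) with hu
  set u' : ℝ → ℂ := fun x => (ψ x * (Complex.I * (g x : ℂ)) - φ x * (Complex.I * (h x : ℂ))) /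
    (Complex.I * (g x : ℂ)) ^ 2 with hu'
  set v' : ℝ → ℂ := fun x => E x * (Complex.I * (g x : ℂ)) with hv'
  have hud : ∀ x ∈ Icc a b, HasDerivWithinAt u (u' x) (Icc a b) x := fun x hx =>
    (hφ x hx).div ((hg x hx).ofReal_comp.const_mul Complex.I) (hd0 x hx)
  have hvd : ∀ x ∈ Icc a b, HasDerivWithinAt E (v' x) (Icc a b) x := fun x hx =>
    ((hf x hx).ofReal_comp.const_mul Complex.I).cexp
  have hu'c : ContinuousOn u' (Icc a b) :=
    ((hψ.mul hdc).sub (hφc.mul (continuousOn_const.mul (hof hh)))).div (hdc.pow 2)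
      fun x hx => pow_ne_zero 2 (hd0 x hx)
  have hu_le : ∀ x ∈ Icc a b, ‖u x * E x‖ ≤ P / m := fun x hx => by
    rw [norm_mul, hEn, mul_one, hu]
    simp only [norm_div, norm_mul, Complex.norm_I, one_mul, Complex.norm_real, Real.norm_eq_abs]
    exact div_le_div₀ hP0 (hP x hx) hm (hgm x hx)
  have hqc : ContinuousOn (fun x => |h x| / g x ^ 2) (Icc a b) :=
    hh.abs.div (hgc.pow 2) fun x hx => pow_ne_zero 2 (hg0 x hx)
  have i1 : IntervalIntegrable (fun x => ‖ψ x‖ / m) volume a b :=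
    (hψ.norm.div_const m).intervalIntegrable_of_Icc hab
  have i2 : IntervalIntegrable (fun x => P * (|h x| / g x ^ 2)) volume a b :=
    (continuousOn_const.mul hqc).intervalIntegrable_of_Icc hab
  have hrest : ‖∫ x in a..b, u' x * E x‖ ≤
      (∫ x in a..b, ‖ψ x‖) / m + P * ∫ x in a..b, |h x| / g x ^ 2 := by
    rw [← intervalIntegral.integral_div, ← intervalIntegral.integral_const_mul,
      ← intervalIntegral.integral_add i1 i2]
    refine intervalIntegral.norm_integral_le_of_norm_le hab (ae_of_all _ fun x hx => ?_)
      (i1.add i2)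
    have hx := Ioc_subset_Icc_self hx
    have hsplit : u' x = ψ x / (Complex.I * (g x : ℂ)) -
        φ x * (Complex.I * (h x : ℂ)) / (Complex.I * (g x : ℂ)) ^ 2 := by
      have := hd0 x hx
      simp only [hu', sub_div]
      congr 1
      rw [pow_two, mul_div_mul_right _ _ this]
    rw [norm_mul, hEn, mul_one, hsplit]
    refine (norm_sub_le _ _).trans (add_le_add ?_ ?_)
    · simp only [norm_div, norm_mul, Complex.norm_I, one_mul, Complex.norm_real, Real.norm_eq_abs]
      exact div_le_div_of_nonneg_left (norm_nonneg _) hm (hgm x hx)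
    · simp only [norm_div, norm_mul, norm_pow, Complex.norm_I, one_mul, Complex.norm_real,
        Real.norm_eq_abs, sq_abs, mul_div_assoc]
      exact mul_le_mul_of_nonneg_right (hP x hx) (by positivity)
  have hparts : ∫ x in a..b, E x * φ x =
      u b * E b - u a * E a - ∫ x in a..b, u' x * E x := by
    rw [← intervalIntegral.integral_mul_deriv_eq_deriv_mul_of_hasDerivWithinAt (v' := v')
      (by rwa [uIcc_of_le hab]) (by rwa [uIcc_of_le hab])
      (hu'c.intervalIntegrable_of_Icc hab) ((hEc.mul hdc).intervalIntegrable_of_Icc hab)]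
    refine intervalIntegral.integral_congr fun x hx => ?_
    rw [uIcc_of_le hab] at hx
    simp only [hu, hv']
    rw [mul_left_comm, div_mul_cancel₀ _ (hd0 x hx)]
  rw [hparts]
  have h1 := hu_le a (left_mem_Icc.2 hab)
  have h2 := hu_le b (right_mem_Icc.2 hab)
  have h3 := norm_sub_le (u b * E b - u a * E a) (∫ x in a..b, u' x * E x)
  have h4 := norm_sub_le (u b * E b) (u a * E a)
  linarith

/-- **Theorem 1.1 (case k = 1).** For each `A > 0` there is a constant `B > 0`, depending only
on `A`, such that: for every compact interval `[a,b]`, every `C²` function `f : [a,b] → ℝ` with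
`sup_{[a,b]} |f'| < A · inf_{[a,b]} |f'|`, if `[a,b]` is the union of `j` subintervals
(given by partition points `c 0 = a ≤ c 1 ≤ ... ≤ c j = b`) on each of which `f'` is monotonic,
then for every `C¹` function `φ : [a,b] → ℂ`,
`|∫_a^b e^{i f} φ| ≤ j·B (‖φ‖_∞ + ‖φ'‖_{L¹}) (∫_a^b min(1, |f''|/(f')²) + min(b-a, 1/sup|f'|))`.
Here `|f''(x)|/(f'(x))²` is interpreted as `+∞` (so the min is `1`) where `f'(x) = 0`. -/
theorem stmt1 (A : ℝ) (hA : 0 < A) :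
    ∃ B : ℝ, 0 < B ∧
      ∀ (a b : ℝ), a ≤ b →
      ∀ f : ℝ → ℝ, ContDiffOn ℝ 2 f (Icc a b) →
      sSup ((fun x => |iteratedDerivWithin 1 f (Icc a b) x|) '' Icc a b) <
        A * sInf ((fun x => |iteratedDerivWithin 1 f (Icc a b) x|) '' Icc a b) →
      ∀ (j : ℕ) (c : ℕ → ℝ), c 0 = a → c j = b → (∀ i < j, c i ≤ c (i + 1)) →
      (∀ i < j, MonotoneOn (iteratedDerivWithin 1 f (Icc a b)) (Icc (c i) (c (i + 1))) ∨
        AntitoneOn (iteratedDerivWithin 1 f (Icc a b)) (Icc (c i) (c (i + 1)))) →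
      ∀ φ : ℝ → ℂ, ContDiffOn ℝ 1 φ (Icc a b) →
      ‖∫ x in a..b, Complex.exp (Complex.I * (f x : ℂ)) * φ x‖ ≤
        (j : ℝ) * B *
          (sSup ((fun x => ‖φ x‖) '' Icc a b) + ∫ x in a..b, ‖derivWithin φ (Icc a b) x‖) *
        ((∫ x in a..b,
            if iteratedDerivWithin 1 f (Icc a b) x = 0 then (1 : ℝ)
            else min 1 (|iteratedDerivWithin 2 f (Icc a b) x| /
              (iteratedDerivWithin 1 f (Icc a b) x) ^ 2)) +
          (if sSup ((fun x => |iteratedDerivWithin 1 f (Icc a b) x|) '' Icc a b) = 0 then b - a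
           else min (b - a)
             (1 / sSup ((fun x => |iteratedDerivWithin 1 f (Icc a b) x|) '' Icc a b)))) := by
  refine ⟨4 * A + 1, by positivity, ?_⟩
  intro a b hab f hf hsup j c hc0 hcj hc hmono φ hφ
  rw [iteratedDerivWithin_one] at *
  set g := derivWithin f (Icc a b) with hgdef
  set M := sSup ((fun x => |g x|) '' Icc a b) with hM
  set m := sInf ((fun x => |g x|) '' Icc a b) with hmdef
  set P := sSup ((fun x => ‖φ x‖) '' Icc a b) with hPdef
  set V := ∫ x in a..b, ‖derivWithin φ (Icc a b) x‖ with hV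
  have hP0 : 0 ≤ P := Real.sSup_nonneg (by rintro _ ⟨x, _, rfl⟩; exact norm_nonneg _)
  have hV0 : 0 ≤ V := intervalIntegral.integral_nonneg hab fun _ _ => norm_nonneg _
  have hM0 : 0 ≤ M := Real.sSup_nonneg (by rintro _ ⟨x, _, rfl⟩; exact abs_nonneg _)
  have hm : 0 < m := pos_of_mul_pos_right (hM0.trans_lt hsup) hA.le
  have hgm : ∀ x ∈ Icc a b, m ≤ |g x| := fun x hx =>
    csInf_le ⟨0, by rintro _ ⟨x, _, rfl⟩; exact abs_nonneg _⟩ ⟨x, hx, rfl⟩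
  have hP : ∀ x ∈ Icc a b, ‖φ x‖ ≤ P := fun x hx =>
    le_csSup (isCompact_Icc.image_of_continuousOn hφ.continuousOn.norm).bddAbove ⟨x, hx, rfl⟩
  have hI0 : 0 ≤ ∫ x in a..b, if g x = 0 then (1 : ℝ)
      else min 1 (|iteratedDerivWithin 2 f (Icc a b) x| / g x ^ 2) :=
    intervalIntegral.integral_nonneg hab fun x _ => by
      split_ifs <;> positivity
  rcases hab.eq_or_lt with hab' | hlt
  · have hT : 0 ≤ if M = 0 then b - a else min (b - a) (1 / M) := by
      split_ifs
      · linarith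
      · exact le_min (by linarith) (by positivity)
    have hz : ∫ x in a..b, Complex.exp (Complex.I * (f x : ℂ)) * φ x = 0 := by
      rw [hab', intervalIntegral.integral_same]
    rw [hz, norm_zero]
    positivity
  have hud := uniqueDiffOn_Icc hlt
  have hg1 : ContDiffOn ℝ 1 g (Icc a b) := hf.derivWithin hud (by norm_num)
  have hmM : m ≤ M := by
    have ha := left_mem_Icc.2 hab
    exact (hgm a ha).trans
      (le_csSup (isCompact_Icc.image_of_continuousOn hg1.continuousOn.abs).bddAbove ⟨a, ha, rfl⟩)
  have hMpos : 0 < M := hm.trans_le hmM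
  have hj : (1 : ℝ) ≤ j := by
    rcases Nat.eq_zero_or_pos j with rfl | h
    · exact absurd (hc0.symm.trans hcj) hlt.ne
    · exact_mod_cast h
  have hpd : ∀ {F : Type} [NormedAddCommGroup F] [NormedSpace ℝ F] {k : ℝ → F} {n : WithTop ℕ∞},
      ContDiffOn ℝ n k (Icc a b) → n ≠ 0 → ∀ x ∈ Icc a b,
      HasDerivWithinAt k (derivWithin k (Icc a b) x) (Icc a b) x := fun hk hn x hx =>
    (hk.differentiableOn hn x hx).hasDerivWithinAt
  have hg' := hpd hg1 one_ne_zero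
  have hh := hg1.continuousOn_derivWithin hud le_rfl
  have hparts := norm_integral_le_of_parts hab hm (hpd hf two_ne_zero) hg' (hpd hφ one_ne_zero) hh
    (hφ.continuousOn_derivWithin hud le_rfl) hgm hP
  have hvar := integral_abs_div_sq_le hm hg' hh hgm j c hc0 hcj hc hmono
  rw [if_neg hMpos.ne']
  set N := ‖∫ x in a..b, Complex.exp (Complex.I * (f x : ℂ)) * φ x‖
  have htriv : N ≤ P * (b - a) := by
    have := intervalIntegral.norm_integral_le_of_norm_le_const (a := a) (b := b) (C := P)
      (f := fun x => Complex.exp (Complex.I * (f x : ℂ)) * φ x) fun x hx => by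
        rw [uIoc_of_le hab] at hx
        rw [norm_mul, mul_comm Complex.I, Complex.norm_exp_ofReal_mul_I, one_mul]
        exact hP x (Ioc_subset_Icc_self hx)
    rwa [abs_of_pos (sub_pos.2 hlt)] at this
  have hmA : 1 / m ≤ A * (1 / M) := by
    rw [mul_one_div, div_le_div_iff₀ hm hMpos]
    linarith
  have hosc : N ≤ j * (4 * A) * (P + V) * (1 / M) :=
    calc N ≤ 2 * (P / m) + V / m + P * (j * (2 / m)) :=
          hparts.trans (by gcongr)
      _ = (2 * P + V + 2 * j * P) * (1 / m) := by ring
      _ ≤ (4 * j * (P + V)) * (1 / m) := by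
          gcongr
          nlinarith [mul_le_mul_of_nonneg_right hj hP0, mul_le_mul_of_nonneg_right hj hV0]
      _ ≤ (4 * j * (P + V)) * (A * (1 / M)) := by gcongr
      _ = _ := by ring
  have hX : N ≤ j * (4 * A + 1) * (P + V) * min (b - a) (1 / M) := by
    rcases min_choice (b - a) (1 / M) with h | h <;> rw [h]
    · refine htriv.trans (mul_le_mul_of_nonneg_right ?_ (sub_pos.2 hlt).le)
      calc P ≤ 1 * 1 * (P + V) := by linarith
        _ ≤ _ := by gcongr; linarith
    · refine hosc.trans ?_
      gcongr
      linarith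
  refine hX.trans ?_
  gcongr
  linarith
end

section
/- There exists a universal constant B > 0 with the following property. Let f : [a,b] → ℝ be C³ such that the set {x ∈ [a,b] : f'''(x) = 0} is finite, and let φ : [a,b] → ℂ be C¹. Let J denote the (finite) set of points x ∈ [a,b] such that f'(x) ≠ 0 and either x = a, x = b, f''(x) = 0, or f'''(x) = 0. Then |∫_a^b e^{i f(x)} φ(x) dx| ≤ B (‖φ‖_{L^∞} + ‖φ'‖_{L^1}) ( ∫_a^b min(1, |f''(x)| / (f'(x))²) dx + min( b − a, Σ_{x ∈ J} 1/|f'(x)| ) ). -/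
/-!
The amplitude is removed by partial integration against `F(x) = ∫_a^x e^{if}` (`amplitude`), which
reduces the claim to a bound for `sup |F|`; since `|F| ≤ b - a`, only the bound with the sum over
`J` is at stake.

The interval is cut at the zeros of `f'`, `f''` and `f'''`, which are finitely many by Rolle's
theorem (`finite_zeros_of_deriv`). Let `[c, d]` be a piece. Up to complex conjugation and
reflection, `g = f'` is positive and increasing inside it. If `g(c) > 0`, van der Corput's first
derivative test (`vdc`) gives the bound `3 / g(c)`. If `g(c) = 0`, then for every `t` in `(c, d]`
the trivial bound on `[c, t]` and the first derivative test on `[t, d]` give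
`(t - c) + 3 / g(t)` (`split_bound`), and `t` is chosen according to the sign of `g''`
(`core_pos`):

* If `g` is convex, take `t` with `(t - c) g(t) = 1` (if there is none, then `d - c ≤ 1 / g(d)`).
  For `s ≤ t`, convexity gives `g'(s) ≥ g(s) / (s - c) ≥ g(s)²`, so the density
  `min(1, |g'| / g²)` equals `1` on `(c, t)`, and `t - c = 1 / g(t)` is at most its integral.
* If `g` is concave, `g' - g²` is decreasing; take `t` to be its zero (if it is never negative, the
  density is `1` throughout). The density is `1` on `(c, t)` and `-(1/g)'` on `(t, d)`, so its
  integral is `(t - c) + 1 / g(t) - 1 / g(d)`.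

Each end point belongs to at most two pieces, so adding up the pieces (`glue`) costs a factor `2`.
Those end points with `f' ≠ 0` are exactly the elements of `J`, while a zero of `f'` enters with
the weight `1 / |0| = 0`.
-/

open Set MeasureTheory

/-! ### The oscillating factor, the density and the first derivative test -/

/-- The oscillating factor `e^{i f(x)}`. -/
noncomputable def osc (f : ℝ → ℝ) (x : ℝ) : ℂ := Complex.exp (Complex.I * (f x : ℂ))

/-- The density `min(1, |g'| / g²)`, with the value `1` at the zeros of `g`; here `g₁` plays the
role of `g'`. -/
noncomputable def dens (g g₁ : ℝ → ℝ) (x : ℝ) : ℝ :=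
  if g x = 0 then (1 : ℝ) else min 1 (|g₁ x| / (g x) ^ 2)

lemma norm_osc (f : ℝ → ℝ) (x : ℝ) : ‖osc f x‖ = 1 := by
  rw [osc, mul_comm, Complex.norm_exp_ofReal_mul_I]

lemma osc_neg (f : ℝ → ℝ) (x : ℝ) :
    osc (fun y => -f y) x = (starRingEnd ℂ) (osc f x) := by
  simp [osc, ← Complex.exp_conj]

lemma osc_continuousOn {f : ℝ → ℝ} {s : Set ℝ} (hf : ContinuousOn f s) :
    ContinuousOn (osc f) s := by
  unfold osc
  exact (continuousOn_const.mul (Complex.continuous_ofReal.comp_continuousOn hf)).cexp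

lemma osc_intervalIntegrable {f : ℝ → ℝ} {a b x y : ℝ} (hf : ContinuousOn f (Icc a b))
    (hx : x ∈ Icc a b) (hy : y ∈ Icc a b) : IntervalIntegrable (osc f) volume x y :=
  ((osc_continuousOn hf).mono (uIcc_subset_Icc hx hy)).intervalIntegrable

lemma norm_integral_osc_le {f : ℝ → ℝ} {x y : ℝ} (hxy : x ≤ y) :
    ‖∫ t in x..y, osc f t‖ ≤ y - x := by
  have := intervalIntegral.norm_integral_le_of_norm_le_const (a := x) (b := y) (f := osc f)
    (C := 1) (fun t _ => (norm_osc f t).le)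
  rwa [one_mul, abs_of_nonneg (sub_nonneg.2 hxy)] at this

lemma dens_nonneg (g g₁ : ℝ → ℝ) (x : ℝ) : 0 ≤ dens g g₁ x := by
  unfold dens; split_ifs <;> positivity

lemma dens_le_one (g g₁ : ℝ → ℝ) (x : ℝ) : dens g g₁ x ≤ 1 := by
  unfold dens; split_ifs
  · exact le_rfl
  · exact min_le_left _ _

lemma dens_intervalIntegrable {g g₁ : ℝ → ℝ} {a b x y : ℝ} (hg : ContinuousOn g (Icc a b))
    (hg₁ : ContinuousOn g₁ (Icc a b)) (hx : x ∈ Icc a b) (hy : y ∈ Icc a b) :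
    IntervalIntegrable (dens g g₁) volume x y := by
  have key : IntegrableOn (dens g g₁) (Icc a b) := by
    have h1 : AEMeasurable g (volume.restrict (Icc a b)) := hg.aemeasurable measurableSet_Icc
    have h2 : AEMeasurable g₁ (volume.restrict (Icc a b)) := hg₁.aemeasurable measurableSet_Icc
    have h3 : Measurable (fun p : ℝ × ℝ =>
        if p.1 = 0 then (1 : ℝ) else min 1 (|p.2| / p.1 ^ 2)) := by
      refine Measurable.ite ?_ measurable_const ?_
      · exact measurable_fst (measurableSet_singleton (0 : ℝ))
      · fun_prop
    have h4 : AEStronglyMeasurable (dens g g₁) (volume.restrict (Icc a b)) :=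
      (h3.comp_aemeasurable (h1.prodMk h2)).aestronglyMeasurable
    refine Integrable.of_bound h4 1 ?_
    refine Filter.Eventually.of_forall fun t => ?_
    rw [Real.norm_of_nonneg (dens_nonneg _ _ _)]
    exact dens_le_one _ _ _
  exact (key.mono_set (uIcc_subset_Icc hx hy)).intervalIntegrable

/-- Van der Corput's first derivative test, for an increasing derivative `g` of the phase: partial
integration of `1/g` against `g e^{if}`, where `1/g` has total variation at most `1/L`. -/
lemma vdc {f g g₁ : ℝ → ℝ} {x y L : ℝ} (hxy : x ≤ y)
    (hf : ContinuousOn f (Icc x y)) (hg : ContinuousOn g (Icc x y))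
    (hg₁ : ContinuousOn g₁ (Icc x y))
    (hfd : ∀ t ∈ Ioo x y, HasDerivAt f (g t) t) (hgd : ∀ t ∈ Ioo x y, HasDerivAt g (g₁ t) t)
    (hL : 0 < L) (hgL : ∀ t ∈ Icc x y, L ≤ g t) (hpos : ∀ t ∈ Ioo x y, 0 ≤ g₁ t) :
    ‖∫ t in x..y, osc f t‖ ≤ 3 / L := by
  have hgpos : ∀ t ∈ Icc x y, 0 < g t := fun t ht => hL.trans_le (hgL t ht)
  have hu : uIcc x y = Icc x y := uIcc_of_le hxy
  have hmm : Ioo (min x y) (max x y) = Ioo x y := by rw [min_eq_left hxy, max_eq_right hxy]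
  have hgC : ContinuousOn (fun t => (g t : ℂ)) (Icc x y) :=
    Complex.continuous_ofReal.comp_continuousOn hg
  have hg₁C : ContinuousOn (fun t => (g₁ t : ℂ)) (Icc x y) :=
    Complex.continuous_ofReal.comp_continuousOn hg₁
  have hgne : ∀ t ∈ Icc x y, (g t : ℂ) ≠ 0 := fun t ht =>
    Complex.ofReal_ne_zero.2 (hgpos t ht).ne'
  have hquot : ContinuousOn (fun t => g₁ t / g t ^ 2) (Icc x y) :=
    hg₁.div (hg.pow 2) fun t ht => (pow_pos (hgpos t ht) 2).ne'
  have hquotC : ContinuousOn (fun t => -(g₁ t : ℂ) / (g t : ℂ) ^ 2) (Icc x y) :=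
    hg₁C.neg.div (hgC.pow 2) fun t ht => pow_ne_zero 2 (hgne t ht)
  have parts := intervalIntegral.integral_mul_deriv_eq_deriv_mul_of_hasDerivAt
    (a := x) (b := y) (u := fun t => ((g t : ℂ))⁻¹) (v := osc f)
    (u' := fun t => -(g₁ t : ℂ) / (g t : ℂ) ^ 2)
    (v' := fun t => osc f t * (Complex.I * (g t : ℂ)))
    (by rw [hu]; exact hgC.inv₀ hgne) (by rw [hu]; exact osc_continuousOn hf)
    (by
      rw [hmm]; intro t ht
      exact (hgd t ht).ofReal_comp.fun_inv (hgne t (Ioo_subset_Icc_self ht)))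
    (by
      rw [hmm]; intro t ht
      exact ((hfd t ht).ofReal_comp.const_mul Complex.I).cexp)
    (by rw [← hu] at hquotC; exact hquotC.intervalIntegrable)
    (ContinuousOn.intervalIntegrable (by
      rw [hu]; exact (osc_continuousOn hf).mul (continuousOn_const.mul hgC)))
  have hleft : ∫ t in x..y, ((g t : ℂ))⁻¹ * (osc f t * (Complex.I * (g t : ℂ)))
      = Complex.I * ∫ t in x..y, osc f t := by
    rw [← intervalIntegral.integral_const_mul]
    refine intervalIntegral.integral_congr fun t ht => ?_
    rw [hu] at ht
    have := hgne t ht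
    field_simp
  rw [hleft] at parts
  have hn : ‖∫ t in x..y, osc f t‖ = ‖Complex.I * ∫ t in x..y, osc f t‖ := by simp
  have hFTC : ∫ t in x..y, g₁ t / g t ^ 2 = (g x)⁻¹ - (g y)⁻¹ := by
    have := intervalIntegral.integral_eq_sub_of_hasDerivAt_of_le hxy
      (f := fun t => -(g t)⁻¹) (f' := fun t => g₁ t / g t ^ 2)
      (hg.inv₀ fun t ht => (hgpos t ht).ne').neg
      (fun t ht => by
        have := ((hgd t ht).fun_inv (hgpos t (Ioo_subset_Icc_self ht)).ne').fun_neg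
        simpa [neg_div] using this)
      (by rw [← hu] at hquot; exact hquot.intervalIntegrable)
    rw [this]; ring
  have hdint : ‖∫ t in x..y, -(g₁ t : ℂ) / (g t : ℂ) ^ 2 * osc f t‖ ≤ (g x)⁻¹ - (g y)⁻¹ := by
    rw [← hFTC]
    refine intervalIntegral.norm_integral_le_of_norm_le hxy ?_
      (by rw [← hu] at hquot; exact hquot.intervalIntegrable)
    -- the endpoint `y`, where the sign of `g₁` is not assumed, is a null set
    have hne : ∀ᵐ t : ℝ, t ≠ y := by simp [ae_iff]
    filter_upwards [hne] with t hty ht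
    have h0 : 0 ≤ g₁ t := hpos t ⟨ht.1, lt_of_le_of_ne ht.2 hty⟩
    rw [norm_mul, norm_osc, mul_one, norm_div, norm_neg, norm_pow, Complex.norm_real,
      Complex.norm_real, Real.norm_of_nonneg h0, Real.norm_eq_abs, sq_abs]
  have hx : (g x)⁻¹ ≤ L⁻¹ := inv_anti₀ hL (hgL x (left_mem_Icc.2 hxy))
  have hy : (g y)⁻¹ ≤ L⁻¹ := inv_anti₀ hL (hgL y (right_mem_Icc.2 hxy))
  have hy0 : 0 < g y := hgpos y (right_mem_Icc.2 hxy)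
  have hx0 : 0 < g x := hgpos x (left_mem_Icc.2 hxy)
  have e1 : ‖((g y : ℂ))⁻¹ * osc f y‖ = (g y)⁻¹ := by
    rw [norm_mul, norm_osc, mul_one, norm_inv, Complex.norm_real, Real.norm_of_nonneg hy0.le]
  have e2 : ‖((g x : ℂ))⁻¹ * osc f x‖ = (g x)⁻¹ := by
    rw [norm_mul, norm_osc, mul_one, norm_inv, Complex.norm_real, Real.norm_of_nonneg hx0.le]
  rw [hn, parts]
  refine (norm_sub_le _ _).trans ?_
  have := norm_sub_le (((g y : ℂ))⁻¹ * osc f y) (((g x : ℂ))⁻¹ * osc f x)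
  rw [e1, e2] at this
  have h3 : 3 / L = 3 * L⁻¹ := div_eq_mul_inv _ _
  have : 0 < (g y)⁻¹ := inv_pos.2 hy0
  linarith

/-! ### Phases and the estimate on one piece -/

/-- A phase `f` on `[c, d]` together with its first three derivatives `g`, `g₁`, `g₂`: all four
functions are continuous on the closed interval, and the derivatives are taken in its interior. -/
structure Phase (f g g₁ g₂ : ℝ → ℝ) (c d : ℝ) : Prop where
  cf : ContinuousOn f (Icc c d)
  cg : ContinuousOn g (Icc c d)
  cg₁ : ContinuousOn g₁ (Icc c d)
  cg₂ : ContinuousOn g₂ (Icc c d)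
  df : ∀ t ∈ Ioo c d, HasDerivAt f (g t) t
  dg : ∀ t ∈ Ioo c d, HasDerivAt g (g₁ t) t
  dg₁ : ∀ t ∈ Ioo c d, HasDerivAt g₁ (g₂ t) t

lemma Phase.mono {f g g₁ g₂ : ℝ → ℝ} {c d x y : ℝ} (P : Phase f g g₁ g₂ c d) (hcx : c ≤ x)
    (hyd : y ≤ d) : Phase f g g₁ g₂ x y where
  cf := P.cf.mono (Icc_subset_Icc hcx hyd)
  cg := P.cg.mono (Icc_subset_Icc hcx hyd)
  cg₁ := P.cg₁.mono (Icc_subset_Icc hcx hyd)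
  cg₂ := P.cg₂.mono (Icc_subset_Icc hcx hyd)
  df t ht := P.df t (Ioo_subset_Ioo hcx hyd ht)
  dg t ht := P.dg t (Ioo_subset_Ioo hcx hyd ht)
  dg₁ t ht := P.dg₁ t (Ioo_subset_Ioo hcx hyd ht)

lemma Phase.neg {f g g₁ g₂ : ℝ → ℝ} {c d : ℝ} (P : Phase f g g₁ g₂ c d) :
    Phase (fun t => -f t) (fun t => -g t) (fun t => -g₁ t) (fun t => -g₂ t) c d where
  cf := P.cf.neg
  cg := P.cg.neg
  cg₁ := P.cg₁.neg
  cg₂ := P.cg₂.neg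
  df t ht := (P.df t ht).fun_neg
  dg t ht := (P.dg t ht).fun_neg
  dg₁ t ht := (P.dg₁ t ht).fun_neg

lemma Phase.reflect {f g g₁ g₂ : ℝ → ℝ} {c d : ℝ} (P : Phase f g g₁ g₂ c d) :
    Phase (fun t => f (-t)) (fun t => -g (-t)) (fun t => g₁ (-t)) (fun t => -g₂ (-t))
      (-d) (-c) := by
  have hI : ∀ t ∈ Icc (-d) (-c), -t ∈ Icc c d := fun t ht =>
    ⟨by linarith [ht.2], by linarith [ht.1]⟩
  have hO : ∀ t ∈ Ioo (-d) (-c), -t ∈ Ioo c d := fun t ht =>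
    ⟨by linarith [ht.2], by linarith [ht.1]⟩
  have hn : ContinuousOn (fun t : ℝ => -t) (Icc (-d) (-c)) := continuousOn_id.neg
  have hd : ∀ {h h' : ℝ → ℝ}, (∀ t ∈ Ioo c d, HasDerivAt h (h' t) t) →
      ∀ t ∈ Ioo (-d) (-c), HasDerivAt (fun s => h (-s)) (-h' (-t)) t := by
    intro h h' H t ht
    have := (H (-t) (hO t ht)).comp t (hasDerivAt_neg t)
    simpa [Function.comp_def] using this
  refine ⟨P.cf.comp hn hI, (P.cg.comp hn hI).neg, P.cg₁.comp hn hI, (P.cg₂.comp hn hI).neg,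
    hd P.df, fun t ht => ?_, hd P.dg₁⟩
  simpa using (hd P.dg t ht).fun_neg

lemma sign_of_ne_zero {h : ℝ → ℝ} {c d : ℝ} (hc : ContinuousOn h (Icc c d))
    (hne : ∀ t ∈ Ioo c d, h t ≠ 0) : (∀ t ∈ Ioo c d, 0 < h t) ∨ (∀ t ∈ Ioo c d, h t < 0) := by
  by_contra! H
  obtain ⟨⟨x, hx, hx0⟩, y, hy, hy0⟩ := H
  obtain ⟨z, hz, hz0⟩ := isPreconnected_Ioo.intermediate_value hx hy
    (hc.mono Ioo_subset_Icc_self) ⟨hx0, hy0⟩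
  exact hne z hz hz0

lemma strictMonoOn_of_hasDerivAt {h h' : ℝ → ℝ} {c d : ℝ} (hc : ContinuousOn h (Icc c d))
    (hd : ∀ t ∈ Ioo c d, HasDerivAt h (h' t) t) (hpos : ∀ t ∈ Ioo c d, 0 < h' t) :
    StrictMonoOn h (Icc c d) := by
  refine strictMonoOn_of_deriv_pos (convex_Icc c d) hc fun t ht => ?_
  rw [interior_Icc] at ht
  rw [(hd t ht).deriv]; exact hpos t ht

/-- Cutting at `t`: the trivial bound on `[c, t]`, the first derivative test on `[t, d]`. -/
lemma split_bound {f g g₁ g₂ : ℝ → ℝ} {c d x y t : ℝ} (P : Phase f g g₁ g₂ c d)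
    (hmono : StrictMonoOn g (Icc c d)) (hg₁ : ∀ t ∈ Ioo c d, 0 < g₁ t)
    (ht : t ∈ Icc c d) (hgt : 0 < g t) (hcx : c ≤ x) (hxy : x ≤ y) (hyd : y ≤ d) :
    ‖∫ s in x..y, osc f s‖ ≤ (t - c) + 3 / g t := by
  have tail : ∀ z, t ≤ z → z ≤ y → ‖∫ s in z..y, osc f s‖ ≤ 3 / g t := by
    intro z htz hzy
    have hcz : c ≤ z := ht.1.trans htz
    have Q := P.mono hcz hyd
    refine vdc hzy Q.cf Q.cg Q.cg₁ Q.df Q.dg hgt (fun s hs => ?_)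
      (fun s hs => (hg₁ s (Ioo_subset_Ioo hcz hyd hs)).le)
    exact hmono.monotoneOn ht (Icc_subset_Icc hcz hyd hs) (htz.trans hs.1)
  have h3 : 0 < 3 / g t := by positivity
  rcases le_total y t with hyt | hty
  · have := norm_integral_osc_le (f := f) hxy
    linarith
  rcases le_total t x with htx | hxt
  · have := tail x htx hxy
    linarith [ht.1]
  · have hx : x ∈ Icc c d := ⟨hcx, hxy.trans hyd⟩
    have hy : y ∈ Icc c d := ⟨hcx.trans hxy, hyd⟩
    rw [← intervalIntegral.integral_add_adjacent_intervals
      (osc_intervalIntegrable P.cf hx ht) (osc_intervalIntegrable P.cf ht hy)]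
    refine (norm_add_le _ _).trans ?_
    have h1 := norm_integral_osc_le (f := f) hxt
    have h2 := tail t le_rfl hty
    linarith

lemma integral_dens_eq_length {g g₁ : ℝ → ℝ} {c t : ℝ} (hct : c ≤ t)
    (h : ∀ s ∈ Ioo c t, g s ^ 2 ≤ g₁ s) : ∫ s in c..t, dens g g₁ s = t - c := by
  rw [intervalIntegral.integral_congr_Ioo_of_le (g := fun _ => (1 : ℝ)) hct]
  · simp
  · intro s hs
    by_cases h0 : g s = 0
    · simp [dens, h0]
    · have hp : 0 < g s ^ 2 := by positivity
      simp only [dens, h0, if_false]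
      refine min_eq_left ?_
      rw [le_div_iff₀ hp, one_mul]
      exact (h s hs).trans (le_abs_self _)

/-- The estimate on a piece on which `f' > 0`, `f'' > 0` and `f'''` has constant sign. An end point
at which `f'` vanishes contributes `1 / |0| = 0` to the bound. -/
lemma core_pos {f g g₁ g₂ : ℝ → ℝ} {c d x y : ℝ} (P : Phase f g g₁ g₂ c d) (hcd : c < d)
    (hg : ∀ t ∈ Ioo c d, 0 < g t) (hg₁ : ∀ t ∈ Ioo c d, 0 < g₁ t)
    (hg₂ : (∀ t ∈ Ioo c d, 0 < g₂ t) ∨ (∀ t ∈ Ioo c d, g₂ t < 0))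
    (hcx : c ≤ x) (hxy : x ≤ y) (hyd : y ≤ d) :
    ‖∫ s in x..y, osc f s‖ ≤ 4 * ((∫ s in c..d, dens g g₁ s) + 1 / |g c| + 1 / |g d|) := by
  have hmono := strictMonoOn_of_hasDerivAt P.cg P.dg hg₁
  have hcI : c ∈ Icc c d := left_mem_Icc.2 hcd.le
  have hdI : d ∈ Icc c d := right_mem_Icc.2 hcd.le
  have hgd : 0 < g d := by
    have hm : (c + d) / 2 ∈ Ioo c d := ⟨by linarith, by linarith⟩
    exact (hg _ hm).trans (hmono (Ioo_subset_Icc_self hm) hdI hm.2)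
  have hgc : 0 ≤ g c := by
    have hcl : c ∈ closure (Ioo c d) := by rw [closure_Ioo hcd.ne]; exact hcI
    have := (P.cg c hcI).mono (Ioo_subset_Icc_self (a := c) (b := d))
    have := mem_closure_iff_nhdsWithin_neBot.1 hcl
    exact ge_of_tendsto ‹ContinuousWithinAt g (Ioo c d) c›
      (eventually_nhdsWithin_of_forall fun t ht => (hg t ht).le)
  have hI : 0 ≤ ∫ s in c..d, dens g g₁ s :=
    intervalIntegral.integral_nonneg hcd.le fun s _ => dens_nonneg _ _ _
  have hdint : ∀ {u v}, u ∈ Icc c d → v ∈ Icc c d → IntervalIntegrable (dens g g₁) volume u v :=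
    fun hu hv => dens_intervalIntegrable P.cg P.cg₁ hu hv
  have hw : 0 < 1 / |g d| := by positivity
  have habsd : |g d| = g d := abs_of_pos hgd
  have htriv : ‖∫ s in x..y, osc f s‖ ≤ d - c :=
    (norm_integral_osc_le hxy).trans (by linarith)
  rcases hgc.lt_or_eq with hgc | hgc
  · -- `f'` is bounded below by `f'(c) > 0`
    have := split_bound P hmono hg₁ hcI hgc hcx hxy hyd
    rw [abs_of_pos hgc]
    have h3 : 3 / g c = 3 * (1 / g c) := by ring
    have : 0 < 1 / g c := by positivity
    linarith
  have hw0 : 1 / |g c| = 0 := by simp [← hgc]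
  rw [hw0, habsd, add_zero]
  rw [habsd] at hw
  rcases hg₂ with hg₂ | hg₂
  · -- `f'` is convex and vanishes at `c`
    have hmono₁ := strictMonoOn_of_hasDerivAt P.cg₁ P.dg₁ hg₂
    rcases le_or_gt ((d - c) * g d) 1 with hle | hgt
    · have : d - c ≤ 1 / g d := by rwa [le_div_iff₀ hgd]
      linarith
    · obtain ⟨t, ht, ht1⟩ : (1 : ℝ) ∈ (fun s => (s - c) * g s) '' Icc c d := by
        refine intermediate_value_Icc hcd.le
          ((continuousOn_id.sub continuousOn_const).mul P.cg) ⟨by simp, hgt.le⟩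
      simp only at ht1
      have hct : c < t := by
        rcases ht.1.lt_or_eq with h | h
        · exact h
        · rw [← h] at ht1; simp at ht1
      have hgt0 : 0 < g t := by
        by_contra! h
        nlinarith
      have hdens : ∫ s in c..t, dens g g₁ s = t - c := by
        refine integral_dens_eq_length hct.le fun s hs => ?_
        have hsI : s ∈ Icc c d := ⟨hs.1.le, hs.2.le.trans ht.2⟩
        obtain ⟨ξ, hξ, hξe⟩ := exists_hasDerivAt_eq_slope g g₁ hs.1
          (P.cg.mono (Icc_subset_Icc le_rfl hsI.2))
          (fun r hr => P.dg r (Ioo_subset_Ioo le_rfl hsI.2 hr))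
        have hsc : 0 < s - c := sub_pos.2 hs.1
        have hgs : 0 < g s := hg s ⟨hs.1, hs.2.trans_le ht.2⟩
        have h1 : g₁ ξ ≤ g₁ s :=
          hmono₁.monotoneOn ⟨hξ.1.le, hξ.2.le.trans hsI.2⟩ hsI hξ.2.le
        rw [hξe, ← hgc, sub_zero, div_le_iff₀ hsc] at h1
        have h2 : g s < g t := hmono hsI ht hs.2
        have h3 : (s - c) * g s ≤ 1 := by
          rw [← ht1]
          exact mul_le_mul (by linarith [hs.2]) h2.le hgs.le (by linarith)
        -- `(s - c) g² ≤ g ≤ (s - c) g'`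
        have h4 : (s - c) * g s ^ 2 ≤ (s - c) * g₁ s := by nlinarith
        exact le_of_mul_le_mul_left h4 hsc
      have hsplit := intervalIntegral.integral_add_adjacent_intervals (hdint hcI ht) (hdint ht hdI)
      have hrest : 0 ≤ ∫ s in t..d, dens g g₁ s :=
        intervalIntegral.integral_nonneg ht.2 fun s _ => dens_nonneg _ _ _
      have hb := split_bound P hmono hg₁ ht hgt0 hcx hxy hyd
      have h3 : 3 / g t = 3 * (t - c) := by
        rw [div_eq_iff hgt0.ne', mul_assoc, ht1, mul_one]
      linarith
  · -- `f'` is concave and vanishes at `c`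
    have hanti₁ : StrictMonoOn (fun s => -g₁ s) (Icc c d) :=
      strictMonoOn_of_hasDerivAt P.cg₁.neg (fun s hs => (P.dg₁ s hs).fun_neg)
        (fun s hs => neg_pos.2 (hg₂ s hs))
    have hle₁ : ∀ r ∈ Icc c d, ∀ s ∈ Icc c d, r ≤ s → g₁ s ≤ g₁ r := fun r hr s hs hrs =>
      neg_le_neg_iff.1 (hanti₁.monotoneOn hr hs hrs)
    by_cases hall : ∀ s ∈ Ioo c d, g s ^ 2 ≤ g₁ s
    · rw [integral_dens_eq_length hcd.le hall]
      linarith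
    push Not at hall
    obtain ⟨s, hs, hslt⟩ := hall
    have hsI := Ioo_subset_Icc_self hs
    have hg₁c : 0 < g₁ c := (hg₁ s hs).trans_le (hle₁ c hcI s hsI hs.1.le)
    obtain ⟨t, ht', ht0⟩ : (0 : ℝ) ∈ (fun r => g₁ r - g r ^ 2) '' Icc c s := by
      refine intermediate_value_Icc' hs.1.le
        ((P.cg₁.sub (P.cg.pow 2)).mono (Icc_subset_Icc le_rfl hs.2.le)) ⟨?_, ?_⟩
      · change g₁ s - g s ^ 2 ≤ 0
        linarith
      · change 0 ≤ g₁ c - g c ^ 2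
        rw [← hgc]; simpa using hg₁c.le
    simp only [sub_eq_zero] at ht0
    have ht : t ∈ Icc c d := ⟨ht'.1, ht'.2.trans hs.2.le⟩
    have htd : t < d := ht'.2.trans_lt hs.2
    have hct : c < t := by
      rcases ht.1.lt_or_eq with h | h
      · exact h
      · rw [← h, ← hgc] at ht0; simp at ht0; linarith
    have hgt0 : 0 < g t := hg t ⟨hct, htd⟩
    have hdens : ∫ r in c..t, dens g g₁ r = t - c := by
      refine integral_dens_eq_length hct.le fun r hr => ?_
      have hrI : r ∈ Icc c d := ⟨hr.1.le, hr.2.le.trans ht.2⟩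
      have h1 := hle₁ r hrI t ht hr.2.le
      have h2 : g r < g t := hmono hrI ht hr.2
      have h3 : 0 < g r := hg r ⟨hr.1, hr.2.trans htd⟩
      nlinarith
    have hgpos : ∀ r ∈ Icc t d, 0 < g r := fun r hr =>
      hgt0.trans_le (hmono.monotoneOn ht ⟨ht.1.trans hr.1, hr.2⟩ hr.1)
    have Q := P.mono ht.1 (le_refl d)
    have hquot : ContinuousOn (fun r => g₁ r / g r ^ 2) (Icc t d) :=
      Q.cg₁.div (Q.cg.pow 2) fun r hr => (pow_pos (hgpos r hr) 2).ne'
    have hdens' : ∫ r in t..d, dens g g₁ r = 1 / g t - 1 / g d := by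
      rw [intervalIntegral.integral_congr_Ioo_of_le (g := fun r => g₁ r / g r ^ 2) htd.le]
      · have := intervalIntegral.integral_eq_sub_of_hasDerivAt_of_le htd.le
          (f := fun r => -(g r)⁻¹) (f' := fun r => g₁ r / g r ^ 2)
          (Q.cg.inv₀ fun r hr => (hgpos r hr).ne').neg
          (fun r hr => by
            have := ((Q.dg r hr).fun_inv (hgpos r (Ioo_subset_Icc_self hr)).ne').fun_neg
            simpa [neg_div] using this)
          (by rw [← uIcc_of_le htd.le] at hquot; exact hquot.intervalIntegrable)
        rw [this]; ring
      · intro r hr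
        have hrI : r ∈ Icc c d := ⟨ht.1.trans hr.1.le, hr.2.le⟩
        have h0 : 0 < g r := hgpos r (Ioo_subset_Icc_self hr)
        have h1 := hle₁ t ht r hrI hr.1.le
        have h2 : g t < g r := hmono ht hrI hr.1
        have h3 : 0 < g₁ r := hg₁ r ⟨hct.trans hr.1, hr.2⟩
        simp only [dens, h0.ne', if_false, abs_of_pos h3]
        refine min_eq_right ?_
        rw [div_le_one (by positivity)]
        nlinarith
    have hsplit := intervalIntegral.integral_add_adjacent_intervals (hdint hcI ht) (hdint ht hdI)
    have hb := split_bound P hmono hg₁ ht hgt0 hcx hxy hyd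
    have h3 : 3 / g t = 3 * (1 / g t) := by ring
    have : 0 < 1 / g t := by positivity
    linarith

lemma norm_integral_osc_neg (f : ℝ → ℝ) (x y : ℝ) :
    ‖∫ s in x..y, osc (fun t => -f t) s‖ = ‖∫ s in x..y, osc f s‖ := by
  simp_rw [osc_neg]
  have : ∫ s in x..y, (starRingEnd ℂ) (osc f s) = (starRingEnd ℂ) (∫ s in x..y, osc f s) := by
    simp only [intervalIntegral, integral_conj, map_sub]
  rw [this, RCLike.norm_conj]

/-- The estimate on a piece without interior zeros of `f'`, `f''`, `f'''`. -/
lemma core {f g g₁ g₂ : ℝ → ℝ} {c d x y : ℝ} (P : Phase f g g₁ g₂ c d) (hcd : c < d)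
    (hg : ∀ t ∈ Ioo c d, g t ≠ 0) (hg₁ : ∀ t ∈ Ioo c d, g₁ t ≠ 0)
    (hg₂ : ∀ t ∈ Ioo c d, g₂ t ≠ 0) (hcx : c ≤ x) (hxy : x ≤ y) (hyd : y ≤ d) :
    ‖∫ s in x..y, osc f s‖ ≤ 4 * ((∫ s in c..d, dens g g₁ s) + 1 / |g c| + 1 / |g d|) := by
  -- replacing `f` by `-f`, one may assume `f'' > 0`
  wlog hpos : ∀ t ∈ Ioo c d, 0 < g₁ t generalizing f g g₁ g₂ with H
  · have hneg := (sign_of_ne_zero P.cg₁ hg₁).resolve_left hpos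
    have := H P.neg (fun t ht => neg_ne_zero.2 (hg t ht)) (fun t ht => neg_ne_zero.2 (hg₁ t ht))
      (fun t ht => neg_ne_zero.2 (hg₂ t ht)) (fun t ht => neg_pos.2 (hneg t ht))
    rw [norm_integral_osc_neg] at this
    simpa [dens] using this
  rcases sign_of_ne_zero P.cg hg with h | h
  · exact core_pos P hcd h hpos (sign_of_ne_zero P.cg₂ hg₂) hcx hxy hyd
  · -- reflecting the interval keeps `f'' > 0` and makes `f'` positive
    have hO : ∀ t ∈ Ioo (-d) (-c), -t ∈ Ioo c d := fun t ht =>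
      ⟨by linarith [ht.2], by linarith [ht.1]⟩
    have R := P.reflect
    have := core_pos R (neg_lt_neg hcd) (fun t ht => neg_pos.2 (h _ (hO t ht)))
      (fun t ht => hpos _ (hO t ht))
      (sign_of_ne_zero R.cg₂ fun t ht => neg_ne_zero.2 (hg₂ _ (hO t ht)))
      (neg_le_neg hyd) (neg_le_neg hxy) (neg_le_neg hcx)
    have e1 : ∫ s in -y..-x, osc (fun t => f (-t)) s = ∫ s in x..y, osc f s := by
      have := intervalIntegral.integral_comp_neg (a := -y) (b := -x) (osc f)
      simpa [osc] using this
    have e2 : ∫ s in -d..-c, dens (fun t => -g (-t)) (fun t => g₁ (-t)) s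
        = ∫ s in c..d, dens g g₁ s := by
      have := intervalIntegral.integral_comp_neg (a := -d) (b := -c) (dens g g₁)
      simpa [dens] using this
    rw [e1, e2] at this
    simp only [neg_neg, abs_neg] at this
    linarith

/-! ### Finiteness of the cutting points, and summation over the pieces -/

lemma finite_zeros_of_deriv {h h' : ℝ → ℝ} {a b : ℝ} (hc : ContinuousOn h (Icc a b))
    (hd : ∀ t ∈ Ioo a b, HasDerivAt h (h' t) t) (hfin : {x ∈ Icc a b | h' x = 0}.Finite) :
    {x ∈ Icc a b | h x = 0}.Finite := by
  classical
  -- by Rolle, the number of zeros of `h'` below `z` is strictly increasing in the zero `z` of `h`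
  set N : ℝ → ℕ := fun z => (hfin.toFinset.filter (· < z)).card with hN
  have hlt : ∀ z₁ ∈ {x ∈ Icc a b | h x = 0}, ∀ z₂ ∈ {x ∈ Icc a b | h x = 0}, z₁ < z₂ →
      N z₁ < N z₂ := by
    rintro z₁ ⟨hz₁, h1⟩ z₂ ⟨hz₂, h2⟩ hz
    obtain ⟨w, hw, hw0⟩ := exists_hasDerivAt_eq_zero hz (hc.mono (Icc_subset_Icc hz₁.1 hz₂.2))
      (h1.trans h2.symm) fun t ht => hd t (Ioo_subset_Ioo hz₁.1 hz₂.2 ht)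
    refine Finset.card_lt_card (Finset.ssubset_iff_of_subset ?_ |>.2 ⟨w, ?_, ?_⟩)
    · intro t ht
      rw [Finset.mem_filter] at ht ⊢
      exact ⟨ht.1, ht.2.trans hz⟩
    · rw [Finset.mem_filter, Set.Finite.mem_toFinset]
      exact ⟨⟨⟨hz₁.1.trans hw.1.le, hw.2.le.trans hz₂.2⟩, hw0⟩, hw.2⟩
    · rw [Finset.mem_filter]
      exact fun H => absurd H.2 (not_lt.2 hw.1.le)
  refine Set.Finite.of_finite_image (f := N) ?_ ?_
  · refine (Set.finite_Iic (hfin.toFinset.card)).subset ?_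
    rintro _ ⟨z, _, rfl⟩
    exact Finset.card_filter_le _ _
  · intro z₁ h1 z₂ h2 he
    rcases lt_trichotomy z₁ z₂ with h | h | h
    · exact absurd he (hlt z₁ h1 z₂ h2 h).ne
    · exact h
    · exact absurd he (hlt z₂ h2 z₁ h1 h).ne'

/-- Summation of the estimates on the pieces cut out by a finite set `K` containing all zeros of
`f'`, `f''`, `f'''`. The two differences of partial sums count the left and the right end points
of the pieces; this form of the bound is additive under cutting an interval. -/
lemma glue {f g g₁ g₂ : ℝ → ℝ} {a b : ℝ} (P : Phase f g g₁ g₂ a b) (K : Finset ℝ)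
    (hK : ∀ t ∈ Icc a b, g t = 0 ∨ g₁ t = 0 ∨ g₂ t = 0 → t ∈ K) :
    ∀ (n : ℕ) (c d : ℝ), (K.filter fun z => c < z ∧ z < d).card = n → c ∈ K → d ∈ K →
      a ≤ c → c < d → d ≤ b → ∀ x y, c ≤ x → x ≤ y → y ≤ d →
      ‖∫ s in x..y, osc f s‖ ≤ 4 * ((∫ s in c..d, dens g g₁ s) +
        ((∑ z ∈ K with z < d, 1 / |g z|) - ∑ z ∈ K with z < c, 1 / |g z|) +
        ((∑ z ∈ K with z ≤ d, 1 / |g z|) - ∑ z ∈ K with z ≤ c, 1 / |g z|)) := by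
  intro n
  induction n using Nat.strong_induction_on with
  | _ n ih =>
  intro c d hn hcK hdK hac hcd hdb x y hcx hxy hyd
  by_cases hne : (K.filter fun z => c < z ∧ z < d).Nonempty
  · obtain ⟨z, hz⟩ := hne
    obtain ⟨hzK, hcz, hzd⟩ := Finset.mem_filter.1 hz
    have hc1 : (K.filter fun w => c < w ∧ w < z).card < n := by
      rw [← hn]
      refine Finset.card_lt_card (Finset.ssubset_iff_of_subset ?_ |>.2 ⟨z, hz, by simp⟩)
      intro w hw
      rw [Finset.mem_filter] at hw ⊢
      exact ⟨hw.1, hw.2.1, hw.2.2.trans hzd⟩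
    have hc2 : (K.filter fun w => z < w ∧ w < d).card < n := by
      rw [← hn]
      refine Finset.card_lt_card (Finset.ssubset_iff_of_subset ?_ |>.2 ⟨z, hz, by simp⟩)
      intro w hw
      rw [Finset.mem_filter] at hw ⊢
      exact ⟨hw.1, hcz.trans hw.2.1, hw.2.2⟩
    have I1 := ih _ hc1 c z rfl hcK hzK hac hcz (hzd.le.trans hdb)
    have I2 := ih _ hc2 z d rfl hzK hdK (hac.trans hcz.le) hzd hdb
    have hcI : c ∈ Icc a b := ⟨hac, hcd.le.trans hdb⟩
    have hdI : d ∈ Icc a b := ⟨hac.trans hcd.le, hdb⟩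
    have hzI : z ∈ Icc a b := ⟨hac.trans hcz.le, hzd.le.trans hdb⟩
    have hxI : x ∈ Icc a b := ⟨hac.trans hcx, (hxy.trans hyd).trans hdb⟩
    have hyI : y ∈ Icc a b := ⟨hxI.1.trans hxy, hyd.trans hdb⟩
    have hsplit := intervalIntegral.integral_add_adjacent_intervals
      (dens_intervalIntegrable P.cg P.cg₁ hcI hzI) (dens_intervalIntegrable P.cg P.cg₁ hzI hdI)
    have N1 := (norm_nonneg _).trans (I1 c c le_rfl le_rfl hcz.le)
    have N2 := (norm_nonneg _).trans (I2 z z le_rfl le_rfl hzd.le)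
    rcases le_total y z with hyz | hzy
    · have := I1 x y hcx hxy hyz
      linarith
    rcases le_total z x with hzx | hxz
    · have := I2 x y hzx hxy hyd
      linarith
    · rw [← intervalIntegral.integral_add_adjacent_intervals
        (osc_intervalIntegrable P.cf hxI hzI) (osc_intervalIntegrable P.cf hzI hyI)]
      refine (norm_add_le _ _).trans ?_
      have h1 := I1 x z hcx hxz le_rfl
      have h2 := I2 z y le_rfl hzy hyd
      linarith
  · have hno : ∀ t ∈ Ioo c d, t ∉ K := fun t ht htK =>
      hne ⟨t, Finset.mem_filter.2 ⟨htK, ht.1, ht.2⟩⟩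
    have hI : ∀ t ∈ Ioo c d, t ∈ Icc a b := fun t ht =>
      ⟨hac.trans ht.1.le, ht.2.le.trans hdb⟩
    have hb := core (P.mono hac hdb) hcd
      (fun t ht h0 => hno t ht (hK t (hI t ht) (Or.inl h0)))
      (fun t ht h0 => hno t ht (hK t (hI t ht) (Or.inr (Or.inl h0))))
      (fun t ht h0 => hno t ht (hK t (hI t ht) (Or.inr (Or.inr h0)))) hcx hxy hyd
    have hl : 1 / |g c| + ∑ z ∈ K with z < c, 1 / |g z| ≤ ∑ z ∈ K with z < d, 1 / |g z| := by
      rw [← Finset.sum_insert (s := K.filter (· < c)) (f := fun z => 1 / |g z|) (by simp)]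
      refine Finset.sum_le_sum_of_subset_of_nonneg ?_ fun _ _ _ => by positivity
      intro w hw
      rw [Finset.mem_insert, Finset.mem_filter] at hw
      rw [Finset.mem_filter]
      rcases hw with rfl | hw
      · exact ⟨hcK, hcd⟩
      · exact ⟨hw.1, hw.2.trans hcd⟩
    have hr : 1 / |g d| + ∑ z ∈ K with z ≤ c, 1 / |g z| ≤ ∑ z ∈ K with z ≤ d, 1 / |g z| := by
      rw [← Finset.sum_insert (s := K.filter (· ≤ c)) (f := fun z => 1 / |g z|) (by simp [hcd])]
      refine Finset.sum_le_sum_of_subset_of_nonneg ?_ fun _ _ _ => by positivity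
      intro w hw
      rw [Finset.mem_insert, Finset.mem_filter] at hw
      rw [Finset.mem_filter]
      rcases hw with rfl | hw
      · exact ⟨hdK, le_rfl⟩
      · exact ⟨hw.1, hw.2.trans hcd.le⟩
    linarith

/-! ### The amplitude -/

/-- Removal of the amplitude by partial integration against the primitive of `e^{if}`. -/
lemma amplitude {f : ℝ → ℝ} {φ : ℝ → ℂ} {a b M : ℝ} (hab : a < b)
    (hf : ContinuousOn f (Icc a b)) (hφ : ContDiffOn ℝ 1 φ (Icc a b))
    (hM : ∀ x ∈ Icc a b, ‖∫ s in a..x, osc f s‖ ≤ M) :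
    ‖∫ x in a..b, osc f x * φ x‖ ≤
      M * (sSup ((fun x => ‖φ x‖) '' Icc a b) + ∫ x in a..b, ‖derivWithin φ (Icc a b) x‖) := by
  have hu : uIcc a b = Icc a b := uIcc_of_le hab.le
  have haI : a ∈ Icc a b := left_mem_Icc.2 hab.le
  have hbI : b ∈ Icc a b := right_mem_Icc.2 hab.le
  have hM0 : 0 ≤ M := (norm_nonneg _).trans (hM a haI)
  have hmm : Ioo (min a b) (max a b) = Ioo a b := by rw [min_eq_left hab.le, max_eq_right hab.le]
  have hosc := osc_continuousOn hf
  have hdφ : ContinuousOn (derivWithin φ (Icc a b)) (Icc a b) :=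
    hφ.continuousOn_derivWithin (uniqueDiffOn_Icc hab) le_rfl
  have hFc : ContinuousOn (fun x => ∫ s in a..x, osc f s) (uIcc a b) :=
    intervalIntegral.continuousOn_primitive_interval (by rw [hu]; exact hosc.integrableOn_Icc)
  have parts := intervalIntegral.integral_mul_deriv_eq_deriv_mul_of_hasDerivAt
    (a := a) (b := b) (u := φ) (v := fun x => ∫ s in a..x, osc f s)
    (u' := derivWithin φ (Icc a b)) (v' := osc f)
    (by rw [hu]; exact hφ.continuousOn) hFc
    (by
      rw [hmm]; intro t ht
      exact (hφ.differentiableOn one_ne_zero t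
        (Ioo_subset_Icc_self ht)).hasDerivWithinAt.hasDerivAt (Icc_mem_nhds ht.1 ht.2))
    (by
      rw [hmm]; intro t ht
      have hn : Icc a b ∈ nhds t := Icc_mem_nhds ht.1 ht.2
      exact intervalIntegral.integral_hasDerivAt_right
        (osc_intervalIntegrable hf haI (Ioo_subset_Icc_self ht))
        ⟨Icc a b, hn, hosc.aestronglyMeasurable measurableSet_Icc⟩ (hosc.continuousAt hn))
    (by rw [← hu] at hdφ; rw [← hu]; exact hdφ.intervalIntegrable)
    (osc_intervalIntegrable hf haI hbI)
  have hcomm : ∫ x in a..b, osc f x * φ x = ∫ x in a..b, φ x * osc f x := by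
    simp_rw [mul_comm]
  rw [hcomm, parts, intervalIntegral.integral_same, mul_zero, sub_zero]
  refine (norm_sub_le _ _).trans ?_
  have hbdd : BddAbove ((fun x => ‖φ x‖) '' Icc a b) :=
    (isCompact_Icc.image_of_continuousOn hφ.continuousOn.norm).bddAbove
  have hsup : ‖φ b‖ ≤ sSup ((fun x => ‖φ x‖) '' Icc a b) := le_csSup hbdd ⟨b, hbI, rfl⟩
  have h1 : ‖φ b * ∫ s in a..b, osc f s‖ ≤ M * sSup ((fun x => ‖φ x‖) '' Icc a b) := by
    rw [norm_mul, mul_comm M]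
    exact mul_le_mul hsup (hM b hbI) (norm_nonneg _) ((norm_nonneg _).trans hsup)
  have h2 : ‖∫ x in a..b, derivWithin φ (Icc a b) x * ∫ s in a..x, osc f s‖ ≤
      M * ∫ x in a..b, ‖derivWithin φ (Icc a b) x‖ := by
    rw [← intervalIntegral.integral_const_mul]
    refine intervalIntegral.norm_integral_le_of_norm_le hab.le ?_ ?_
    · refine Filter.Eventually.of_forall fun x hx => ?_
      rw [norm_mul, mul_comm M]
      exact mul_le_mul_of_nonneg_left (hM x (Ioc_subset_Icc_self hx)) (norm_nonneg _)
    · refine ContinuousOn.intervalIntegrable ?_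
      rw [hu]
      exact continuousOn_const.mul hdφ.norm
  rw [mul_add]
  exact add_le_add h1 h2

/-! ### The phase given by a `C³` function -/

lemma phase_of_contDiffOn {f : ℝ → ℝ} {a b : ℝ} (hab : a < b)
    (hf : ContDiffOn ℝ 3 f (Icc a b)) :
    Phase f (iteratedDerivWithin 1 f (Icc a b)) (iteratedDerivWithin 2 f (Icc a b))
      (iteratedDerivWithin 3 f (Icc a b)) a b := by
  have hu := uniqueDiffOn_Icc hab
  have hd : ∀ n : ℕ, n < 3 → ∀ t ∈ Ioo a b,
      HasDerivAt (iteratedDerivWithin n f (Icc a b))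
        (iteratedDerivWithin (n + 1) f (Icc a b) t) t := by
    intro n hn t ht
    rw [iteratedDerivWithin_succ]
    exact (hf.differentiableOn_iteratedDerivWithin (by exact_mod_cast hn) hu t
      (Ioo_subset_Icc_self ht)).hasDerivWithinAt.hasDerivAt (Icc_mem_nhds ht.1 ht.2)
  have hc : ∀ n : ℕ, n ≤ 3 → ContinuousOn (iteratedDerivWithin n f (Icc a b)) (Icc a b) :=
    fun n hn => hf.continuousOn_iteratedDerivWithin (by exact_mod_cast hn) hu
  refine ⟨hf.continuousOn, hc 1 (by norm_num), hc 2 (by norm_num), hc 3 le_rfl, ?_,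
    hd 1 (by norm_num), hd 2 (by norm_num)⟩
  have := hd 0 (by norm_num)
  rwa [iteratedDerivWithin_zero] at this

/-- **Theorem 1.2.** There is a universal constant `B > 0` with the following property. Let
`f : [a,b] → ℝ` be `C³` with `{x ∈ [a,b] : f'''(x) = 0}` finite, and let `φ : [a,b] → ℂ` be
`C¹`. Let `J` be the set of `x ∈ [a,b]` with `f'(x) ≠ 0` and (`x = a` or `x = b` or
`f''(x) = 0` or `f'''(x) = 0`). Then `J` is finite and
`|∫_a^b e^{i f} φ| ≤ B (‖φ‖_∞ + ‖φ'‖_{L¹})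
  (∫_a^b min(1, |f''|/(f')²) + min(b-a, Σ_{x∈J} 1/|f'(x)|))`.
Here `|f''(x)|/(f'(x))²` is interpreted as `+∞` (so the min is `1`) where `f'(x) = 0`; the sum
over `J` is a `finsum`, equal to `0` when `J` is empty. -/
theorem stmt2 :
    ∃ B : ℝ, 0 < B ∧
      ∀ (a b : ℝ), a ≤ b →
      ∀ f : ℝ → ℝ, ContDiffOn ℝ 3 f (Icc a b) →
      {x ∈ Icc a b | iteratedDerivWithin 3 f (Icc a b) x = 0}.Finite →
      ∀ φ : ℝ → ℂ, ContDiffOn ℝ 1 φ (Icc a b) →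
      {x ∈ Icc a b | iteratedDerivWithin 1 f (Icc a b) x ≠ 0 ∧
          (x = a ∨ x = b ∨ iteratedDerivWithin 2 f (Icc a b) x = 0 ∨
            iteratedDerivWithin 3 f (Icc a b) x = 0)}.Finite ∧
      ‖∫ x in a..b, Complex.exp (Complex.I * (f x : ℂ)) * φ x‖ ≤
        B * (sSup ((fun x => ‖φ x‖) '' Icc a b) + ∫ x in a..b, ‖derivWithin φ (Icc a b) x‖) *
        ((∫ x in a..b,
            if iteratedDerivWithin 1 f (Icc a b) x = 0 then (1 : ℝ)
            else min 1 (|iteratedDerivWithin 2 f (Icc a b) x| /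
              (iteratedDerivWithin 1 f (Icc a b) x) ^ 2)) +
          min (b - a)
            (∑ᶠ x ∈ {x ∈ Icc a b | iteratedDerivWithin 1 f (Icc a b) x ≠ 0 ∧
                (x = a ∨ x = b ∨ iteratedDerivWithin 2 f (Icc a b) x = 0 ∨
                  iteratedDerivWithin 3 f (Icc a b) x = 0)},
              1 / |iteratedDerivWithin 1 f (Icc a b) x|)) := by
  refine ⟨8, by norm_num, fun a b hab f hf hfin φ hφ => ?_⟩
  rcases hab.eq_or_lt with rfl | hab
  · refine ⟨(Set.finite_singleton a).subset fun x hx => ?_, ?_⟩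
    · simpa using hx.1
    · simp only [intervalIntegral.integral_same, norm_zero, sub_self]
      refine mul_nonneg (mul_nonneg (by norm_num) (add_nonneg ?_ le_rfl))
        (add_nonneg le_rfl (le_min le_rfl ?_))
      · exact Real.sSup_nonneg (by rintro _ ⟨x, _, rfl⟩; exact norm_nonneg _)
      · exact finsum_nonneg fun x => finsum_nonneg fun _ => by positivity
  have P := phase_of_contDiffOn hab hf
  set g := iteratedDerivWithin 1 f (Icc a b)
  set g₁ := iteratedDerivWithin 2 f (Icc a b)
  set g₂ := iteratedDerivWithin 3 f (Icc a b)
  have haI : a ∈ Icc a b := left_mem_Icc.2 hab.le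
  have hbI : b ∈ Icc a b := right_mem_Icc.2 hab.le
  have hfin₁ := finite_zeros_of_deriv P.cg₁ P.dg₁ hfin
  have hfin₀ := finite_zeros_of_deriv P.cg P.dg hfin₁
  have hKfin : {x ∈ Icc a b | x = a ∨ x = b ∨ g x = 0 ∨ g₁ x = 0 ∨ g₂ x = 0}.Finite := by
    refine ((((Set.finite_singleton a).union (Set.finite_singleton b)).union hfin₀).union
      (hfin₁.union hfin)).subset ?_
    rintro x ⟨hx, h | h | h | h | h⟩
    · exact Or.inl (Or.inl (Or.inl h))
    · exact Or.inl (Or.inl (Or.inr h))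
    · exact Or.inl (Or.inr ⟨hx, h⟩)
    · exact Or.inr (Or.inl ⟨hx, h⟩)
    · exact Or.inr (Or.inr ⟨hx, h⟩)
  set K : Finset ℝ := hKfin.toFinset with hKdef
  set J : Set ℝ := {x ∈ Icc a b | g x ≠ 0 ∧ (x = a ∨ x = b ∨ g₁ x = 0 ∨ g₂ x = 0)} with hJ
  have hJK : J ⊆ {x ∈ Icc a b | x = a ∨ x = b ∨ g x = 0 ∨ g₁ x = 0 ∨ g₂ x = 0} := by
    rintro x ⟨hx, -, h⟩
    exact ⟨hx, by tauto⟩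
  refine ⟨hKfin.subset hJK, ?_⟩
  -- zeros of `f'` carry the weight `1 / |0| = 0`, so the sums over `J` and over `K` agree
  have hsum : ∑ᶠ x ∈ J, 1 / |g x| = ∑ x ∈ K, 1 / |g x| := by
    refine finsum_mem_eq_sum_of_inter_support_eq _ ?_
    ext x
    rw [hKdef, Set.Finite.coe_toFinset]
    constructor
    · rintro ⟨h1, h2⟩
      exact ⟨hJK h1, h2⟩
    · rintro ⟨⟨hx, h1⟩, h2⟩
      have hgx : g x ≠ 0 := by
        intro h0
        simp [h0] at h2
      exact ⟨⟨hx, hgx, by tauto⟩, h2⟩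
  rw [hsum]
  have hdensI : (∫ x in a..b, if g x = 0 then (1 : ℝ) else min 1 (|g₁ x| / (g x) ^ 2))
      = ∫ x in a..b, dens g g₁ x := rfl
  rw [hdensI]
  have hI0 : 0 ≤ ∫ x in a..b, dens g g₁ x :=
    intervalIntegral.integral_nonneg hab.le fun s _ => dens_nonneg _ _ _
  have hS0 : 0 ≤ ∑ x ∈ K, 1 / |g x| := Finset.sum_nonneg fun _ _ => by positivity
  have hsub : ∀ (p : ℝ → Prop) [DecidablePred p],
      (∑ z ∈ K with p z, 1 / |g z|) ≤ ∑ x ∈ K, 1 / |g x| := fun p _ =>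
    Finset.sum_le_sum_of_subset_of_nonneg (Finset.filter_subset _ _) fun _ _ _ => by positivity
  have hsub0 : ∀ (p : ℝ → Prop) [DecidablePred p], 0 ≤ (∑ z ∈ K with p z, 1 / |g z|) :=
    fun p _ => Finset.sum_nonneg fun _ _ => by positivity
  have hM : ∀ x ∈ Icc a b, ‖∫ s in a..x, osc f s‖ ≤
      8 * ((∫ x in a..b, dens g g₁ x) + min (b - a) (∑ x ∈ K, 1 / |g x|)) := by
    intro x hx
    have h1 := norm_integral_osc_le (f := f) hx.1
    have h2 := glue P K (fun t ht h => (Set.Finite.mem_toFinset _).2 ⟨ht, Or.inr (Or.inr h)⟩)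
      _ a b rfl ((Set.Finite.mem_toFinset _).2 ⟨haI, Or.inl rfl⟩)
      ((Set.Finite.mem_toFinset _).2 ⟨hbI, Or.inr (Or.inl rfl)⟩) le_rfl hab le_rfl
      a x le_rfl hx.1 hx.2
    have h3 := hsub (· < b)
    have h4 := hsub (· ≤ b)
    have h5 := hsub0 (· < a)
    have h6 := hsub0 (· ≤ a)
    rcases min_cases (b - a) (∑ x ∈ K, 1 / |g x|) with ⟨h, _⟩ | ⟨h, _⟩ <;> rw [h]
    · linarith [hx.2]
    · linarith
  have := amplitude hab P.cf hφ hM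
  calc _ ≤ _ := this
    _ = _ := by ring
end

section
/- Let g(x₁,...,xₙ) be a real analytic function defined on a neighborhood of the origin in ℝⁿ, not identically zero. Then there exist η > 0 and an integer k ≥ 0 such that for each (x₁,...,x_{n−1}) in the (n−1)-dimensional open ball B_{n−1}(0,η), either g(x₁,...,x_{n−1},xₙ) = 0 for all |xₙ| < η, or there is an integer 0 ≤ l ≤ k (which may depend on (x₁,...,x_{n−1})) such that for all |xₙ| < η one has 0 < (1/2)|∂_{xₙ}^l g(x₁,...,x_{n−1},0)| < |∂_{xₙ}^l g(x₁,...,x_{n−1},xₙ)| < 2|∂_{xₙ}^l g(x₁,...,x_{n−1},0)|. Moreover, the set of (x₁,...,x_{n−1}) ∈ B_{n−1}(0,η) for which g(x₁,...,x_{n−1},xₙ) = 0 for all |xₙ| < η has (n−1)-dimensional Lebesgue measure zero. -/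
open Set MeasureTheory

/-!
Near the origin one can write `g (x, t) = ∑ₖ bₖ(x) (t/δ)ᵏ`, where `b = (bₖ)ₖ` is a real analytic
map into the Banach space `ℓ¹` of absolutely summable sequences (`exists_line_expansion`). The
heart of the matter is that finitely many of the coefficients control all of them, uniformly in
`x`: there are `k` and `C` with `‖b x‖₁ ≤ C max_{l ≤ k} |b_l(x)|` near `0`
(`exists_dominating_coord`). Given this, if `b x ≠ 0` one picks `l ≤ k` with `|b_l(x)|` maximal. The
`l`-th derivative of `t ↦ ∑ₖ yₖ tᵏ` is `T_l(t) y` for an operator `T_l(t)` on `ℓ¹` which is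
continuous in `t` for the operator norm, and `T_l(0) y = l! y_l`; so `T_l(t) (b x)` differs from
`T_l(0) (b x)` by at most a small multiple of `C |b_l(x)|`, whatever `x` is
(`eventually_deriv_comparison`). If `b x = 0`, then `g (x, ·)` vanishes.

The uniform bound is a form of the Noetherian property of the ring of germs of analytic functions:
`b = ∑ᵢ b_{jᵢ} cᵢ` for finitely many indices `jᵢ` and analytic maps `cᵢ` with values in `ℓ¹`. More
generally, `isFinitelyRepresented` proves that, for a separating set `Φ` of functionals on a Banach
space `F`, finitely many germs `a_s` of analytic maps `E → F` satisfy `a_s = ∑ᵢ φᵢ(a_s) cᵢ` with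
`φᵢ ∈ Φ` and `cᵢ` analytic. The proof is Rückert's induction on the dimension of `E`. After the
reduction to one germ `a`, choose `φ₀ ∈ Φ` with `f = φ₀(a) ≢ 0`. Weierstrass division
`a = f q + ∑_{s < d} tˢ r_s` by `f` reduces the claim to the remainders `r_s`, which depend on one
variable less. Division of `F`-valued functions is done by inverting an operator on `ℓ¹(ℕ; F)` which
depends analytically on the parameters and is the identity at the origin (`division_normalized`).

The exceptional set is contained in the zero set of some `b_j` not vanishing identically near `0`,
which is a null set by Fubini's theorem (`exists_nhds_zeros_null`).
-/

open scoped Topology ENNReal NNReal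

/-! ### Absolutely summable sequences as coefficients of power series -/

/-- The Banach space `ℓ¹(ℕ; F)` of absolutely summable sequences in `F`. -/
abbrev SeqOne (F : Type*) [NormedAddCommGroup F] := lp (fun _ : ℕ => F) 1

namespace SeqOne

variable {F G : Type*} [NormedAddCommGroup F] [NormedSpace ℝ F]
  [NormedAddCommGroup G] [NormedSpace ℝ G]

lemma hasSum_norm {F : Type*} [NormedAddCommGroup F] (y : SeqOne F) :
    HasSum (fun k => ‖y k‖) ‖y‖ := by
  simpa using lp.hasSum_norm (p := 1) (by simp) y

/-- The inclusion of the `k`-th coordinate. -/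
noncomputable def single (k : ℕ) : F →L[ℝ] SeqOne F :=
  lp.singleContinuousLinearMap ℝ (fun _ : ℕ => F) 1 k

/-- The projection onto the `k`-th coordinate. -/
noncomputable def proj (k : ℕ) : SeqOne F →L[ℝ] F :=
  lp.evalCLM ℝ (fun _ : ℕ => F) 1 k

lemma proj_apply (k : ℕ) (y : SeqOne F) : proj k y = y k := rfl

lemma proj_single (k j : ℕ) (v : F) : proj k (single j v) = if k = j then v else 0 := by
  simp only [proj_apply, single, lp.singleContinuousLinearMap_apply, lp.single_apply]
  split_ifs with h
  · subst h; simp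
  · simp [h]

lemma norm_single_apply (k : ℕ) (v : F) : ‖single k v‖ = ‖v‖ := by
  simp [single, lp.norm_single]

lemma norm_single_le (k : ℕ) : ‖(single k : F →L[ℝ] SeqOne F)‖ ≤ 1 :=
  ContinuousLinearMap.opNorm_le_bound _ zero_le_one fun v => by simp [norm_single_apply]

lemma norm_proj_apply_le (k : ℕ) (y : SeqOne F) : ‖proj k y‖ ≤ ‖y‖ :=
  lp.norm_apply_le_norm one_ne_zero y k

lemma norm_proj_le (k : ℕ) : ‖(proj k : SeqOne F →L[ℝ] F)‖ ≤ 1 :=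
  ContinuousLinearMap.opNorm_le_bound _ zero_le_one fun v => by
    simpa using norm_proj_apply_le k v

lemma hasSum_coord (y : SeqOne F) : HasSum (fun k => single k (y k)) y :=
  lp.hasSum_single (by simp) y

lemma clm_ext {S T : SeqOne F →L[ℝ] G} (h : ∀ k v, S (single k v) = T (single k v)) : S = T :=
  lp.ext_continuousLinearMap (by simp) fun k => ContinuousLinearMap.ext fun v => h k v

variable [CompleteSpace G]

/-- Universal property of `ℓ¹`: a bounded family of continuous linear maps `F → G` extends to
`ℓ¹(ℕ; F) → G`. -/
noncomputable def lift (T : ℕ → F →L[ℝ] G) (C : ℝ) (hT : ∀ k, ‖T k‖ ≤ C) : SeqOne F →L[ℝ] G :=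
  have hs (y : SeqOne F) : Summable fun k => T k (y k) :=
    .of_norm_bounded ((hasSum_norm y).summable.mul_left C) fun k => (T k).le_of_opNorm_le (hT k) _
  LinearMap.mkContinuous
    { toFun y := ∑' k, T k (y k)
      map_add' y z := by
        simp only [lp.coeFn_add, Pi.add_apply, map_add]
        exact (hs y).tsum_add (hs z)
      map_smul' c y := by
        simp only [lp.coeFn_smul, Pi.smul_apply, map_smul, RingHom.id_apply]
        exact (hs y).tsum_const_smul c } C fun y => by
      exact tsum_of_norm_bounded ((hasSum_norm y).mul_left C)
        fun k => (T k).le_of_opNorm_le (hT k) _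

lemma lift_hasSum (T : ℕ → F →L[ℝ] G) (C : ℝ) (hT : ∀ k, ‖T k‖ ≤ C) (y : SeqOne F) :
    HasSum (fun k => T k (y k)) (lift T C hT y) :=
  (Summable.of_norm_bounded ((hasSum_norm y).summable.mul_left C)
    fun k => (T k).le_of_opNorm_le (hT k) _).hasSum

@[simp] lemma lift_single (T : ℕ → F →L[ℝ] G) (C : ℝ) (hT : ∀ k, ‖T k‖ ≤ C) (k : ℕ) (v : F) :
    lift T C hT (single k v) = T k v := by
  refine (lift_hasSum T C hT _).unique ?_
  convert _root_.hasSum_single k (f := fun j => T j ((single k v : SeqOne F) j)) ?_ using 1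
  · rw [← proj_apply, proj_single]; simp
  · intro j hj
    rw [← proj_apply, proj_single]; simp [hj]

lemma norm_lift_le (T : ℕ → F →L[ℝ] G) (C : ℝ) (hT : ∀ k, ‖T k‖ ≤ C) : ‖lift T C hT‖ ≤ C :=
  ContinuousLinearMap.opNorm_le_bound _ ((norm_nonneg _).trans (hT 0)) fun y =>
    (lift_hasSum T C hT y).tsum_eq ▸ tsum_of_norm_bounded ((hasSum_norm y).mul_left C)
      fun k => (T k).le_of_opNorm_le (hT k) _

variable [CompleteSpace F]

/-- The evaluation `y ↦ ∑ₖ tᵏ yₖ` of the power series with coefficients `y` at a point `t` with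
`|t| ≤ 1`, as a continuous linear map. For `|t| > 1`, where the series may diverge, it is `0`. -/
noncomputable def ev (t : ℝ) : SeqOne F →L[ℝ] F :=
  if h : |t| ≤ 1 then
    lift (fun k => t ^ k • ContinuousLinearMap.id ℝ F) 1 (fun k => by
      rw [norm_smul, norm_pow]
      exact mul_le_one₀ (pow_le_one₀ (norm_nonneg _) h) (norm_nonneg _)
        ContinuousLinearMap.norm_id_le)
  else 0

lemma ev_hasSum {t : ℝ} (h : |t| ≤ 1) (y : SeqOne F) : HasSum (fun k => t ^ k • y k) (ev t y) := by
  rw [ev, dif_pos h]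
  exact lift_hasSum _ _ _ y

lemma ev_single {t : ℝ} (h : |t| ≤ 1) (k : ℕ) (v : F) : ev t (single k v) = t ^ k • v := by
  rw [ev, dif_pos h]; simp

/-- The power series of `t ↦ ev t`, with values in the space of operators. -/
lemma ev_hasFPowerSeriesAt : HasFPowerSeriesAt (fun t => (ev t : SeqOne F →L[ℝ] F))
    (fun n => ContinuousMultilinearMap.mkPiRing ℝ (Fin n) (proj n)) 0 := by
  refine hasFPowerSeriesAt_iff.2 ?_
  filter_upwards [Metric.ball_mem_nhds (0 : ℝ) one_pos] with t ht
  replace ht : |t| < 1 := by simpa using ht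
  have hs : Summable fun n => t ^ n • (proj n : SeqOne F →L[ℝ] F) := by
    refine .of_norm_bounded (summable_geometric_of_lt_one (abs_nonneg t) ht) fun n => ?_
    rw [norm_smul, norm_pow]
    exact mul_le_of_le_one_right (by positivity) (norm_proj_le n)
  have h1 : ev (0 + t) = ∑' n, t ^ n • (proj n : SeqOne F →L[ℝ] F) := by
    ext y
    rw [zero_add]
    have h3 := hs.hasSum.mapL (ContinuousLinearMap.apply ℝ F y)
    simp only [ContinuousLinearMap.apply_apply, smul_apply, proj_apply] at h3
    exact (ev_hasSum ht.le y).unique h3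
  have h2 : ∀ n, FormalMultilinearSeries.coeff (fun n => ContinuousMultilinearMap.mkPiRing ℝ (Fin n)
      (proj n : SeqOne F →L[ℝ] F)) n = proj n := fun n => by
    simp [FormalMultilinearSeries.coeff]
  simp only [h1, h2]
  exact hs.hasSum

lemma ev_analyticAt : AnalyticAt ℝ (fun t => (ev t : SeqOne F →L[ℝ] F)) 0 :=
  ev_hasFPowerSeriesAt.analyticAt

lemma iteratedDeriv_ev_zero (l : ℕ) :
    iteratedDeriv l (fun t => (ev t : SeqOne F →L[ℝ] F)) 0 = (l.factorial : ℝ) • proj l := by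
  obtain ⟨r, hr⟩ := ev_hasFPowerSeriesAt (F := F)
  have := hr.factorial_smul (1 : ℝ) l
  rw [iteratedDeriv_eq_iteratedFDeriv, ← this]
  simp [Nat.cast_smul_eq_nsmul]

end SeqOne

/-! ### Expansion of an analytic map along a line -/

open SeqOne in
/-- The Taylor coefficients of `t ↦ a (x + t • w)` form an absolutely summable sequence depending
analytically on `x`, as a map into `ℓ¹`, once `w` is small. The power series of `b` is obtained from
that of `a` by rearranging the double series that expresses the change of origin. -/
lemma exists_line_expansion {E F : Type*} [NormedAddCommGroup E] [NormedSpace ℝ E]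
    [NormedAddCommGroup F] [NormedSpace ℝ F] [CompleteSpace F] {a : E → F}
    (ha : AnalyticAt ℝ a 0) :
    ∃ ε > (0 : ℝ), ∀ w : E, ‖w‖ < ε → ∃ b : E → SeqOne F, AnalyticAt ℝ b 0 ∧
      ∀ᶠ x in 𝓝 (0 : E), ∀ t : ℝ, |t| ≤ 1 → a (x + t • w) = ev t (b x) := by
  obtain ⟨p, R, hp⟩ := ha
  obtain ⟨r, hr0, hrR⟩ : ∃ r : ℝ≥0, 0 < r ∧ ((r + r : ℝ≥0) : ℝ≥0∞) < R := by
    obtain ⟨s, hs0, hs⟩ := ENNReal.lt_iff_exists_nnreal_btwn.1 hp.r_pos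
    refine ⟨s / 2, by simpa using hs0, by simpa using hs⟩
  refine ⟨r, hr0, fun w hw => ?_⟩
  have hrp : (r + r : ℝ≥0∞) < p.radius := by
    have := hrR.trans_le hp.r_le
    push_cast at this; exact this
  have hsum := p.changeOriginSeries_summable_aux₁ hrp
  -- `B k l` dominates the term of degree `k` in `w` and `l` in `x` of the expansion of `a (x + w)`
  let B : ℕ → ℕ → ℝ≥0 := fun k l => ‖p.changeOriginSeries k l‖₊ * r ^ l * r ^ k
  have hB : Summable (fun kl : ℕ × ℕ => B kl.1 kl.2) := by
    have h1 := (Equiv.sigmaAssoc (fun k l : ℕ =>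
      { s : Finset (Fin (k + l)) // s.card = l })).summable_iff.2 hsum
    have h2 := (NNReal.summable_sigma.1 h1).2
    have h3 := (Equiv.sigmaEquivProd ℕ ℕ).symm.summable_iff.2 h2
    refine NNReal.summable_of_le (fun kl => ?_) h3
    simp only [Function.comp_def, Equiv.sigmaAssoc, Equiv.coe_fn_mk, NNReal.tsum_mul_right, B]
    refine mul_le_mul_left (mul_le_mul_left ?_ _) _
    exact p.nnnorm_changeOriginSeries_le_tsum _ _
  -- `A k` turns the `k`-th derivative of `a` at `x` into the `k`-th entry of the sequence `b x`
  let A : ∀ k : ℕ, (E [×k]→L[ℝ] F) →L[ℝ] SeqOne F := fun k =>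
    (single k).comp (ContinuousMultilinearMap.apply ℝ (fun _ : Fin k => E) F (fun _ => w))
  have hA : ∀ k, ‖A k‖ ≤ (r : ℝ) ^ k := by
    intro k
    refine ContinuousLinearMap.opNorm_le_bound _ (by positivity) fun q => ?_
    simp only [A, ContinuousLinearMap.comp_apply, norm_single_apply,
      ContinuousMultilinearMap.apply_apply]
    refine (q.le_opNorm _).trans ?_
    rw [mul_comm]
    simp only [Finset.prod_const, Finset.card_univ, Fintype.card_fin]
    gcongr
  let M : ∀ k l : ℕ, E [×l]→L[ℝ] SeqOne F := fun k l =>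
    (A k).compContinuousMultilinearMap (p.changeOriginSeries k l)
  have hM : ∀ k l, ‖M k l‖ ≤ ‖p.changeOriginSeries k l‖ * r ^ k := by
    intro k l
    refine (ContinuousLinearMap.norm_compContinuousMultilinearMap_le _ _).trans ?_
    rw [mul_comm]
    gcongr
    exact hA k
  have hMB : ∀ k l, ‖M k l‖ * r ^ l ≤ B k l := by
    intro k l
    simp only [B, NNReal.coe_mul, NNReal.coe_pow, coe_nnnorm]
    calc _ ≤ ‖p.changeOriginSeries k l‖ * r ^ k * r ^ l := by gcongr; exact hM k l
      _ = _ := by ring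
  have hB' : Summable (fun kl : ℕ × ℕ => (B kl.1 kl.2 : ℝ)) := NNReal.summable_coe.2 hB
  have hMs : ∀ l, Summable fun k => M k l := by
    intro l
    have h1 : Summable fun k => (B k l : ℝ) :=
      hB'.comp_injective (i := fun k => (k, l)) fun i j h => (Prod.ext_iff.1 h).1
    refine .of_norm_bounded (h1.mul_right ((r : ℝ) ^ l)⁻¹) fun k => ?_
    rw [← div_eq_mul_inv, le_div_iff₀ (by positivity)]
    exact hMB k l
  let Q : FormalMultilinearSeries ℝ E (SeqOne F) := fun l => ∑' k, M k l
  have hQ : (r : ℝ≥0∞) ≤ Q.radius := by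
    refine Q.le_radius_of_bound (∑' kl : ℕ × ℕ, (B kl.1 kl.2 : ℝ)) fun l => ?_
    have h1 : Summable fun k => (B k l : ℝ) :=
      hB'.comp_injective (i := fun k => (k, l)) fun i j h => (Prod.ext_iff.1 h).1
    calc ‖Q l‖ * r ^ l ≤ (∑' k, (B k l : ℝ) * ((r : ℝ) ^ l)⁻¹) * r ^ l := by
          gcongr
          refine tsum_of_norm_bounded (h1.mul_right _).hasSum fun k => ?_
          rw [← div_eq_mul_inv, le_div_iff₀ (by positivity)]
          exact hMB k l
      _ = ∑' k, (B k l : ℝ) := by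
          rw [tsum_mul_right]; field_simp
      _ ≤ _ := by
          exact tsum_comp_le_tsum_of_inj hB' (fun _ => NNReal.coe_nonneg _)
            (i := fun k => (k, l)) fun i j h => (Prod.ext_iff.1 h).1
  have hQr : 0 < Q.radius := lt_of_lt_of_le (by exact_mod_cast hr0) hQ
  have hbQ := Q.hasFPowerSeriesOnBall hQr
  refine ⟨Q.sum, hbQ.analyticAt, ?_⟩
  filter_upwards [Metric.ball_mem_nhds (0 : E) (show (0 : ℝ) < r from hr0)] with x hx t ht
  replace hx : ‖x‖ < r := by simpa using hx
  have hxr : x ∈ Metric.eball (0 : E) r := by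
    rw [Metric.eball_coe]; simpa using hx
  have hxR : x ∈ Metric.eball (0 : E) p.radius :=
    Metric.eball_subset_eball ((le_add_right le_rfl).trans hrp.le) hxr
  have hcoord : ∀ k, Q.sum x k = p.changeOrigin x k (fun _ => w) := by
    intro k
    have h1 := (hbQ.hasSum (y := x) (Metric.eball_subset_eball hQ hxr)).mapL (proj k)
    rw [zero_add] at h1
    have h2 := (p.hasFPowerSeriesOnBall_changeOrigin k (hp.r_pos.trans_le hp.r_le)).hasSum hxR
    rw [zero_add] at h2
    have h3 := h2.mapL (ContinuousMultilinearMap.apply ℝ (fun _ : Fin k => E) F (fun _ => w))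
    refine h1.unique ?_
    suffices h : ∀ l, proj k (Q l fun _ => x) = p.changeOriginSeries k l (fun _ => x) fun _ => w by
      simpa only [h, ContinuousMultilinearMap.apply_apply] using h3
    intro l
    have h4 : HasSum (fun j => M j l fun _ => x) (Q l fun _ => x) :=
      ContinuousMultilinearMap.hasSum_eval (hMs l).hasSum _
    refine (h4.mapL (proj k)).unique ?_
    convert hasSum_single k (f := fun j => proj k (M j l fun _ => x)) ?_ using 1
    · simp [M, A, proj_single]
    · intro j hj
      simp [M, A, proj_single, hj.symm]
  have h5 : HasSum (fun k => t ^ k • Q.sum x k) (a (x + t • w)) := by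
    have h6 := (hp.changeOrigin (y := x) ?_).hasSum (y := t • w) ?_
    · rw [zero_add] at h6
      convert h6 using 2 with k
      rw [hcoord, (p.changeOrigin x k).map_smul_univ (fun _ => t) (fun _ => w)]
      simp
    · exact (ENNReal.coe_lt_coe.2 (show ‖x‖₊ < r from hx)).trans
        ((ENNReal.coe_le_coe.2 (le_add_right le_rfl)).trans_lt hrR)
    · rw [mem_eball_zero_iff, lt_tsub_iff_right]
      refine lt_of_le_of_lt ?_ hrR
      rw [ENNReal.coe_add]
      gcongr
      · rw [enorm_eq_nnnorm, ENNReal.coe_le_coe, ← NNReal.coe_le_coe, coe_nnnorm, norm_smul]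
        calc _ ≤ 1 * ‖w‖ := by gcongr; exact ht
          _ ≤ r := by rw [one_mul]; exact hw.le
      · exact hx.le
  exact h5.unique (ev_hasSum ht _)

namespace SeqOne

/-! ### Operations on coefficient sequences -/

variable {F G : Type*} [NormedAddCommGroup F] [NormedSpace ℝ F]
  [NormedAddCommGroup G] [NormedSpace ℝ G] [CompleteSpace F] [CompleteSpace G]

/-- Multiplication of a power series by `tᵏ`. -/
noncomputable def shift (k : ℕ) : SeqOne F →L[ℝ] SeqOne F :=
  lift (fun n => single (n + k)) 1 fun _ => norm_single_le _

/-- The quotient of the division of a power series by `tᵈ`. -/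
noncomputable def unshift (d : ℕ) : SeqOne F →L[ℝ] SeqOne F :=
  lift (fun n => if n < d then 0 else single (n - d)) 1 fun n => by
    split_ifs
    · simp
    · exact norm_single_le _

/-- The remainder of the division of a power series by `tᵈ`: its terms of degree `< d`. -/
noncomputable def head (d : ℕ) : SeqOne F →L[ℝ] SeqOne F :=
  lift (fun n => if n < d then single n else 0) 1 fun n => by
    split_ifs
    · exact norm_single_le _
    · simp

/-- The Cauchy product of a scalar power series and an `F`-valued one. -/
noncomputable def mulOp : SeqOne ℝ →L[ℝ] SeqOne F →L[ℝ] SeqOne F :=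
  lift (fun k => (ContinuousLinearMap.id ℝ ℝ).smulRight (shift k)) 1 fun k => by
    rw [ContinuousLinearMap.norm_smulRight_apply]
    exact mul_le_one₀ ContinuousLinearMap.norm_id_le (norm_nonneg _) (norm_lift_le _ _ _)

lemma mulOp_single (k : ℕ) (c : ℝ) : mulOp (single k c) = c • (shift k : SeqOne F →L[ℝ] _) := by
  simp [mulOp]

lemma ev_shift {t : ℝ} (ht : |t| ≤ 1) (k : ℕ) (y : SeqOne F) :
    ev t (shift k y) = t ^ k • ev t y := by
  have : (ev t).comp (shift k) = t ^ k • (ev t : SeqOne F →L[ℝ] F) :=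
    clm_ext fun n v => by simp [shift, ev_single ht, smul_smul, pow_add, mul_comm]
  exact congr($this y)

lemma ev_mulOp {t : ℝ} (ht : |t| ≤ 1) (c : SeqOne ℝ) (y : SeqOne F) :
    ev t (mulOp c y) = ev t c • ev t y := by
  have : (ev t).comp (mulOp.flip y) = (ev t : SeqOne ℝ →L[ℝ] ℝ).smulRight (ev t y) :=
    clm_ext fun n v => by
      simp [mulOp_single, ev_single ht, smul_smul, ev_shift ht, mul_comm]
  exact congr($this c)

lemma ev_head {t : ℝ} (ht : |t| ≤ 1) (d : ℕ) (y : SeqOne F) :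
    ev t (head d y) = ∑ s : Fin d, t ^ (s : ℕ) • proj s y := by
  have : (ev t).comp (head d) = ∑ s : Fin d, t ^ (s : ℕ) • (proj s : SeqOne F →L[ℝ] F) :=
    clm_ext fun n v => by
      rw [Finset.sum_fin_eq_sum_range]
      simp only [head, ContinuousLinearMap.comp_apply, lift_single, sum_apply]
      split_ifs with h
      · rw [ev_single ht, Finset.sum_eq_single n]
        · simp [h, proj_single]
        · intro j hj hjn
          simp [Finset.mem_range.1 hj, proj_single, hjn]
        · simp [h]
      · rw [Finset.sum_eq_zero]
        · simp
        · intro j hj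
          have hjd := Finset.mem_range.1 hj
          simp [hjd, proj_single, show j ≠ n by omega]
  simpa using congr($this y)

lemma shift_unshift_add_head (d : ℕ) :
    (shift d).comp (unshift d) + head d = ContinuousLinearMap.id ℝ (SeqOne F) :=
  clm_ext fun n v => by
    by_cases h : n < d
    · simp [shift, unshift, head, h]
    · simp [shift, unshift, head, h, Nat.sub_add_cancel (not_lt.1 h)]

/-- Near `0`, the `l`-th derivative of the power series with coefficients `y` is the value at `y` of
the `l`-th derivative of the operator-valued map `ev`. The neighborhood does not depend on `y`. -/
lemma eventually_iteratedDeriv_ev (l : ℕ) : ∀ᶠ t in 𝓝 (0 : ℝ), ∀ y : SeqOne F,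
    iteratedDeriv l (fun s => ev s y) t = iteratedDeriv l ev t y := by
  filter_upwards [ev_analyticAt.eventually_analyticAt (F := SeqOne F →L[ℝ] F)] with t ht y
  have h := (ContinuousLinearMap.apply ℝ F y).iteratedFDeriv_comp_left
    (ht.contDiffAt (n := l)) (i := l) le_rfl
  rw [iteratedDeriv_eq_iteratedFDeriv, iteratedDeriv_eq_iteratedFDeriv]
  exact congr($h fun _ => 1)

/-- A power series is determined by its sum near `0`. -/
lemma eq_of_eventually_ev_eq {y z : SeqOne F} (h : ∀ᶠ t in 𝓝 (0 : ℝ), ev t y = ev t z) :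
    y = z := by
  refine lp.ext (funext fun l => ?_)
  have h1 : iteratedDeriv l (fun t => ev t y) 0 = iteratedDeriv l (fun t => ev t z) 0 :=
    Filter.EventuallyEq.iteratedDeriv_eq l h
  have h2 := (eventually_iteratedDeriv_ev (F := F) l).self_of_nhds
  rw [h2, h2, iteratedDeriv_ev_zero] at h1
  exact smul_right_injective F (Nat.cast_ne_zero.2 l.factorial_ne_zero : (l.factorial : ℝ) ≠ 0) h1

end SeqOne

/-! ### Weierstrass division -/

lemma analyticAt_clm_apply {E F G : Type*} [NormedAddCommGroup E] [NormedSpace ℝ E]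
    [NormedAddCommGroup F] [NormedSpace ℝ F] [NormedAddCommGroup G] [NormedSpace ℝ G]
    {T : E → F →L[ℝ] G} {y : E → F} {x : E} (hT : AnalyticAt ℝ T x) (hy : AnalyticAt ℝ y x) :
    AnalyticAt ℝ (fun z => T z (y z)) x :=
  ((ContinuousLinearMap.id ℝ (F →L[ℝ] G)).analyticAt_bilinear (T x, y x)).comp₂ hT hy

lemma analyticAt_clm_comp {E F G : Type*} [NormedAddCommGroup E] [NormedSpace ℝ E]
    [NormedAddCommGroup F] [NormedSpace ℝ F] [NormedAddCommGroup G] [NormedSpace ℝ G]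
    (L : F →L[ℝ] G) {a : E → F} {x : E} (ha : AnalyticAt ℝ a x) :
    AnalyticAt ℝ (fun z => L (a z)) x :=
  (L.analyticAt _).fun_comp ha

open SeqOne in
/-- Weierstrass division of `a` by `f` when `f (0, t) = tᵈ`. If `α x`, `β x` are the coefficient
sequences of `a (x, ·)`, `f (x, ·)`, one has to solve `α x = β x * q + r` with `r` of degree `< d`.
Writing `q` and `r` as multiples of the quotient and the remainder of a single sequence `y` divided
by `tᵈ`, this becomes `α x = R x y`, where the operator `R x` is analytic in `x` and `R 0 = 1`, so
that it can be inverted near `0`. -/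
lemma division_normalized {E F : Type*} [NormedAddCommGroup E] [NormedSpace ℝ E]
    [NormedAddCommGroup F] [NormedSpace ℝ F] [CompleteSpace F] {f : E × ℝ → ℝ} {a : E × ℝ → F}
    (hf : AnalyticAt ℝ f 0) (ha : AnalyticAt ℝ a 0) (d : ℕ)
    (hfd : ∀ᶠ t in 𝓝 (0 : ℝ), f (0, t) = t ^ d) :
    ∃ (q : E × ℝ → F) (r : Fin d → E → F), AnalyticAt ℝ q 0 ∧ (∀ s, AnalyticAt ℝ (r s) 0) ∧
      ∀ᶠ z in 𝓝 (0 : E × ℝ), a z = f z • q z + ∑ s : Fin d, z.2 ^ (s : ℕ) • r s z.1 := by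
  obtain ⟨ε₁, hε₁, h₁⟩ := exists_line_expansion hf
  obtain ⟨ε₂, hε₂, h₂⟩ := exists_line_expansion ha
  obtain ⟨δ, hδ, hδ'⟩ := exists_between (lt_min hε₁ hε₂)
  have hw : ‖((0 : E), δ)‖ = δ := by simp [Prod.norm_def, abs_of_pos hδ, hδ.le]
  obtain ⟨β', hβ', hfβ⟩ := h₁ (0, δ) (by rw [hw]; exact hδ'.trans_le (min_le_left _ _))
  obtain ⟨α', hα', haα⟩ := h₂ (0, δ) (by rw [hw]; exact hδ'.trans_le (min_le_right _ _))
  have hinl : AnalyticAt ℝ (fun x : E => (x, (0 : ℝ))) 0 :=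
    analyticAt_id.prod analyticAt_const
  set β : E → SeqOne ℝ := fun x => β' (x, 0) with hβdef
  set α : E → SeqOne F := fun x => α' (x, 0) with hαdef
  have hβ : AnalyticAt ℝ β 0 := AnalyticAt.fun_comp (g := β') hβ' hinl
  have hα : AnalyticAt ℝ α 0 := AnalyticAt.fun_comp (g := α') hα' hinl
  have hinlc : Filter.Tendsto (fun x : E => (x, (0 : ℝ))) (𝓝 0) (𝓝 0) := hinl.continuousAt
  replace hfβ : ∀ᶠ x in 𝓝 (0 : E), ∀ t : ℝ, |t| ≤ 1 → f (x, t * δ) = ev t (β x) := by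
    filter_upwards [hinlc.eventually hfβ] with x hx t ht
    rw [← hx t ht]; simp
  replace haα : ∀ᶠ x in 𝓝 (0 : E), ∀ t : ℝ, |t| ≤ 1 → a (x, t * δ) = ev t (α x) := by
    filter_upwards [hinlc.eventually haα] with x hx t ht
    rw [← hx t ht]; simp
  have h1nhds : ∀ᶠ t in 𝓝 (0 : ℝ), |t| ≤ 1 := by
    filter_upwards [Metric.closedBall_mem_nhds (0 : ℝ) one_pos] with t ht
    simpa using ht
  have hβ0 : β 0 = single d (δ ^ d) := by
    refine eq_of_eventually_ev_eq ?_
    have hc : Filter.Tendsto (fun t : ℝ => t * δ) (𝓝 0) (𝓝 0) := by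
      have : Continuous (fun t : ℝ => t * δ) := by fun_prop
      simpa using this.tendsto 0
    filter_upwards [h1nhds, hc.eventually hfd] with t ht ht'
    rw [← hfβ.self_of_nhds t ht, ht', ev_single ht, mul_pow, smul_eq_mul]
  let R : E → (SeqOne F →L[ℝ] SeqOne F) := fun x =>
    ((δ ^ d)⁻¹ • mulOp (β x)) * unshift d + head d
  have hR : AnalyticAt ℝ R 0 := by
    refine AnalyticAt.add (AnalyticAt.mul ?_ analyticAt_const) analyticAt_const
    exact AnalyticAt.fun_smul (f := fun _ => (δ ^ d)⁻¹) analyticAt_const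
      (analyticAt_clm_comp (F := SeqOne ℝ) (G := SeqOne F →L[ℝ] SeqOne F) mulOp hβ)
  have hR0 : R 0 = 1 := by
    simp only [R, hβ0, mulOp_single, smul_smul]
    rw [inv_mul_cancel₀ (by positivity), one_smul]
    exact shift_unshift_add_head d
  have hRinv : AnalyticAt ℝ (fun x => Ring.inverse (R x)) 0 := by
    refine AnalyticAt.fun_comp (g := Ring.inverse) ?_ hR
    rw [hR0]
    exact analyticAt_inverse (1 : (SeqOne F →L[ℝ] SeqOne F)ˣ)
  have hRunit : ∀ᶠ x in 𝓝 (0 : E), IsUnit (R x) :=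
    hR.continuousAt.eventually (Units.isOpen.mem_nhds (by
      show IsUnit (R 0)
      rw [hR0]; exact isUnit_one))
  let y : E → SeqOne F := fun x => Ring.inverse (R x) (α x)
  have hy : AnalyticAt ℝ y 0 := analyticAt_clm_apply hRinv hα
  refine ⟨fun z => (δ ^ d)⁻¹ • ev (z.2 / δ) (unshift d (y z.1)),
    fun s x => (δ ^ (s : ℕ))⁻¹ • proj s (y x), ?_, fun s => ?_, ?_⟩
  · refine analyticAt_const.smul (analyticAt_clm_apply ?_ ?_)
    · refine AnalyticAt.fun_comp (g := ev) (f := fun z : E × ℝ => z.2 / δ) ?_ ?_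
      · simpa using ev_analyticAt
      · exact analyticAt_snd.div analyticAt_const hδ.ne'
    · refine analyticAt_clm_comp (F := SeqOne F) (G := SeqOne F) (unshift d) ?_
      exact AnalyticAt.fun_comp (g := y) hy analyticAt_fst
  · exact analyticAt_const.smul (analyticAt_clm_comp (F := SeqOne F) (proj s) hy)
  · have e1 : ∀ᶠ z in 𝓝 (0 : E × ℝ), |z.2 / δ| ≤ 1 := by
      have : Filter.Tendsto (fun z : E × ℝ => z.2 / δ) (𝓝 0) (𝓝 0) := by
        have : Continuous (fun z : E × ℝ => z.2 / δ) := by fun_prop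
        simpa using this.tendsto 0
      exact this.eventually h1nhds
    have e2 : Filter.Tendsto (fun z : E × ℝ => z.1) (𝓝 0) (𝓝 0) := continuous_fst.tendsto 0
    filter_upwards [e1, e2.eventually hfβ, e2.eventually haα, e2.eventually hRunit]
      with ⟨x, τ⟩ hτ hfx hax hRx
    simp only at hτ hfx hax hRx ⊢
    obtain ⟨t, rfl⟩ : ∃ t, τ = t * δ := ⟨τ / δ, by field_simp⟩
    rw [mul_div_cancel_right₀ _ hδ.ne'] at hτ ⊢
    rw [hfx t hτ, hax t hτ]
    have key : α x = R x (y x) := by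
      show α x = (R x * Ring.inverse (R x)) (α x)
      rw [Ring.mul_inverse_cancel _ hRx]; rfl
    rw [key]
    have hRy : R x (y x) = (δ ^ d)⁻¹ • mulOp (β x) (unshift d (y x)) + head d (y x) := rfl
    rw [hRy, map_add, map_smul, ev_mulOp hτ, ev_head hτ]
    congr 1
    · rw [smul_comm]
    · refine Finset.sum_congr rfl fun s _ => ?_
      rw [smul_smul, mul_pow, mul_assoc, mul_inv_cancel₀ (by positivity), mul_one]

/-- Weierstrass division of a vector-valued germ `a` by a scalar germ `f` which does not vanish
identically on the last axis: `a = f q + ∑_{s < d} tˢ r_s`, where `r_s` does not depend on `t`. -/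
lemma weierstrass_division {E F : Type*} [NormedAddCommGroup E] [NormedSpace ℝ E]
    [NormedAddCommGroup F] [NormedSpace ℝ F] [CompleteSpace F] {f : E × ℝ → ℝ} {a : E × ℝ → F}
    (hf : AnalyticAt ℝ f 0) (ha : AnalyticAt ℝ a 0)
    (hf0 : ¬ ∀ᶠ t in 𝓝 (0 : ℝ), f (0, t) = 0) :
    ∃ (d : ℕ) (q : E × ℝ → F) (r : Fin d → E → F),
      AnalyticAt ℝ q 0 ∧ (∀ s, AnalyticAt ℝ (r s) 0) ∧
      ∀ᶠ z in 𝓝 (0 : E × ℝ), a z = f z • q z + ∑ s : Fin d, z.2 ^ (s : ℕ) • r s z.1 := by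
  have hf1 : AnalyticAt ℝ (fun t : ℝ => f (0, t)) 0 :=
    AnalyticAt.fun_comp (g := f) hf (analyticAt_const.prod analyticAt_id)
  obtain ⟨d, u, hu, hu0, hfu⟩ := hf1.exists_eventuallyEq_pow_smul_nonzero_iff.2 hf0
  have hsnd : Filter.Tendsto (fun z : E × ℝ => z.2) (𝓝 0) (𝓝 0) := continuous_snd.tendsto 0
  have hu' : AnalyticAt ℝ (fun z : E × ℝ => u z.2) 0 :=
    AnalyticAt.fun_comp (g := u) hu analyticAt_snd
  have hune : ∀ᶠ t in 𝓝 (0 : ℝ), u t ≠ 0 := hu.continuousAt.eventually_ne hu0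
  obtain ⟨q, r, hq, hr, h⟩ := division_normalized (f := fun z => f z / u z.2)
    (hf.div hu' hu0) ha d (by
      filter_upwards [hfu, hune] with t ht ht'
      simp only [ht, sub_zero, smul_eq_mul]
      field_simp)
  refine ⟨d, fun z => (u z.2)⁻¹ • q z, r, (hu'.inv hu0).smul hq, hr, ?_⟩
  filter_upwards [h] with z hz
  rw [hz, smul_smul, div_eq_mul_inv]

/-! ### Finiteness of germs of vector-valued analytic maps -/

/-- The germs at `0` of the maps `a s : E → F` are recovered from finitely many of their scalar
components `φ (a s)`, `φ ∈ Φ`, by `a s = ∑ᵢ φᵢ (a s) cᵢ` with analytic coefficients `cᵢ` common to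
all `s`. -/
def IsFinitelyRepresented {E F ι : Type*} [NormedAddCommGroup E] [NormedSpace ℝ E]
    [NormedAddCommGroup F] [NormedSpace ℝ F] (Φ : Set (F →L[ℝ] ℝ)) (a : ι → E → F) : Prop :=
  ∃ (n : ℕ) (φ : Fin n → F →L[ℝ] ℝ) (c : Fin n → E → F),
    (∀ i, φ i ∈ Φ) ∧ (∀ i, AnalyticAt ℝ (c i) 0) ∧
    ∀ᶠ x in 𝓝 (0 : E), ∀ s, a s x = ∑ i, φ i (a s x) • c i x

section Finiteness

variable {E F : Type*} [NormedAddCommGroup E] [NormedSpace ℝ E]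
    [NormedAddCommGroup F] [NormedSpace ℝ F] {Φ : Set (F →L[ℝ] ℝ)}

/-- Passage from one germ to finitely many, as in the proof that a finite free module over a
Noetherian ring is Noetherian: once `a 0` is represented by `φᵢ`, `cᵢ`, the other germs are replaced
by `a s - ∑ᵢ φᵢ (a s) cᵢ`. -/
lemma IsFinitelyRepresented.of_single
    (h1 : ∀ a : E → F, AnalyticAt ℝ a 0 → IsFinitelyRepresented Φ (fun _ : Unit => a)) (p : ℕ)
    (a : Fin p → E → F) (ha : ∀ s, AnalyticAt ℝ (a s) 0) : IsFinitelyRepresented Φ a := by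
  induction p with
  | zero => exact ⟨0, Fin.elim0, Fin.elim0, fun i => i.elim0, fun i => i.elim0,
      .of_forall fun x s => s.elim0⟩
  | succ p ih =>
    obtain ⟨n, φ, c, hφ, hc, h⟩ := h1 (a 0) (ha 0)
    obtain ⟨n', ψ, d, hψ, hd, h'⟩ := ih
      (fun s x => a s.succ x - ∑ i, φ i (a s.succ x) • c i x) fun s =>
        (ha _).fun_sub (Finset.analyticAt_fun_sum _ fun i _ =>
          (analyticAt_clm_comp _ (ha _)).fun_smul (hc i))
    refine ⟨n + n', Fin.append φ ψ,
      Fin.append (fun i x => c i x - ∑ l, ψ l (c i x) • d l x) d, ?_, ?_, ?_⟩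
    · refine fun i => Fin.addCases (fun j => ?_) (fun j => ?_) i
      · simpa using hφ j
      · simpa using hψ j
    · refine fun i => Fin.addCases (fun j => ?_) (fun j => ?_) i
      · simpa using (hc j).fun_sub (Finset.analyticAt_fun_sum _ fun l _ =>
          (analyticAt_clm_comp _ (hc _)).fun_smul (hd l))
      · simpa using hd j
    · filter_upwards [h, h'] with x hx hxs s
      -- with `b = v - ∑ φᵢ(v) cᵢ`, expand `b = ∑ ψₗ(b) dₗ` by linearity of `ψₗ`
      have key : ∀ v : F, (v - ∑ i, φ i v • c i x) =
          ∑ l, ψ l (v - ∑ i, φ i v • c i x) • d l x →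
          v = ∑ i, Fin.append φ ψ i v •
            Fin.append (fun i x => c i x - ∑ l, ψ l (c i x) • d l x) d i x := by
        intro v hv
        rw [Fin.sum_univ_add]
        simp only [Fin.append_left, Fin.append_right]
        rw [sub_eq_iff_eq_add] at hv
        conv_lhs => rw [hv]
        simp only [map_sub, map_sum, map_smul, sub_smul, smul_sub, Finset.sum_sub_distrib,
          Finset.sum_smul, Finset.smul_sum, smul_smul, smul_eq_mul]
        rw [Finset.sum_comm]
        abel
      refine Fin.cases ?_ (fun s => ?_) s
      · refine key _ ?_
        rw [← hx (), sub_self]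
        simp
      · exact key _ (hxs s)

end Finiteness

lemma exists_line_not_eventually_zero {E : Type*} [NormedAddCommGroup E] [NormedSpace ℝ E]
    {f : E → ℝ} (hf : AnalyticAt ℝ f 0) (hf0 : ¬ ∀ᶠ x in 𝓝 (0 : E), f x = 0) :
    ∃ w : E, ¬ ∀ᶠ t in 𝓝 (0 : ℝ), f (t • w) = 0 := by
  by_contra! H
  obtain ⟨r, hr, hfr⟩ := hf.exists_ball_analyticOnNhd
  refine hf0 ?_
  filter_upwards [Metric.ball_mem_nhds (0 : E) hr] with x hx
  let L : ℝ →L[ℝ] E := (ContinuousLinearMap.id ℝ ℝ).smulRight x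
  have hL : ∀ t, L t = t • x := fun t => by simp [L]
  have hconv : Convex ℝ (L ⁻¹' Metric.ball (0 : E) r) :=
    (convex_ball _ _).linear_preimage L.toLinearMap
  have han : AnalyticOnNhd ℝ (fun t => f (L t)) (L ⁻¹' Metric.ball (0 : E) r) := fun t ht =>
    AnalyticAt.fun_comp (g := f) (hfr _ ht) (L.analyticAt t)
  have h0 : (0 : ℝ) ∈ L ⁻¹' Metric.ball (0 : E) r := by simpa using hr
  have := han.eqOn_zero_of_preconnected_of_eventuallyEq_zero hconv.isPreconnected h0
    (show ∀ᶠ t in 𝓝 (0 : ℝ), f (L t) = 0 by simpa only [hL] using H x)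
  simpa [hL] using this (x := 1) (by simpa [hL] using hx)

/-- Linear coordinates on `E` in which the line spanned by `w` is the last axis. -/
lemma exists_splitting {E : Type*} [NormedAddCommGroup E] [NormedSpace ℝ E]
    [FiniteDimensional ℝ E] {w : E} (hw : w ≠ 0) :
    ∃ (E' : Submodule ℝ E) (e : (E' × ℝ) ≃L[ℝ] E),
      Module.finrank ℝ E' < Module.finrank ℝ E ∧ ∀ t : ℝ, e (0, t) = t • w := by
  obtain ⟨E', hE'⟩ := Submodule.exists_isCompl (ℝ ∙ w)
  let e : (E' × ℝ) ≃ₗ[ℝ] E :=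
    ((LinearEquiv.refl ℝ E').prodCongr (LinearEquiv.toSpanNonzeroSingleton ℝ E w hw)).trans
      (Submodule.prodEquivOfIsCompl E' (ℝ ∙ w) hE'.symm)
  refine ⟨E', e.toContinuousLinearEquiv, ?_, fun t => ?_⟩
  · rw [← e.finrank_eq]; simp
  · simp [e]

/-- Finitely many germs of analytic maps into a Banach space are controlled by finitely many of
their components with respect to a separating set of functionals. The proof is by induction on the
dimension of `E`, by Weierstrass division by a nonzero component `φ₀ (a)`. -/
theorem isFinitelyRepresented {F : Type} [NormedAddCommGroup F] [NormedSpace ℝ F] [CompleteSpace F]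
    {Φ : Set (F →L[ℝ] ℝ)} (hΦ : ∀ y : F, (∀ φ ∈ Φ, φ y = 0) → y = 0) (m : ℕ) :
    ∀ (E : Type) [NormedAddCommGroup E] [NormedSpace ℝ E] [FiniteDimensional ℝ E],
      Module.finrank ℝ E = m → ∀ (p : ℕ) (a : Fin p → E → F), (∀ s, AnalyticAt ℝ (a s) 0) →
        IsFinitelyRepresented Φ a := by
  induction m using Nat.strong_induction_on with
  | _ m ih =>
    intro E _ _ _ hm
    refine IsFinitelyRepresented.of_single fun a ha => ?_
    by_cases H : ∀ φ ∈ Φ, ∀ᶠ x in 𝓝 (0 : E), φ (a x) = 0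
    · -- the radius of the ball on which `a` is analytic does not depend on `φ`
      obtain ⟨r, hr, har⟩ := ha.exists_ball_analyticOnNhd
      refine ⟨0, Fin.elim0, Fin.elim0, fun i => i.elim0, fun i => i.elim0, ?_⟩
      filter_upwards [Metric.ball_mem_nhds (0 : E) hr] with x hx _
      rw [Finset.univ_eq_empty, Finset.sum_empty]
      refine hΦ _ fun φ hφ => ?_
      have han : AnalyticOnNhd ℝ (fun x => φ (a x)) (Metric.ball 0 r) := fun z hz =>
        analyticAt_clm_comp φ (har z hz)
      exact han.eqOn_zero_of_preconnected_of_eventuallyEq_zero (convex_ball _ _).isPreconnected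
        (Metric.mem_ball_self hr) (H φ hφ) hx
    simp only [not_forall] at H
    obtain ⟨φ₀, hφ₀, H⟩ := H
    have hf : AnalyticAt ℝ (fun x => φ₀ (a x)) 0 := analyticAt_clm_comp φ₀ ha
    by_cases hf0 : φ₀ (a 0) = 0
    swap
    · refine ⟨1, fun _ => φ₀, fun _ x => (φ₀ (a x))⁻¹ • a x, fun _ => hφ₀,
        fun _ => (hf.fun_inv hf0).fun_smul ha, ?_⟩
      filter_upwards [hf.continuousAt.eventually_ne hf0] with x hx _
      simp [smul_smul, hx]
    obtain ⟨w, hw⟩ := exists_line_not_eventually_zero hf H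
    have hw0 : w ≠ 0 := by
      rintro rfl
      simp [hf0] at hw
    obtain ⟨E', e, hE', he⟩ := exists_splitting hw0
    have hae : AnalyticAt ℝ (fun z => a (e z)) 0 :=
      AnalyticAt.fun_comp (g := a) (by simpa using ha) (e.toContinuousLinearMap.analyticAt 0)
    obtain ⟨d, q, r, hq, hr, hdiv⟩ := weierstrass_division (f := fun z => φ₀ (a (e z)))
      (analyticAt_clm_comp φ₀ hae) hae (by simpa only [he] using hw)
    obtain ⟨n, φ, c, hφ, hc, hrep⟩ := ih _ (hm ▸ hE') E' rfl d r hr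
    have hc' : ∀ i, AnalyticAt ℝ (fun z : E' × ℝ => c i z.1) 0 := fun i =>
      AnalyticAt.fun_comp (g := c i) (hc i) analyticAt_fst
    have hesymm : AnalyticAt ℝ e.symm 0 := e.symm.toContinuousLinearMap.analyticAt 0
    have he0 : e.symm 0 = 0 := map_zero _
    -- `a = f q + ∑ φᵢ(a - f q) cᵢ`, where `f = φ₀ a`
    refine ⟨n + 1, Fin.cons φ₀ φ, Fin.cons
      (fun x => q (e.symm x) - ∑ i, φ i (q (e.symm x)) • c i (e.symm x).1)
      (fun i x => c i (e.symm x).1), ?_, ?_, ?_⟩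
    · exact Fin.cases hφ₀ hφ
    · refine Fin.cases ?_ fun i => ?_
      · refine AnalyticAt.fun_comp (g := fun z => q z - ∑ i, φ i (q z) • c i z.1) ?_ hesymm
        rw [he0]
        exact hq.fun_sub (Finset.analyticAt_fun_sum _ fun i _ =>
          (analyticAt_clm_comp _ hq).fun_smul (hc' i))
      · refine AnalyticAt.fun_comp (g := fun z : E' × ℝ => c i z.1) ?_ hesymm
        rw [he0]
        exact hc' i
    · have ht : Filter.Tendsto e.symm (𝓝 0) (𝓝 0) := by
        simpa using e.symm.continuous.tendsto 0
      have ht1 : Filter.Tendsto (fun x => (e.symm x).1) (𝓝 0) (𝓝 0) :=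
        (continuous_fst.tendsto (0 : E' × ℝ)).comp ht
      filter_upwards [ht.eventually hdiv, ht1.eventually hrep] with x hx hx' _
      rw [Fin.sum_univ_succ]
      simp only [Fin.cons_zero, Fin.cons_succ]
      rw [e.apply_symm_apply] at hx
      generalize e.symm x = z at hx hx'
      generalize a x = v at hx
      have h1 : v - φ₀ v • q z = ∑ i, φ i (v - φ₀ v • q z) • c i z.1 := by
        have h2 : v - φ₀ v • q z = ∑ s : Fin d, z.2 ^ (s : ℕ) • r s z.1 := by
          rw [sub_eq_iff_eq_add, add_comm]; exact hx
        rw [h2]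
        simp only [map_sum, map_smul, Finset.sum_smul, smul_assoc]
        rw [Finset.sum_comm]
        refine Finset.sum_congr rfl fun s _ => ?_
        rw [← Finset.smul_sum, ← hx' s]
      rw [sub_eq_iff_eq_add] at h1
      conv_lhs => rw [h1]
      simp only [map_sub, map_smul, sub_smul, smul_sub, Finset.sum_sub_distrib,
        Finset.smul_sum, smul_smul, smul_eq_mul]
      abel

/-! ### Zeros of analytic functions -/

/-- The zero set of a nonzero germ of an analytic function is a null set near `0`: in suitable linear
coordinates the function does not vanish identically on any line parallel to the last axis, so each
such line contains only a discrete set of zeros, and Fubini's theorem applies. -/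
lemma exists_nhds_zeros_null {E : Type*} [NormedAddCommGroup E] [NormedSpace ℝ E]
    [FiniteDimensional ℝ E] [MeasurableSpace E] [BorelSpace E] (μ : Measure E)
    [μ.IsAddHaarMeasure] {f : E → ℝ} (hf : AnalyticAt ℝ f 0)
    (hf0 : ¬ ∀ᶠ x in 𝓝 (0 : E), f x = 0) : ∃ V ∈ 𝓝 (0 : E), μ {x ∈ V | f x = 0} = 0 := by
  by_cases h0 : f 0 = 0
  swap
  · refine ⟨_, hf.continuousAt.eventually_ne h0, ?_⟩
    convert measure_empty (μ := μ)
    ext x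
    simp
  obtain ⟨w, hw⟩ := exists_line_not_eventually_zero hf hf0
  have hw0 : w ≠ 0 := by
    rintro rfl
    simp [h0] at hw
  obtain ⟨E', e, -, he⟩ := exists_splitting hw0
  have hh : AnalyticAt ℝ (fun z => f (e z)) 0 :=
    AnalyticAt.fun_comp (g := f) (by simpa using hf) (e.toContinuousLinearMap.analyticAt 0)
  obtain ⟨r, hr, hhr⟩ := hh.exists_ball_analyticOnNhd
  rw [show (0 : E' × ℝ) = (0, 0) from rfl, ← ball_prod_same] at hhr
  obtain ⟨t₀, ht₀, hft₀⟩ : ∃ t₀ ∈ Metric.ball (0 : ℝ) r, f (e (0, t₀)) ≠ 0 := by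
    by_contra! H
    refine hw ?_
    filter_upwards [Metric.ball_mem_nhds (0 : ℝ) hr] with t ht
    rw [← he]
    exact H t ht
  have hcont : ContinuousAt (fun x' : E' => f (e (x', t₀))) 0 :=
    ContinuousAt.comp (g := fun z => f (e z))
      (hhr (0, t₀) ⟨Metric.mem_ball_self hr, ht₀⟩).continuousAt (by fun_prop)
  obtain ⟨ρ, hρ, hρne⟩ := Metric.eventually_nhds_iff_ball.1
    ((hcont.eventually_ne hft₀).and (Metric.ball_mem_nhds (0 : E') hr))
  let V : Set (E' × ℝ) := Metric.ball 0 ρ ×ˢ Metric.ball 0 r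
  have hVo : IsOpen V := Metric.isOpen_ball.prod Metric.isOpen_ball
  have hVr : V ⊆ Metric.ball 0 r ×ˢ Metric.ball 0 r := fun z hz => ⟨(hρne _ hz.1).2, hz.2⟩
  have hV0 : V ∈ 𝓝 (0 : E' × ℝ) :=
    hVo.mem_nhds ⟨Metric.mem_ball_self hρ, Metric.mem_ball_self hr⟩
  have := FiniteDimensional.proper ℝ E'
  have := FiniteDimensional.proper ℝ E
  let ν : Measure (E' × ℝ) := (Measure.addHaar : Measure E').prod volume
  let S : Set (E' × ℝ) := V \ (V ∩ (fun z => f (e z)) ⁻¹' {0}ᶜ)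
  have hS : MeasurableSet S := by
    refine hVo.measurableSet.diff (IsOpen.measurableSet ?_)
    exact ContinuousOn.isOpen_inter_preimage
      (fun z hz => (hhr z (hVr hz)).continuousAt.continuousWithinAt) hVo isOpen_compl_singleton
  have hνS : ν S = 0 := by
    refine (Measure.measure_prod_null hS).2 (.of_forall fun x' => ?_)
    by_cases hx' : x' ∈ Metric.ball (0 : E') ρ
    swap
    · refine measure_mono_null (fun t ht => ?_) (measure_empty (μ := (volume : Measure ℝ)))
      exact hx' ht.1.1
    have han : AnalyticOnNhd ℝ (fun t => f (e (x', t))) (Metric.ball 0 r) := fun t ht =>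
      AnalyticAt.fun_comp (g := fun z => f (e z)) (hhr (x', t) (hVr ⟨hx', ht⟩))
        (analyticAt_const.prod analyticAt_id)
    have h1 := han.preimage_zero_mem_codiscreteWithin (hρne x' hx').1 ht₀
      ((convex_ball _ _).isConnected ⟨0, Metric.mem_ball_self hr⟩)
    have h2 := ae_restrict_le_codiscreteWithin (μ := (volume : Measure ℝ))
      Metric.isOpen_ball.measurableSet h1
    rw [mem_ae_iff, Measure.restrict_apply' Metric.isOpen_ball.measurableSet] at h2
    refine measure_mono_null (fun t ht => ?_) h2
    obtain ⟨ht1, ht2⟩ := ht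
    exact ⟨fun h => ht2 ⟨ht1, h⟩, ht1.2⟩
  have := e.symm.isAddHaarMeasure_map μ
  have hac : μ.map e.symm ≪ ν := Measure.absolutelyContinuous_isAddHaarMeasure _ _
  have h3 := hac hνS
  rw [Measure.map_apply e.symm.continuous.measurable hS] at h3
  refine ⟨e.symm ⁻¹' V, e.symm.continuous.continuousAt.preimage_mem_nhds (by simpa using hV0),
    measure_mono_null (fun x hx => ?_) h3⟩
  exact ⟨hx.1, fun h => h.2 (by simpa using hx.2)⟩

/-! ### Control of all coefficients by finitely many -/

open SeqOne in
/-- For an analytic germ `b` with values in `ℓ¹`, the norm of `b x` is bounded by a constant multiple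
of one of the first few coordinates of `b x`, uniformly in `x`. -/
lemma exists_dominating_coord {E : Type} [NormedAddCommGroup E] [NormedSpace ℝ E]
    [FiniteDimensional ℝ E] {b : E → SeqOne ℝ} (hb : AnalyticAt ℝ b 0) :
    ∃ (k : ℕ) (C : ℝ), ∀ᶠ x in 𝓝 (0 : E), ∃ l ≤ k, ‖b x‖ ≤ C * |b x l| := by
  obtain ⟨n, φ, c, hφ, hc, h⟩ := isFinitelyRepresented
    (Φ := range (proj : ℕ → SeqOne ℝ →L[ℝ] ℝ))
    (fun y hy => lp.ext (funext fun l => hy _ ⟨l, rfl⟩)) _ E rfl 1 (fun _ => b) fun _ => hb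
  choose j hj using hφ
  refine ⟨Finset.univ.sup j, ∑ i, (‖c i 0‖ + 1), ?_⟩
  have hcb : ∀ᶠ x in 𝓝 (0 : E), ∀ i, ‖c i x‖ < ‖c i 0‖ + 1 :=
    Filter.eventually_all.2 fun i =>
      (hc i).continuousAt.norm.eventually_lt_const (lt_add_one _)
  filter_upwards [h, hcb] with x hx hcx
  replace hx := hx 0
  rcases isEmpty_or_nonempty (Fin n) with hn | hn
  · refine ⟨0, zero_le, ?_⟩
    rw [Finset.univ_eq_empty, Finset.sum_empty] at hx
    simp [hx]
  obtain ⟨i₀, hi₀⟩ := Finite.exists_max fun i => |b x (j i)|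
  refine ⟨j i₀, Finset.le_sup (Finset.mem_univ i₀), ?_⟩
  calc ‖b x‖ = ‖∑ i, φ i (b x) • c i x‖ := congrArg norm hx
    _ ≤ ∑ i, ‖φ i (b x) • c i x‖ := norm_sum_le _ _
    _ ≤ ∑ i, (‖c i 0‖ + 1) * |b x (j i₀)| := by
      refine Finset.sum_le_sum fun i _ => ?_
      rw [norm_smul, ← hj i, proj_apply, mul_comm, Real.norm_eq_abs]
      exact mul_le_mul (hcx i).le (hi₀ i) (abs_nonneg _) (by positivity)
    _ = _ := (Finset.sum_mul _ _ _).symm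

/-- No smoothness of `f` is needed, in contrast to `iteratedDeriv_comp_const_mul`. -/
lemma iteratedDeriv_comp_mul_left (c : ℝ) (f : ℝ → ℝ) (l : ℕ) (t : ℝ) :
    iteratedDeriv l (fun s => f (c * s)) t = c ^ l * iteratedDeriv l f (c * t) := by
  induction l generalizing t with
  | zero => simp
  | succ l ih =>
    rw [iteratedDeriv_succ, funext ih, iteratedDeriv_succ, deriv_const_mul_field,
      deriv_comp_mul_left, smul_eq_mul, pow_succ, mul_assoc]

open SeqOne in
/-- Among the power series whose coefficients are all controlled by the `l`-th one, the `l`-th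
derivative at `t` is comparable to the one at `0`, for all `t` in a neighborhood of `0` common to all
these series. -/
lemma eventually_deriv_comparison (k : ℕ) (C : ℝ) : ∀ᶠ t in 𝓝 (0 : ℝ), ∀ l ≤ k, ∀ y : SeqOne ℝ,
    y ≠ 0 → ‖y‖ ≤ C * |y l| →
      0 < (1 / 2) * |iteratedDeriv l (fun s => ev s y) 0| ∧
      (1 / 2) * |iteratedDeriv l (fun s => ev s y) 0| < |iteratedDeriv l (fun s => ev s y) t| ∧
      |iteratedDeriv l (fun s => ev s y) t| < 2 * |iteratedDeriv l (fun s => ev s y) 0| := by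
  refine (Filter.eventually_all_finite (Set.finite_Iic k)).2 fun l _ => ?_
  have hcont : ContinuousAt (fun t => ‖iteratedDeriv l (ev : ℝ → SeqOne ℝ →L[ℝ] ℝ) t -
      iteratedDeriv l ev 0‖ * C) 0 := by
    have h1 : AnalyticAt ℝ (iteratedDeriv l (ev : ℝ → SeqOne ℝ →L[ℝ] ℝ)) 0 := by
      rw [iteratedDeriv_eq_iterate]
      exact ev_analyticAt.iterated_deriv l
    exact (h1.continuousAt.sub continuousAt_const).norm.mul continuousAt_const
  filter_upwards [eventually_iteratedDeriv_ev (F := ℝ) l,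
    hcont.eventually_lt_const (u := 1 / 2) (by simp)] with t ht hsmall y hy hyl
  have hpos : 0 < |y l| := by
    refine abs_pos.2 fun h => hy ?_
    simpa [h] using hyl
  have h0 : iteratedDeriv l (fun s => ev s y) 0 = l.factorial * y l := by
    rw [(eventually_iteratedDeriv_ev (F := ℝ) l).self_of_nhds, iteratedDeriv_ev_zero]
    simp [proj_apply]
  have hd : |iteratedDeriv l (fun s => ev s y) t - iteratedDeriv l (fun s => ev s y) 0| <
      1 / 2 * |y l| := by
    rw [ht, (eventually_iteratedDeriv_ev (F := ℝ) l).self_of_nhds, ← sub_apply]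
    calc _ ≤ ‖iteratedDeriv l (ev : ℝ → SeqOne ℝ →L[ℝ] ℝ) t - iteratedDeriv l ev 0‖ * ‖y‖ :=
          ContinuousLinearMap.le_opNorm _ _
      _ ≤ ‖iteratedDeriv l (ev : ℝ → SeqOne ℝ →L[ℝ] ℝ) t - iteratedDeriv l ev 0‖ *
          (C * |y l|) := by gcongr
      _ < _ := by rw [← mul_assoc]; gcongr
  have hle : |y l| ≤ |iteratedDeriv l (fun s => ev s y) 0| := by
    rw [h0, abs_mul, Nat.abs_cast]
    exact le_mul_of_one_le_left hpos.le (Nat.one_le_cast.2 l.factorial_pos)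
  rw [abs_lt] at hd
  generalize iteratedDeriv l (fun s => ev s y) 0 = D₀ at *
  generalize iteratedDeriv l (fun s => ev s y) t = D at *
  refine ⟨by linarith, ?_, ?_⟩ <;>
  rcases abs_cases D₀ with h1 | h1 <;> rcases abs_cases D with h2 | h2 <;> linarith

/-! ### The theorem -/

open SeqOne in
/-- **Theorem 2.1.** Let `g` be real analytic on a neighborhood `U` of the origin of
`ℝⁿ = ℝ^{n-1} × ℝ` (with `m = n - 1`), not identically zero near the origin. Then there are
`η > 0` and `k ≥ 0` such that for each `x'` in the `(n-1)`-dimensional ball `B(0,η)`, either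
`g(x', xₙ) = 0` for all `|xₙ| < η`, or there is `0 ≤ l ≤ k` (depending on `x'`) with
`0 < ½|∂ₓₙˡ g(x',0)| < |∂ₓₙˡ g(x',xₙ)| < 2|∂ₓₙˡ g(x',0)|` for all `|xₙ| < η`. Moreover the set
of `x' ∈ B(0,η)` on which `g(x',·)` vanishes for all `|xₙ| < η` has measure zero. -/
theorem stmt3 (m : ℕ) (g : EuclideanSpace ℝ (Fin m) × ℝ → ℝ)
    (U : Set (EuclideanSpace ℝ (Fin m) × ℝ))
    (hU : U ∈ nhds (0 : EuclideanSpace ℝ (Fin m) × ℝ))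
    (hg : AnalyticOnNhd ℝ g U)
    (hnz : ¬ ∀ᶠ x in nhds (0 : EuclideanSpace ℝ (Fin m) × ℝ), g x = 0) :
    ∃ η > (0 : ℝ), ∃ k : ℕ,
      (∀ x' ∈ Metric.ball (0 : EuclideanSpace ℝ (Fin m)) η,
        (∀ t : ℝ, |t| < η → g (x', t) = 0) ∨
        ∃ l ≤ k, ∀ t : ℝ, |t| < η →
          0 < (1 / 2) * |iteratedDeriv l (fun s => g (x', s)) 0| ∧
          (1 / 2) * |iteratedDeriv l (fun s => g (x', s)) 0| <
            |iteratedDeriv l (fun s => g (x', s)) t| ∧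
          |iteratedDeriv l (fun s => g (x', s)) t| <
            2 * |iteratedDeriv l (fun s => g (x', s)) 0|) ∧
      volume {x' ∈ Metric.ball (0 : EuclideanSpace ℝ (Fin m)) η |
        ∀ t : ℝ, |t| < η → g (x', t) = 0} = 0 := by
  have hg0 : AnalyticAt ℝ g 0 := hg 0 (mem_of_mem_nhds hU)
  obtain ⟨ε, hε, hexp⟩ := exists_line_expansion hg0
  obtain ⟨δ, hδ, hδε⟩ := exists_between hε
  obtain ⟨b', hb', hgb'⟩ := hexp (0, δ) (by simpa [Prod.norm_mk, abs_of_pos hδ] using ⟨hε, hδε⟩)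
  let i : EuclideanSpace ℝ (Fin m) →L[ℝ] EuclideanSpace ℝ (Fin m) × ℝ := .inl ℝ _ _
  let b : EuclideanSpace ℝ (Fin m) → SeqOne ℝ := fun x => b' (i x)
  have hb : AnalyticAt ℝ b 0 := AnalyticAt.fun_comp (g := b') (by simpa using hb') (i.analyticAt 0)
  have hgb : ∀ᶠ x in 𝓝 (0 : EuclideanSpace ℝ (Fin m)), ∀ t : ℝ, |t| ≤ δ →
      g (x, t) = ev (δ⁻¹ * t) (b x) := by
    have hi : Filter.Tendsto i (𝓝 0) (𝓝 0) := by simpa using i.continuous.tendsto 0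
    filter_upwards [hi.eventually hgb'] with x hx t ht
    rw [← hx (δ⁻¹ * t)]
    · simp [i, mul_right_comm, hδ.ne']
    · rw [abs_mul, abs_inv, abs_of_pos hδ, inv_mul_le_iff₀ hδ, mul_one]
      exact ht
  obtain ⟨k, C, hkC⟩ := exists_dominating_coord hb
  -- some coordinate of `b` does not vanish identically near `0`: otherwise `b`, hence `g`, would
  obtain ⟨j, hj⟩ : ∃ j, ¬ ∀ᶠ x in 𝓝 (0 : EuclideanSpace ℝ (Fin m)), b x j = 0 := by
    by_contra! H
    refine hnz ?_
    have hb0 : ∀ᶠ x in 𝓝 (0 : EuclideanSpace ℝ (Fin m)), b x = 0 := by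
      filter_upwards [hkC, (Filter.eventually_all_finite (Set.finite_Iic k)).2 fun l _ => H l]
        with x ⟨l, hl, hxl⟩ hx
      simpa [hx l hl] using hxl
    have hfst := (continuous_fst.tendsto (0 : EuclideanSpace ℝ (Fin m) × ℝ)).eventually
      (hb0.and hgb)
    have hsnd := (continuous_snd.tendsto (0 : EuclideanSpace ℝ (Fin m) × ℝ)).eventually
      (Metric.closedBall_mem_nhds (0 : ℝ) hδ)
    filter_upwards [hfst, hsnd] with x hx1 hx2
    rw [hx1.2 x.2 (by simpa using hx2), hx1.1, map_zero]
  obtain ⟨V, hV, hVnull⟩ := exists_nhds_zeros_null volume (analyticAt_clm_comp (proj j) hb) hj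
  have hδt : Filter.Tendsto (fun t : ℝ => δ⁻¹ * t) (𝓝 0) (𝓝 0) :=
    (continuous_const_mul δ⁻¹).tendsto' _ _ (mul_zero _)
  obtain ⟨η₁, hη₁, h₁⟩ := Metric.eventually_nhds_iff_ball.1 ((hgb.and hkC).and hV)
  obtain ⟨η₂, hη₂, h₂⟩ := Metric.eventually_nhds_iff_ball.1
    (hδt.eventually (eventually_deriv_comparison k C))
  have hη : 0 < min (min η₁ η₂) δ := by positivity
  refine ⟨min (min η₁ η₂) δ, hη, k, fun x hx => ?_, ?_⟩
  · obtain ⟨⟨hgx, l, hl, hxl⟩, -⟩ := h₁ x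
      (Metric.ball_subset_ball ((min_le_left _ _).trans (min_le_left _ _)) hx)
    by_cases hbx : b x = 0
    · left
      intro t ht
      rw [hgx t (ht.le.trans (min_le_right _ _)), hbx, map_zero]
    right
    refine ⟨l, hl, fun t ht => ?_⟩
    have hder : ∀ t : ℝ, |t| < min (min η₁ η₂) δ → iteratedDeriv l (fun s => g (x, s)) t =
        δ⁻¹ ^ l * iteratedDeriv l (fun s => ev s (b x)) (δ⁻¹ * t) := by
      intro t ht
      rw [← iteratedDeriv_comp_mul_left]
      refine Filter.EventuallyEq.iteratedDeriv_eq l ?_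
      filter_upwards [continuous_abs.continuousAt.eventually_lt_const
        (ht.trans_le (min_le_right _ _))] with s hs
      exact hgx s hs.le
    obtain ⟨c₁, c₂, c₃⟩ := h₂ t
      (by simpa using ht.trans_le ((min_le_left _ _).trans (min_le_right _ _))) l hl (b x) hbx hxl
    have hp : 0 < δ⁻¹ ^ l := by positivity
    rw [hder t ht, hder 0 (by simpa using hη), mul_zero, abs_mul, abs_mul, abs_of_pos hp,
      mul_left_comm, mul_left_comm 2]
    exact ⟨by positivity, by gcongr, by gcongr⟩
  · refine measure_mono_null (fun x hx => ?_) hVnull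
    obtain ⟨⟨hgx, -⟩, hxV⟩ := h₁ x
      (Metric.ball_subset_ball ((min_le_left _ _).trans (min_le_left _ _)) hx.1)
    refine ⟨hxV, ?_⟩
    have hbx : b x = 0 := by
      refine eq_of_eventually_ev_eq ?_
      have hδt' : Filter.Tendsto (fun t : ℝ => δ * t) (𝓝 0) (𝓝 0) :=
        (continuous_const_mul δ).tendsto' _ _ (mul_zero _)
      filter_upwards [hδt'.eventually (Metric.ball_mem_nhds (0 : ℝ) hη)] with t ht
      have ht' : |δ * t| < min (min η₁ η₂) δ := by simpa using ht
      have h3 := hgx (δ * t) (ht'.le.trans (min_le_right _ _))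
      rw [inv_mul_cancel_left₀ hδ.ne', hx.2 _ ht'] at h3
      rw [← h3, map_zero]
    rw [hbx, map_zero]
end
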